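/- Suppose there exist continuous positive functions N₁, N₂, N₃ on [0,∞) such that for all α > 0 and all μ, σ ∈ ℳ_α(V): L_μV(x) ≤ N₁(α) for all x, |b(x,μ)| ≤ N₂(α)V(x)^{1/2−γ}, and |b(x,μ) − b(x,σ)| ≤ N₃(α)V(x)^{1/2}‖μ − σ‖_W. If ∫₀^{+∞} dα/N₁(α) = +∞, then for every initial condition ν ∈ 𝒫_V(ℝ^d) there exists a solution (μ_t)_{t≥0} ⊂ 𝒫_V(ℝ^d) of the Cauchy problem ∂_tμ_t = L_{μ_t}^*μ_t, μ_0 = ν, such that sup_{t∈[0,T]} ∫V dμ_t < ∞ for every T > 0. -/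

import Mathlib

open MeasureTheory Real Set Filter Metric
open scoped Topology RealInnerProductSpace NNReal ENNReal

noncomputable section

abbrev Ed (d : ℕ) : Type := EuclideanSpace ℝ (Fin d)

variable {d : ℕ}

/-- Second-order partial derivative `∂_i ∂_j φ (x)`. -/
def hess2 (φ : Ed d → ℝ) (x : Ed d) (i j : Fin d) : ℝ :=
  iteratedFDeriv ℝ 2 φ x ![EuclideanSpace.single i 1, EuclideanSpace.single j 1]

/-- The Kolmogorov operator `L φ = trace (A D²φ) + ⟨B, ∇φ⟩`. -/
def Lop (A : Ed d → Matrix (Fin d) (Fin d) ℝ) (B : Ed d → Ed d)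
    (φ : Ed d → ℝ) (x : Ed d) : ℝ :=
  (∑ i, ∑ j, A x i j * hess2 φ x i j) + ⟪B x, gradient φ x⟫

/-- Membership in `𝒫_V(ℝ^d)`. -/
def memPV (V : Ed d → ℝ) (μ : Measure (Ed d)) : Prop :=
  IsProbabilityMeasure μ ∧ Integrable V μ

/-- `C_0^∞` test functions. -/
def IsTestFun (φ : Ed d → ℝ) : Prop :=
  ContDiff ℝ (⊤ : ℕ∞) φ ∧ HasCompactSupport φ

/-- Weighted total-variation distance `‖W·(μ - ν)‖_{TV}` expressed by duality. -/
def wDist (W : Ed d → ℝ) (μ ν : Measure (Ed d)) : ℝ :=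
  ⨆ f : {f : Ed d → ℝ // Measurable f ∧ ∀ x, |f x| ≤ W x},
    (∫ x, f.1 x ∂μ - ∫ x, f.1 x ∂ν)

/-- Solution of the nonlinear Cauchy problem `∂_t μ_t = L_{μ_t}^* μ_t`, `μ_0 = ν`. -/
def IsCauchySol (A : Ed d → Matrix (Fin d) (Fin d) ℝ)
    (b : Ed d → Measure (Ed d) → Ed d)
    (ν : Measure (Ed d)) (μ : ℝ → Measure (Ed d)) : Prop :=
  μ 0 = ν ∧ ∀ φ : Ed d → ℝ, IsTestFun φ → ∀ t : ℝ, 0 ≤ t →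
    ∫ x, φ x ∂(μ t) - ∫ x, φ x ∂ν
      = ∫ s in (0:ℝ)..t, ∫ x, Lop A (fun y => b y (μ s)) φ x ∂(μ s)

/-! Solutions are limits of an explicit Euler scheme in which particles leaving `{V ≤ m}` are sent
back to the origin. The Lyapunov inequality holds along the scheme up to a vanishing error, so
Osgood's condition bounds `∫ V dμ` on bounded time intervals uniformly in the scheme; a particle
sent back lowers `∫ V dμ` by at least `m - V 0`, so the total mass sent back tends to zero.

For the limit passage, the nonlinearity requires convergence of the laws in total variation, which
weak compactness does not give. It comes from a parametrix: one Euler step of length `h` changes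
`∫ P_τ f dμ` into `∫ P_{τ + h} f dμ` with an error of order `h / √(τ + h)`, uniformly in `|f| ≤ 1`,
where `P_τ` is the convolution with Gaussian kernels whose covariance is frozen at the end point.
Since this is summable along the time grid, the law at time `t` is close in total variation to the
image under `P_τ` of the law at time `t - τ`, and `P_τ` turns weak convergence into convergence in
total variation.

Finally `W` grows more slowly than `V`, so total variation convergence with bounded moments implies
convergence in the weighted distance, which gives convergence of the drifts. -/

/-! ### Uniformly elliptic operators -/

/-- Symmetric operators whose quadratic form lies between `Λ⁻¹ ‖v‖²` and `Λ ‖v‖²`. -/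
structure IsElliptic {E : Type*} [NormedAddCommGroup E] [InnerProductSpace ℝ E] (Λ : ℝ)
    (B : E →L[ℝ] E) : Prop where
  pos : 0 < Λ
  symm : ∀ u v, ⟪B u, v⟫ = ⟪u, B v⟫
  lower : ∀ v, Λ⁻¹ * ‖v‖ ^ 2 ≤ ⟪B v, v⟫
  upper : ∀ v, ⟪B v, v⟫ ≤ Λ * ‖v‖ ^ 2

namespace IsElliptic

variable {E : Type*} [NormedAddCommGroup E] [InnerProductSpace ℝ E] {Λ Λ' : ℝ} {B B' : E →L[ℝ] E}

lemma mono (h : IsElliptic Λ B) (hΛ : Λ ≤ Λ') : IsElliptic Λ' B where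
  pos := h.pos.trans_le hΛ
  symm := h.symm
  lower v := (mul_le_mul_of_nonneg_right (inv_anti₀ h.pos hΛ) (sq_nonneg _)).trans (h.lower v)
  upper v := (h.upper v).trans (mul_le_mul_of_nonneg_right hΛ (sq_nonneg _))

lemma convexComb (h : IsElliptic Λ B) (h' : IsElliptic Λ B') {s t : ℝ} (hs : 0 ≤ s) (ht : 0 ≤ t)
    (hst : s + t = 1) : IsElliptic Λ (s • B + t • B') where
  pos := h.pos
  symm u v := by
    simp only [add_apply, smul_apply, inner_add_left, inner_add_right, real_inner_smul_left,
      real_inner_smul_right, h.symm, h'.symm]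
  lower v := by
    simp only [add_apply, smul_apply, inner_add_left, real_inner_smul_left]
    calc Λ⁻¹ * ‖v‖ ^ 2 = s * (Λ⁻¹ * ‖v‖ ^ 2) + t * (Λ⁻¹ * ‖v‖ ^ 2) := by
          rw [← add_mul, hst, one_mul]
      _ ≤ s * ⟪B v, v⟫ + t * ⟪B' v, v⟫ := by gcongr; exacts [h.lower v, h'.lower v]
  upper v := by
    simp only [add_apply, smul_apply, inner_add_left, real_inner_smul_left]
    calc s * ⟪B v, v⟫ + t * ⟪B' v, v⟫ ≤ s * (Λ * ‖v‖ ^ 2) + t * (Λ * ‖v‖ ^ 2) := by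
          gcongr; exacts [h.upper v, h'.upper v]
      _ = Λ * ‖v‖ ^ 2 := by rw [← add_mul, hst, one_mul]

lemma smul (h : IsElliptic Λ B) {r : ℝ} (hr : 0 < r) : IsElliptic (Λ * (r + r⁻¹)) (r • B) where
  pos := mul_pos h.pos (by positivity)
  symm u v := by simp only [smul_apply, real_inner_smul_left, real_inner_smul_right, h.symm]
  lower v := by
    have hΛ := h.pos
    have hinv : (r + r⁻¹)⁻¹ ≤ r := inv_le_of_inv_le₀ hr (by linarith)
    rw [smul_apply, real_inner_smul_left]
    calc (Λ * (r + r⁻¹))⁻¹ * ‖v‖ ^ 2 = (r + r⁻¹)⁻¹ * (Λ⁻¹ * ‖v‖ ^ 2) := by rw [mul_inv]; ring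
      _ ≤ r * ⟪B v, v⟫ := by gcongr; exact h.lower v
  upper v := by
    have hΛ := h.pos
    have hle : r ≤ r + r⁻¹ := by simpa using hr.le
    rw [smul_apply, real_inner_smul_left]
    calc r * ⟪B v, v⟫ ≤ (r + r⁻¹) * (Λ * ‖v‖ ^ 2) := by
          refine mul_le_mul hle (h.upper v) ?_ (by positivity)
          exact (by positivity : (0 : ℝ) ≤ Λ⁻¹ * ‖v‖ ^ 2).trans (h.lower v)
      _ = Λ * (r + r⁻¹) * ‖v‖ ^ 2 := by ring

lemma smul_add_smul (h : IsElliptic Λ B) (h' : IsElliptic Λ B') {s t : ℝ} (hs : 0 ≤ s)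
    (ht : 0 ≤ t) (hst : 0 < s + t) :
    IsElliptic (Λ * (s + t + (s + t)⁻¹)) (s • B + t • B') := by
  have hcomb := (h.convexComb h' (div_nonneg hs hst.le) (div_nonneg ht hst.le)
    (by rw [← add_div, div_self hst.ne'])).smul hst
  rwa [smul_add, smul_smul, smul_smul, mul_div_cancel₀ _ hst.ne', mul_div_cancel₀ _ hst.ne']
    at hcomb

lemma exists_add (h : IsElliptic Λ B) (h' : IsElliptic Λ' B') :
    ∃ Λ'', IsElliptic Λ'' (B + B') := by
  have hadd := (h.mono (le_max_left Λ Λ')).smul_add_smul (h'.mono (le_max_right Λ Λ'))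
    zero_le_one zero_le_one (by norm_num)
  rw [one_smul, one_smul] at hadd
  exact ⟨_, hadd⟩

section FiniteDimensional

variable [FiniteDimensional ℝ E]

lemma isUnit (h : IsElliptic Λ B) : IsUnit B := by
  have hinj : Function.Injective (B : E →ₗ[ℝ] E) := by
    refine (injective_iff_map_eq_zero _).2 fun v (hv : B v = 0) => ?_
    have hlower := h.lower v
    rw [hv, inner_zero_left] at hlower
    simpa using nonpos_of_mul_nonpos_right hlower (inv_pos.2 h.pos)
  exact ContinuousLinearMap.isUnit_iff_bijective.2
    ⟨hinj, LinearMap.injective_iff_surjective.1 hinj⟩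

lemma apply_inverse (h : IsElliptic Λ B) (w : E) : B (Ring.inverse B w) = w :=
  DFunLike.congr_fun (Ring.mul_inverse_cancel B h.isUnit) w

lemma inverse_apply (h : IsElliptic Λ B) (w : E) : Ring.inverse B (B w) = w :=
  DFunLike.congr_fun (Ring.inverse_mul_cancel B h.isUnit) w

lemma inner_inverse_comm (h : IsElliptic Λ B) (u v : E) :
    ⟪Ring.inverse B u, v⟫ = ⟪u, Ring.inverse B v⟫ := by
  conv_lhs => rw [← h.apply_inverse v]
  rw [← h.symm, h.apply_inverse]

lemma norm_inverse_apply_le (h : IsElliptic Λ B) (w : E) : ‖Ring.inverse B w‖ ≤ Λ * ‖w‖ := by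
  rcases (norm_nonneg (Ring.inverse B w)).eq_or_lt with hzero | hpos
  · rw [← hzero]
    exact mul_nonneg h.pos.le (norm_nonneg _)
  · rw [← inv_mul_le_iff₀ h.pos]
    refine le_of_mul_le_mul_right ?_ hpos
    calc Λ⁻¹ * ‖Ring.inverse B w‖ * ‖Ring.inverse B w‖ = Λ⁻¹ * ‖Ring.inverse B w‖ ^ 2 := by ring
      _ ≤ ⟪w, Ring.inverse B w⟫ := by simpa only [h.apply_inverse] using h.lower (Ring.inverse B w)
      _ ≤ ‖w‖ * ‖Ring.inverse B w‖ := real_inner_le_norm _ _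

/- Expanding `0 ≤ ⟪B u, u⟫` at `u = Λ⁻¹ w - B⁻¹ w`. -/
lemma le_inner_inverse (h : IsElliptic Λ B) (w : E) :
    Λ⁻¹ * ‖w‖ ^ 2 ≤ ⟪Ring.inverse B w, w⟫ := by
  have hΛ := h.pos
  have hnonneg : 0 ≤ ⟪B (Λ⁻¹ • w - Ring.inverse B w), Λ⁻¹ • w - Ring.inverse B w⟫ :=
    (by positivity : 0 ≤ Λ⁻¹ * ‖Λ⁻¹ • w - Ring.inverse B w‖ ^ 2).trans (h.lower _)
  have hexpand : ⟪B (Λ⁻¹ • w - Ring.inverse B w), Λ⁻¹ • w - Ring.inverse B w⟫ =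
      Λ⁻¹ * (Λ⁻¹ * ⟪B w, w⟫) - 2 * (Λ⁻¹ * ‖w‖ ^ 2) + ⟪Ring.inverse B w, w⟫ := by
    rw [map_sub, map_smul, h.apply_inverse, inner_sub_left, inner_sub_right, inner_sub_right,
      real_inner_smul_left, real_inner_smul_left, real_inner_smul_right, real_inner_smul_right,
      h.symm w (Ring.inverse B w), h.apply_inverse, real_inner_self_eq_norm_sq,
      real_inner_comm (Ring.inverse B w) w]
    ring
  have hupper : Λ⁻¹ * (Λ⁻¹ * ⟪B w, w⟫) ≤ Λ⁻¹ * ‖w‖ ^ 2 := by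
    gcongr
    exact (inv_mul_le_iff₀ hΛ).2 (h.upper w)
  linarith

lemma inner_inverse_le (h : IsElliptic Λ B) (w : E) : ⟪Ring.inverse B w, w⟫ ≤ Λ * ‖w‖ ^ 2 :=
  calc ⟪Ring.inverse B w, w⟫ ≤ ‖Ring.inverse B w‖ * ‖w‖ := real_inner_le_norm _ _
    _ ≤ Λ * ‖w‖ * ‖w‖ := by gcongr; exact h.norm_inverse_apply_le w
    _ = Λ * ‖w‖ ^ 2 := by ring

lemma inverse (h : IsElliptic Λ B) : IsElliptic Λ (Ring.inverse B) :=
  ⟨h.pos, h.inner_inverse_comm, h.le_inner_inverse, h.inner_inverse_le⟩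

lemma norm_le (h : IsElliptic Λ B) : ‖B‖ ≤ Λ := by
  refine B.opNorm_le_bound h.pos.le fun u => ?_
  simpa only [Ring.inverse_inverse, h.isUnit] using h.inverse.norm_inverse_apply_le u

lemma inverse_smul_apply (h : IsElliptic Λ B) {r : ℝ} (hr : 0 < r) (w : E) :
    Ring.inverse (r • B) w = r⁻¹ • Ring.inverse B w := by
  have hcancel := (h.smul hr).inverse_apply (r⁻¹ • Ring.inverse B w)
  rwa [smul_apply, map_smul B, h.apply_inverse, smul_inv_smul₀ hr.ne'] at hcancel

lemma norm_inverse_sub_inverse_apply_le (h : IsElliptic Λ B) (h' : IsElliptic Λ B') (w : E) :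
    ‖Ring.inverse B w - Ring.inverse B' w‖ ≤ Λ ^ 2 * ‖B - B'‖ * ‖w‖ := by
  have hresolvent : Ring.inverse B w - Ring.inverse B' w =
      Ring.inverse B ((B' - B) (Ring.inverse B' w)) := by
    rw [sub_apply, map_sub, h.inverse_apply, h'.apply_inverse]
  have hΛ := h.pos
  calc ‖Ring.inverse B w - Ring.inverse B' w‖ ≤ Λ * ‖(B' - B) (Ring.inverse B' w)‖ :=
        hresolvent ▸ h.norm_inverse_apply_le _
    _ ≤ Λ * (‖B' - B‖ * ‖Ring.inverse B' w‖) := by gcongr; exact (B' - B).le_opNorm _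
    _ ≤ Λ * (‖B' - B‖ * (Λ * ‖w‖)) := by gcongr; exact h'.norm_inverse_apply_le w
    _ = Λ ^ 2 * ‖B - B'‖ * ‖w‖ := by rw [norm_sub_rev]; ring

lemma abs_inner_inverse_sub_le (h : IsElliptic Λ B) (h' : IsElliptic Λ B') (w w' : E) :
    |⟪Ring.inverse B w, w⟫ - ⟪Ring.inverse B' w', w'⟫| ≤
      Λ ^ 2 * ‖B - B'‖ * ‖w‖ ^ 2 + Λ * ‖w - w'‖ * (‖w‖ + ‖w'‖) := by
  have hsplit : ⟪Ring.inverse B w, w⟫ - ⟪Ring.inverse B' w', w'⟫ =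
      ⟪Ring.inverse B w - Ring.inverse B' w, w⟫ + ⟪Ring.inverse B' (w - w'), w + w'⟫ := by
    rw [inner_sub_left, map_sub, inner_sub_left, inner_add_right, inner_add_right,
      h'.inner_inverse_comm w w', real_inner_comm (Ring.inverse B' w') w]
    ring
  have hΛ := h.pos
  calc |⟪Ring.inverse B w, w⟫ - ⟪Ring.inverse B' w', w'⟫|
      ≤ |⟪Ring.inverse B w - Ring.inverse B' w, w⟫| + |⟪Ring.inverse B' (w - w'), w + w'⟫| :=
        hsplit ▸ abs_add_le _ _
    _ ≤ ‖Ring.inverse B w - Ring.inverse B' w‖ * ‖w‖ + ‖Ring.inverse B' (w - w')‖ * ‖w + w'‖ :=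
        add_le_add (abs_real_inner_le_norm _ _) (abs_real_inner_le_norm _ _)
    _ ≤ Λ ^ 2 * ‖B - B'‖ * ‖w‖ * ‖w‖ + Λ * ‖w - w'‖ * (‖w‖ + ‖w'‖) := by
        gcongr
        exacts [h.norm_inverse_sub_inverse_apply_le h' w, h'.norm_inverse_apply_le _,
          norm_add_le _ _]
    _ = Λ ^ 2 * ‖B - B'‖ * ‖w‖ ^ 2 + Λ * ‖w - w'‖ * (‖w‖ + ‖w'‖) := by ring

end FiniteDimensional

end IsElliptic

/-! ### Gaussian densities -/

lemma one_add_pow_mul_exp_neg_le {c : ℝ} (hc : 0 < c) (p : ℕ) (t : ℝ) (ht : 0 ≤ t) :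
    (1 + t) ^ p * exp (-(c * t ^ 2)) ≤ exp (p ^ 2 / (2 * c)) * exp (-(c / 2 * t ^ 2)) := by
  have hpow : (1 + t) ^ p ≤ exp (p * t) := by
    rw [exp_nat_mul]
    gcongr
    linarith [add_one_le_exp t]
  have hyoung : p * t - c * t ^ 2 ≤ p ^ 2 / (2 * c) - c / 2 * t ^ 2 := by
    have hsq : p ^ 2 / (2 * c) - c / 2 * t ^ 2 - (p * t - c * t ^ 2) =
        (p - c * t) ^ 2 / (2 * c) := by
      field_simp
      ring
    have : 0 ≤ (p - c * t) ^ 2 / (2 * c) := by positivity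
    linarith
  calc (1 + t) ^ p * exp (-(c * t ^ 2)) ≤ exp (p * t) * exp (-(c * t ^ 2)) := by gcongr
    _ = exp (p * t - c * t ^ 2) := by rw [← exp_add, sub_eq_add_neg]
    _ ≤ exp (p ^ 2 / (2 * c) - c / 2 * t ^ 2) := exp_le_exp.2 hyoung
    _ = exp (p ^ 2 / (2 * c)) * exp (-(c / 2 * t ^ 2)) := by rw [← exp_add, sub_eq_add_neg]

lemma abs_exp_neg_sub_exp_neg_le {s t m : ℝ} (hs : m ≤ s) (ht : m ≤ t) :
    |exp (-s) - exp (-t)| ≤ |s - t| * exp (-m) := by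
  wlog hst : s ≤ t generalizing s t
  · rw [abs_sub_comm, abs_sub_comm s]
    exact this ht hs (le_of_not_ge hst)
  have hmono : exp (-t) ≤ exp (-s) := exp_le_exp.2 (neg_le_neg hst)
  have htangent : exp (-s) * (1 - (t - s)) ≤ exp (-t) :=
    calc exp (-s) * (1 - (t - s)) ≤ exp (-s) * exp (-(t - s)) := by
          gcongr
          linarith [add_one_le_exp (-(t - s))]
      _ = exp (-t) := by
          rw [← exp_add]
          ring_nf
  rw [abs_of_nonneg (sub_nonneg.2 hmono), abs_sub_comm, abs_of_nonneg (sub_nonneg.2 hst)]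
  calc exp (-s) - exp (-t) ≤ (t - s) * exp (-s) := by linarith
    _ ≤ (t - s) * exp (-m) :=
        mul_le_mul_of_nonneg_left (exp_le_exp.2 (neg_le_neg hs)) (sub_nonneg.2 hst)

section Gaussian

variable {E : Type*} [NormedAddCommGroup E] [InnerProductSpace ℝ E]

/-- The unnormalised density of the centred Gaussian measure with covariance `2 B`. -/
def gaussWeight (B : E →L[ℝ] E) (z : E) : ℝ := exp (-(⟪Ring.inverse B z, z⟫ / 4))

lemma gaussWeight_pos (B : E →L[ℝ] E) (z : E) : 0 < gaussWeight B z := exp_pos _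

lemma continuous_gaussWeight (B : E →L[ℝ] E) : Continuous (gaussWeight B) := by
  unfold gaussWeight
  fun_prop

section FiniteDimensional

variable [FiniteDimensional ℝ E]

namespace IsElliptic

variable {Λ Λ' : ℝ} {B B' : E →L[ℝ] E}

lemma gaussWeight_le (h : IsElliptic Λ B) (z : E) :
    gaussWeight B z ≤ exp (-((16 * Λ)⁻¹ * ‖z‖ ^ 2)) := by
  refine exp_le_exp.2 (neg_le_neg ?_)
  have hΛ := inv_pos.2 h.pos
  rw [mul_inv]
  nlinarith [h.le_inner_inverse z, sq_nonneg ‖z‖]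

lemma le_gaussWeight (h : IsElliptic Λ B) (z : E) :
    exp (-(Λ / 4 * ‖z‖ ^ 2)) ≤ gaussWeight B z := by
  refine exp_le_exp.2 (neg_le_neg ?_)
  linarith [h.inner_inverse_le z]

/- Completing the square: the product of the two weights, recentred at `B (B + B')⁻¹ z`, splits. -/
lemma gaussWeight_mul_gaussWeight (h : IsElliptic Λ B) (h' : IsElliptic Λ' B') (z u : E) :
    gaussWeight B (B (Ring.inverse (B + B') z) + u) *
        gaussWeight B' (z - (B (Ring.inverse (B + B') z) + u)) =
      gaussWeight (B + B') z * (gaussWeight B u * gaussWeight B' u) := by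
  obtain ⟨Λ'', hadd⟩ := h.exists_add h'
  unfold gaussWeight
  set p := Ring.inverse (B + B') z
  have hz : z = B p + B' p := by rw [← add_apply, hadd.apply_inverse]
  have hsub : z - (B p + u) = B' p - u := by rw [hz]; abel
  have hpz : ⟪p, z⟫ = ⟪p, B p⟫ + ⟪p, B' p⟫ := by rw [hz, inner_add_right]
  have hcross : ⟪Ring.inverse B u, B p⟫ = ⟪p, u⟫ := by
    rw [← h.symm, h.apply_inverse, real_inner_comm]
  have hcross' : ⟪Ring.inverse B' u, B' p⟫ = ⟪p, u⟫ := by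
    rw [← h'.symm, h'.apply_inverse, real_inner_comm]
  rw [← exp_add, ← exp_add, ← exp_add, hsub]
  congr 1
  simp only [map_add, map_sub, h.inverse_apply, h'.inverse_apply, inner_add_left,
    inner_add_right, inner_sub_left, inner_sub_right, hpz, hcross, hcross']
  ring

lemma abs_gaussWeight_sub_le (h : IsElliptic Λ B) (h' : IsElliptic Λ B') {w w' : E}
    (hw : ‖w - w'‖ ≤ 1) :
    |gaussWeight B w - gaussWeight B' w'| ≤ (Λ ^ 2 + 2 * Λ) * exp (Λ⁻¹ / 4) * exp (16 * Λ) *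
      (‖B - B'‖ + ‖w - w'‖) * exp (-((16 * Λ)⁻¹ * ‖w‖ ^ 2)) := by
  have hΛ := h.pos
  have hΛi := inv_pos.2 hΛ
  have hw' : ‖w'‖ ≤ ‖w‖ + 1 := by linarith [norm_le_norm_add_norm_sub w w']
  have hsq : ‖w‖ ^ 2 / 2 - 1 ≤ ‖w'‖ ^ 2 := by
    have : ‖w‖ ≤ ‖w'‖ + 1 := by linarith [norm_le_norm_add_norm_sub' w w']
    nlinarith [norm_nonneg w, norm_nonneg w', sq_nonneg (‖w'‖ - 1)]
  have hform : |⟪Ring.inverse B w, w⟫ / 4 - ⟪Ring.inverse B' w', w'⟫ / 4| ≤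
      (Λ ^ 2 + 2 * Λ) * (‖B - B'‖ + ‖w - w'‖) * (1 + ‖w‖) ^ 2 := by
    rw [← sub_div, abs_div, abs_of_pos (four_pos : (0 : ℝ) < 4)]
    have hn := norm_nonneg w
    have hB : Λ ^ 2 * ‖B - B'‖ * ‖w‖ ^ 2 ≤ Λ ^ 2 * ‖B - B'‖ * (1 + ‖w‖) ^ 2 := by
      gcongr
      linarith
    have hdiff : Λ * ‖w - w'‖ * (‖w‖ + ‖w'‖) ≤ Λ * ‖w - w'‖ * (2 * (1 + ‖w‖) ^ 2) := by
      gcongr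
      nlinarith
    have : 0 ≤ Λ ^ 2 * ‖w - w'‖ * (1 + ‖w‖) ^ 2 := by positivity
    have : 0 ≤ Λ * ‖B - B'‖ * (1 + ‖w‖) ^ 2 := by positivity
    linarith [h.abs_inner_inverse_sub_le h' w w',
      abs_nonneg (⟪Ring.inverse B w, w⟫ - ⟪Ring.inverse B' w', w'⟫)]
  have hpoly := one_add_pow_mul_exp_neg_le (c := Λ⁻¹ / 8) (by positivity) 2 _ (norm_nonneg w)
  calc |gaussWeight B w - gaussWeight B' w'|
      ≤ |⟪Ring.inverse B w, w⟫ / 4 - ⟪Ring.inverse B' w', w'⟫ / 4| *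
          exp (-(Λ⁻¹ / 8 * ‖w‖ ^ 2 - Λ⁻¹ / 4)) :=
        abs_exp_neg_sub_exp_neg_le (by nlinarith [h.le_inner_inverse w, sq_nonneg ‖w‖])
          (by nlinarith [h'.le_inner_inverse w', sq_nonneg ‖w‖])
    _ ≤ (Λ ^ 2 + 2 * Λ) * (‖B - B'‖ + ‖w - w'‖) * (1 + ‖w‖) ^ 2 *
          exp (-(Λ⁻¹ / 8 * ‖w‖ ^ 2 - Λ⁻¹ / 4)) := by gcongr
    _ = (Λ ^ 2 + 2 * Λ) * (‖B - B'‖ + ‖w - w'‖) * exp (Λ⁻¹ / 4) *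
          ((1 + ‖w‖) ^ 2 * exp (-(Λ⁻¹ / 8 * ‖w‖ ^ 2))) := by
        rw [neg_sub, show Λ⁻¹ / 4 - Λ⁻¹ / 8 * ‖w‖ ^ 2 = Λ⁻¹ / 4 + -(Λ⁻¹ / 8 * ‖w‖ ^ 2) from
          sub_eq_add_neg _ _, exp_add]
        ring
    _ ≤ (Λ ^ 2 + 2 * Λ) * (‖B - B'‖ + ‖w - w'‖) * exp (Λ⁻¹ / 4) *
          (exp (2 ^ 2 / (2 * (Λ⁻¹ / 8))) * exp (-(Λ⁻¹ / 8 / 2 * ‖w‖ ^ 2))) :=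
        mul_le_mul_of_nonneg_left (mod_cast hpoly) (by positivity)
    _ = _ := by
        rw [show (2 : ℝ) ^ 2 / (2 * (Λ⁻¹ / 8)) = 16 * Λ by field_simp; norm_num,
          show Λ⁻¹ / 8 / 2 = (16 * Λ)⁻¹ by field_simp; norm_num]
        ring

end IsElliptic

lemma exists_abs_gaussWeight_sub_le {Λ : ℝ} (hΛ : 0 < Λ) :
    ∃ C : ℝ, 0 < C ∧ ∀ B B' : E →L[ℝ] E, IsElliptic Λ B → IsElliptic Λ B' →
      ∀ w w', ‖w - w'‖ ≤ 1 → |gaussWeight B w - gaussWeight B' w'| ≤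
        C * (‖B - B'‖ + ‖w - w'‖) * exp (-((16 * Λ)⁻¹ * ‖w‖ ^ 2)) :=
  ⟨(Λ ^ 2 + 2 * Λ) * exp (Λ⁻¹ / 4) * exp (16 * Λ), by positivity,
    fun _ _ h h' _ _ hw => h.abs_gaussWeight_sub_le h' hw⟩

variable [MeasurableSpace E] [BorelSpace E]

lemma integrable_exp_neg_mul_sq_norm {c : ℝ} (hc : 0 < c) :
    Integrable fun w : E => exp (-(c * ‖w‖ ^ 2)) := by
  refine (GaussianFourier.integrable_cexp_neg_mul_sq_norm_add (V := E) (b := (c : ℂ))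
    (by simpa using hc) 0 0).norm.congr (Eventually.of_forall fun w => ?_)
  simp only [Complex.norm_exp]
  congr 1
  simp [← Complex.ofReal_pow]

lemma integrable_one_add_norm_pow_mul_exp {c : ℝ} (hc : 0 < c) (p : ℕ) :
    Integrable fun w : E => (1 + ‖w‖) ^ p * exp (-(c * ‖w‖ ^ 2)) := by
  refine ((integrable_exp_neg_mul_sq_norm (half_pos hc)).const_mul (exp (p ^ 2 / (2 * c)))).mono'
    (by fun_prop) (Eventually.of_forall fun w => ?_)
  rw [Real.norm_of_nonneg (by positivity)]
  exact one_add_pow_mul_exp_neg_le hc p _ (norm_nonneg w)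

/-- The density of the centred Gaussian measure with covariance `2 B`; equivalently, the heat kernel
at time `1` of the operator `φ ↦ trace (B D²φ)`. -/
def gauss (B : E →L[ℝ] E) (z : E) : ℝ := gaussWeight B z / ∫ w, gaussWeight B w

lemma gauss_nonneg (B : E →L[ℝ] E) (z : E) : 0 ≤ gauss B z :=
  div_nonneg (gaussWeight_pos B z).le (integral_nonneg fun w => (gaussWeight_pos B w).le)

lemma gauss_neg (B : E →L[ℝ] E) (z : E) : gauss B (-z) = gauss B z := by
  simp [gauss, gaussWeight]

@[fun_prop]
lemma continuous_gauss (B : E →L[ℝ] E) : Continuous (gauss B) :=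
  (continuous_gaussWeight B).div_const _

namespace IsElliptic

variable {Λ Λ' : ℝ} {B B' : E →L[ℝ] E}

lemma integrable_gaussWeight (h : IsElliptic Λ B) : Integrable (gaussWeight B) := by
  have hΛ := h.pos
  refine (integrable_exp_neg_mul_sq_norm (c := (16 * Λ)⁻¹) (by positivity)).mono'
    (continuous_gaussWeight B).aestronglyMeasurable (Eventually.of_forall fun z => ?_)
  rw [Real.norm_of_nonneg (gaussWeight_pos B z).le]
  exact h.gaussWeight_le z

lemma integral_gaussWeight_pos (h : IsElliptic Λ B) : 0 < ∫ w, gaussWeight B w :=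
  integral_exp_pos h.integrable_gaussWeight

lemma integrable_gauss (h : IsElliptic Λ B) : Integrable (gauss B) :=
  h.integrable_gaussWeight.div_const _

lemma integral_gauss (h : IsElliptic Λ B) : ∫ z, gauss B z = 1 := by
  unfold gauss
  rw [integral_div, div_self h.integral_gaussWeight_pos.ne']

/- By completing the square the convolution is a multiple of `gaussWeight (B + B')`; the constant is
determined by the total mass. -/
lemma integral_gauss_mul_gauss (h : IsElliptic Λ B) (h' : IsElliptic Λ' B') (z : E) :
    ∫ w, gauss B w * gauss B' (z - w) = gauss (B + B') z := by
  set c := (∫ u, gaussWeight B u * gaussWeight B' u) /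
    ((∫ w, gaussWeight B w) * ∫ w, gaussWeight B' w) with hc
  have hconv : ∀ z, ∫ w, gauss B w * gauss B' (z - w) = gaussWeight (B + B') z * c := by
    intro z
    rw [← integral_add_left_eq_self _ (B (Ring.inverse (B + B') z)), hc, mul_div_assoc',
      ← integral_const_mul, ← integral_div]
    refine integral_congr_ae (Eventually.of_forall fun u => ?_)
    simp only [gauss, div_mul_div_comm, h.gaussWeight_mul_gaussWeight h' z u]
  have hinteg : Integrable (Function.uncurry fun z w => gauss B w * gauss B' (z - w))
      ((volume : Measure E).prod volume) :=
    h.integrable_gauss.convolution_integrand (ContinuousLinearMap.mul ℝ ℝ) h'.integrable_gauss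
  have hmass : (∫ z, gaussWeight (B + B') z) * c = 1 := by
    rw [← integral_mul_const]
    simp_rw [← hconv]
    rw [integral_integral_swap hinteg]
    simp_rw [integral_const_mul, integral_sub_right_eq_self (gauss B'), h'.integral_gauss, mul_one]
    exact h.integral_gauss
  rw [hconv, gauss, div_eq_mul_inv, eq_inv_of_mul_eq_one_right hmass]

lemma gauss_smul (h : IsElliptic Λ B) {r : ℝ} (hr : 0 < r) (z : E) :
    gauss (r • B) z = (√r ^ Module.finrank ℝ E)⁻¹ * gauss B ((√r)⁻¹ • z) := by
  have hs := Real.sqrt_pos.2 hr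
  have hweight : ∀ z, gaussWeight (r • B) z = gaussWeight B ((√r)⁻¹ • z) := by
    intro z
    unfold gaussWeight
    rw [h.inverse_smul_apply hr, map_smul, real_inner_smul_left, real_inner_smul_left,
      real_inner_smul_right, ← mul_assoc, ← mul_inv, Real.mul_self_sqrt hr.le]
  unfold gauss
  simp_rw [hweight]
  rw [Measure.integral_comp_inv_smul_of_nonneg volume (gaussWeight B) hs.le, smul_eq_mul]
  field_simp

lemma integral_mul_gauss_smul (h : IsElliptic Λ B) {r : ℝ} (hr : 0 < r) (F : E → ℝ) :
    ∫ z, F z * gauss (r • B) z = ∫ w, F (√r • w) * gauss B w := by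
  have hs := Real.sqrt_pos.2 hr
  have hpull : ∀ z, F z * gauss (r • B) z = (√r ^ Module.finrank ℝ E)⁻¹ *
      (F (√r • (√r)⁻¹ • z) * gauss B ((√r)⁻¹ • z)) := by
    intro z
    rw [h.gauss_smul hr, smul_inv_smul₀ hs.ne']
    ring
  simp_rw [hpull]
  rw [integral_const_mul, Measure.integral_comp_inv_smul_of_nonneg volume
    (fun w => F (√r • w) * gauss B w) hs.le, smul_eq_mul, inv_mul_cancel_left₀ (by positivity)]

end IsElliptic

lemma exists_le_integral_gaussWeight {Λ : ℝ} (hΛ : 0 < Λ) :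
    ∃ Z : ℝ, 0 < Z ∧ ∀ B : E →L[ℝ] E, IsElliptic Λ B → Z ≤ ∫ w, gaussWeight B w := by
  have hinteg : Integrable fun w : E => exp (-(Λ / 4 * ‖w‖ ^ 2)) :=
    integrable_exp_neg_mul_sq_norm (by positivity)
  exact ⟨_, integral_exp_pos hinteg, fun B h =>
    integral_mono hinteg h.integrable_gaussWeight h.le_gaussWeight⟩

lemma exists_abs_integral_gaussWeight_sub_le {Λ : ℝ} (hΛ : 0 < Λ) :
    ∃ C : ℝ, 0 < C ∧ ∀ B B' : E →L[ℝ] E, IsElliptic Λ B → IsElliptic Λ B' →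
      |(∫ w, gaussWeight B w) - ∫ w, gaussWeight B' w| ≤ C * ‖B - B'‖ := by
  obtain ⟨C, hC, hdiff⟩ := exists_abs_gaussWeight_sub_le (E := E) hΛ
  have hinteg : Integrable fun w : E => exp (-((16 * Λ)⁻¹ * ‖w‖ ^ 2)) :=
    integrable_exp_neg_mul_sq_norm (by positivity)
  have hpos := integral_exp_pos hinteg
  refine ⟨C * ∫ w : E, exp (-((16 * Λ)⁻¹ * ‖w‖ ^ 2)), by positivity, fun B B' h h' => ?_⟩
  rw [← integral_sub h.integrable_gaussWeight h'.integrable_gaussWeight, mul_right_comm,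
    ← integral_const_mul, ← Real.norm_eq_abs]
  refine norm_integral_le_of_norm_le (hinteg.const_mul _) (Eventually.of_forall fun w => ?_)
  simpa using hdiff B B' h h' w w (by simp)

lemma exists_gauss_le {Λ : ℝ} (hΛ : 0 < Λ) :
    ∃ C : ℝ, 0 < C ∧ ∀ B : E →L[ℝ] E, IsElliptic Λ B → ∀ w,
      gauss B w ≤ C * exp (-((16 * Λ)⁻¹ * ‖w‖ ^ 2)) := by
  obtain ⟨Z, hZ, hle⟩ := exists_le_integral_gaussWeight (E := E) hΛ
  refine ⟨Z⁻¹, by positivity, fun B h w => ?_⟩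
  rw [inv_mul_eq_div]
  exact div_le_div₀ (exp_pos _).le (h.gaussWeight_le w) hZ (hle B h)

lemma exists_abs_gauss_sub_le {Λ : ℝ} (hΛ : 0 < Λ) :
    ∃ C : ℝ, 0 < C ∧ ∀ B B' : E →L[ℝ] E, IsElliptic Λ B → IsElliptic Λ B' →
      ∀ w w', ‖w - w'‖ ≤ 1 → |gauss B w - gauss B' w'| ≤
        C * (‖B - B'‖ + ‖w - w'‖) * exp (-((16 * Λ)⁻¹ * ‖w‖ ^ 2)) := by
  obtain ⟨C₀, hC₀, hweight⟩ := exists_abs_gaussWeight_sub_le (E := E) hΛ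
  obtain ⟨C₁, hC₁, hmass⟩ := exists_abs_integral_gaussWeight_sub_le (E := E) hΛ
  obtain ⟨Z₀, hZ₀, hle⟩ := exists_le_integral_gaussWeight (E := E) hΛ
  refine ⟨C₀ / Z₀ + C₁ / Z₀ ^ 2, by positivity, fun B B' h h' w w' hw => ?_⟩
  have hZ := hle B h
  have hZ' := hle B' h'
  have hZpos := h.integral_gaussWeight_pos
  have hZpos' := h'.integral_gaussWeight_pos
  have hsplit : gauss B w - gauss B' w' =
      (gaussWeight B w - gaussWeight B' w') / (∫ w, gaussWeight B' w) -
        gaussWeight B w * ((∫ w, gaussWeight B w) - ∫ w, gaussWeight B' w) /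
          ((∫ w, gaussWeight B w) * ∫ w, gaussWeight B' w) := by
    unfold gauss
    field_simp
    ring
  have hnum : |(gaussWeight B w - gaussWeight B' w') / ∫ w, gaussWeight B' w| ≤
      C₀ * (‖B - B'‖ + ‖w - w'‖) * exp (-((16 * Λ)⁻¹ * ‖w‖ ^ 2)) / Z₀ := by
    rw [abs_div, abs_of_pos hZpos']
    exact div_le_div₀ (by positivity) (hweight B B' h h' w w' hw) hZ₀ hZ'
  have hden : |gaussWeight B w * ((∫ w, gaussWeight B w) - ∫ w, gaussWeight B' w) /
        ((∫ w, gaussWeight B w) * ∫ w, gaussWeight B' w)| ≤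
      exp (-((16 * Λ)⁻¹ * ‖w‖ ^ 2)) * (C₁ * (‖B - B'‖ + ‖w - w'‖)) / Z₀ ^ 2 := by
    rw [abs_div, abs_mul, abs_of_pos (mul_pos hZpos hZpos'), abs_of_pos (gaussWeight_pos B w),
      sq Z₀]
    have hmass' := (hmass B B' h h').trans
      (mul_le_mul_of_nonneg_left (le_add_of_nonneg_right (norm_nonneg (w - w'))) hC₁.le)
    gcongr
    exact h.gaussWeight_le w
  calc |gauss B w - gauss B' w'| ≤ _ := hsplit ▸ abs_sub _ _
    _ ≤ _ := add_le_add hnum hden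
    _ = (C₀ / Z₀ + C₁ / Z₀ ^ 2) * (‖B - B'‖ + ‖w - w'‖) * exp (-((16 * Λ)⁻¹ * ‖w‖ ^ 2)) := by ring

/-! ### Moments of Gaussian densities -/

lemma IsElliptic.integrable_one_add_norm_pow_mul_gauss {Λ : ℝ} {B : E →L[ℝ] E}
    (h : IsElliptic Λ B) (p : ℕ) : Integrable fun w => (1 + ‖w‖) ^ p * gauss B w := by
  have hΛ := h.pos
  obtain ⟨C, -, hle⟩ := exists_gauss_le (E := E) hΛ
  refine ((integrable_one_add_norm_pow_mul_exp (c := (16 * Λ)⁻¹) (by positivity) p).const_mul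
    C).mono' (by fun_prop) (Eventually.of_forall fun w => ?_)
  rw [Real.norm_of_nonneg (mul_nonneg (by positivity) (gauss_nonneg B w)), mul_left_comm]
  exact mul_le_mul_of_nonneg_left (hle B h w) (by positivity)

lemma exists_integral_one_add_norm_pow_mul_gauss_le {Λ : ℝ} (hΛ : 0 < Λ) (p : ℕ) :
    ∃ J : ℝ, 0 < J ∧ ∀ B : E →L[ℝ] E, IsElliptic Λ B → ∫ w, (1 + ‖w‖) ^ p * gauss B w ≤ J := by
  obtain ⟨C, hC, hle⟩ := exists_gauss_le (E := E) hΛ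
  have hinteg : Integrable fun w : E => C * ((1 + ‖w‖) ^ p * exp (-((16 * Λ)⁻¹ * ‖w‖ ^ 2))) :=
    (integrable_one_add_norm_pow_mul_exp (by positivity) p).const_mul C
  have : 0 ≤ ∫ w : E, C * ((1 + ‖w‖) ^ p * exp (-((16 * Λ)⁻¹ * ‖w‖ ^ 2))) :=
    integral_nonneg fun w => by positivity
  refine ⟨(∫ w : E, C * ((1 + ‖w‖) ^ p * exp (-((16 * Λ)⁻¹ * ‖w‖ ^ 2)))) + 1, by positivity,
    fun B h => (integral_mono (h.integrable_one_add_norm_pow_mul_gauss p) hinteg fun w => ?_).trans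
      (le_add_of_nonneg_right zero_le_one)⟩
  simp only [mul_left_comm C]
  exact mul_le_mul_of_nonneg_left (hle B h w) (by positivity)

lemma integral_clm_mul_gauss (B : E →L[ℝ] E) (ℓ : E →L[ℝ] ℝ) : ∫ w, ℓ w * gauss B w = 0 := by
  have hodd := integral_neg_eq_self (fun w => ℓ w * gauss B w) (volume : Measure E)
  simp only [map_neg, gauss_neg, neg_mul, integral_neg] at hodd
  linarith

namespace IsElliptic

variable {Λ : ℝ} {B : E →L[ℝ] E}

lemma integrable_mul_gauss (h : IsElliptic Λ B) {f : E → ℝ} (hf : AEStronglyMeasurable f volume)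
    {C : ℝ} {p : ℕ} (hfC : ∀ w, |f w| ≤ C * (1 + ‖w‖) ^ p) :
    Integrable fun w => f w * gauss B w := by
  refine ((h.integrable_one_add_norm_pow_mul_gauss p).const_mul C).mono'
    (hf.mul (continuous_gauss B).aestronglyMeasurable) (Eventually.of_forall fun w => ?_)
  rw [norm_mul, Real.norm_eq_abs, Real.norm_of_nonneg (gauss_nonneg B w), ← mul_assoc]
  exact mul_le_mul_of_nonneg_right (hfC w) (gauss_nonneg B w)

lemma integrable_clm_mul_gauss (h : IsElliptic Λ B) (ℓ : E →L[ℝ] ℝ) :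
    Integrable fun w => ℓ w * gauss B w := by
  refine h.integrable_mul_gauss (p := 1) (C := ‖ℓ‖) (by fun_prop) fun w => ?_
  rw [pow_one]
  exact (ℓ.le_opNorm w).trans (by gcongr; linarith)

lemma integrable_clm_mul_clm_mul_gauss (h : IsElliptic Λ B) (ℓ ℓ' : E →L[ℝ] ℝ) :
    Integrable fun w => ℓ w * ℓ' w * gauss B w := by
  refine h.integrable_mul_gauss (p := 2) (C := ‖ℓ‖ * ‖ℓ'‖) (by fun_prop) fun w => ?_
  calc |ℓ w * ℓ' w| = ‖ℓ w‖ * ‖ℓ' w‖ := abs_mul _ _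
    _ ≤ (‖ℓ‖ * ‖w‖) * (‖ℓ'‖ * ‖w‖) := by gcongr; exacts [ℓ.le_opNorm w, ℓ'.le_opNorm w]
    _ = ‖ℓ‖ * ‖ℓ'‖ * ‖w‖ ^ 2 := by ring
    _ ≤ ‖ℓ‖ * ‖ℓ'‖ * (1 + ‖w‖) ^ 2 := by gcongr; linarith

lemma integrable_bilin_mul_gauss (h : IsElliptic Λ B) (q : E →L[ℝ] E →L[ℝ] ℝ) :
    Integrable fun w => q w w * gauss B w := by
  refine h.integrable_mul_gauss (p := 2) (C := ‖q‖) (by fun_prop) fun w => ?_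
  calc |q w w| ≤ ‖q‖ * ‖w‖ * ‖w‖ := q.le_opNorm₂ w w
    _ = ‖q‖ * ‖w‖ ^ 2 := by ring
    _ ≤ ‖q‖ * (1 + ‖w‖) ^ 2 := by gcongr; linarith

lemma abs_integral_mul_gauss_le (h : IsElliptic Λ B) {f : E → ℝ} {C : ℝ} {p : ℕ}
    (hfC : ∀ w, |f w| ≤ C * (1 + ‖w‖) ^ p) :
    |∫ w, f w * gauss B w| ≤ C * ∫ w, (1 + ‖w‖) ^ p * gauss B w := by
  rw [← integral_const_mul, ← Real.norm_eq_abs]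
  refine norm_integral_le_of_norm_le ((h.integrable_one_add_norm_pow_mul_gauss p).const_mul C)
    (Eventually.of_forall fun w => ?_)
  rw [norm_mul, Real.norm_eq_abs, Real.norm_of_nonneg (gauss_nonneg B w), ← mul_assoc]
  exact mul_le_mul_of_nonneg_right (hfC w) (gauss_nonneg B w)

lemma hasFDerivAt_gauss (h : IsElliptic Λ B) (z : E) :
    HasFDerivAt (gauss B) ((-(1 / 2) * gauss B z) • innerSL ℝ (Ring.inverse B z)) z := by
  have hform : HasFDerivAt (fun z => ⟪Ring.inverse B z, z⟫)
      ((2 : ℝ) • innerSL ℝ (Ring.inverse B z)) z := by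
    refine ((Ring.inverse B).hasFDerivAt.inner ℝ (hasFDerivAt_id z)).congr_fderiv ?_
    ext v
    simp only [ContinuousLinearMap.comp_apply, fderivInnerCLM_apply,
      ContinuousLinearMap.prod_apply, ContinuousLinearMap.id_apply, id, smul_apply,
      innerSL_apply_apply, smul_eq_mul, h.inner_inverse_comm v z, real_inner_comm v]
    ring
  have hgauss : gauss B =
      fun z => (∫ w, gaussWeight B w)⁻¹ * exp (-(1 / 4) * ⟪Ring.inverse B z, z⟫) := by
    ext z
    rw [gauss, gaussWeight, div_eq_inv_mul]
    ring_nf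
  rw [hgauss]
  refine (((hform.const_mul (-(1 / 4))).exp).const_mul _).congr_fderiv ?_
  ext v
  simp only [smul_apply, innerSL_apply_apply, smul_eq_mul]
  ring

/- Integration by parts, using `∂_{B u} gauss B = -⟪u, ·⟫ gauss B / 2`. -/
lemma integral_inner_mul_clm_mul_gauss (h : IsElliptic Λ B) (u : E) (ℓ : E →L[ℝ] ℝ) :
    ∫ w, ⟪u, w⟫ * ℓ w * gauss B w = 2 * ℓ (B u) := by
  have hderiv : ∀ z, fderiv ℝ (gauss B) z (B u) = -(1 / 2) * (⟪u, z⟫ * gauss B z) := by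
    intro z
    rw [(h.hasFDerivAt_gauss z).fderiv]
    simp only [smul_apply, innerSL_apply_apply, smul_eq_mul]
    rw [← h.symm, h.apply_inverse, real_inner_comm]
    ring
  have hprod : ∀ w, ℓ w * fderiv ℝ (gauss B) w (B u) = -(1 / 2) * (⟪u, w⟫ * ℓ w * gauss B w) := by
    intro w
    rw [hderiv]
    ring
  have hparts := integral_mul_fderiv_eq_neg_fderiv_mul_of_integrable
    (μ := (volume : Measure E)) (f := ℓ) (g := gauss B) (v := B u)
    (by simpa only [ContinuousLinearMap.fderiv] using h.integrable_gauss.const_mul (ℓ (B u)))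
    (by
      simp only [hprod]
      exact (h.integrable_clm_mul_clm_mul_gauss (innerSL ℝ u) ℓ).const_mul _)
    (h.integrable_clm_mul_gauss ℓ) (fun _ _ => ℓ.differentiableAt)
    (fun w _ => (h.hasFDerivAt_gauss w).differentiableAt)
  simp only [hprod, ContinuousLinearMap.fderiv, integral_const_mul, h.integral_gauss] at hparts
  linarith

lemma integral_bilin_mul_gauss (h : IsElliptic Λ B) {ι : Type*} [Fintype ι]
    (e : OrthonormalBasis ι ℝ E) (q : E →L[ℝ] E →L[ℝ] ℝ) :
    ∫ w, q w w * gauss B w = 2 * ∑ i, q (B (e i)) (e i) := by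
  have hexpand : ∀ w, q w w * gauss B w = ∑ i, ⟪e i, w⟫ * q.flip (e i) w * gauss B w := by
    intro w
    have hq : q w w = ∑ i, ⟪e i, w⟫ * q w (e i) :=
      calc q w w = q w (∑ i, ⟪e i, w⟫ • e i) := by rw [e.sum_repr']
        _ = ∑ i, ⟪e i, w⟫ * q w (e i) := by simp only [map_sum, map_smul, smul_eq_mul]
    rw [hq, Finset.sum_mul]
    rfl
  have hinteg : ∀ i, Integrable fun w => ⟪e i, w⟫ * q.flip (e i) w * gauss B w := fun i =>
    h.integrable_clm_mul_clm_mul_gauss (innerSL ℝ (e i)) (q.flip (e i))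
  simp_rw [hexpand]
  rw [integral_finsetSum _ fun i _ => hinteg i, Finset.mul_sum]
  exact Finset.sum_congr rfl fun i _ => h.integral_inner_mul_clm_mul_gauss (e i) (q.flip (e i))

end IsElliptic

end FiniteDimensional

end Gaussian

/-! ### Second order expansion of Gaussian averages -/

lemma exists_norm_sub_le_add_mul_norm_sub {E G : Type*} [NormedAddCommGroup E]
    [NormedAddCommGroup G] {f : E → G} (hf : Continuous f)
    (hc : HasCompactSupport f) {ε : ℝ} (hε : 0 < ε) :
    ∃ D : ℝ, 0 ≤ D ∧ ∀ x y, ‖f y - f x‖ ≤ ε + D * ‖y - x‖ := by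
  obtain ⟨M, hM⟩ := hf.bounded_above_of_compact_support hc
  have hM₀ : 0 ≤ M := (norm_nonneg _).trans (hM 0)
  obtain ⟨δ, hδ, huc⟩ :=
    Metric.uniformContinuous_iff.1 (hc.uniformContinuous_of_continuous hf) ε hε
  refine ⟨2 * M / δ, by positivity, fun x y => ?_⟩
  rcases lt_or_ge ‖y - x‖ δ with hlt | hge
  · have hclose := huc (a := y) (b := x) (by rwa [dist_eq_norm])
    rw [dist_eq_norm] at hclose
    have : 0 ≤ 2 * M / δ * ‖y - x‖ := by positivity
    linarith
  · calc ‖f y - f x‖ ≤ ‖f y‖ + ‖f x‖ := norm_sub_le _ _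
      _ ≤ 2 * M / δ * δ := by rw [div_mul_cancel₀ _ hδ.ne']; linarith [hM x, hM y]
      _ ≤ 2 * M / δ * ‖y - x‖ := by gcongr
      _ ≤ ε + 2 * M / δ * ‖y - x‖ := by linarith

section Taylor

variable {E G : Type*} [NormedAddCommGroup E] [NormedSpace ℝ E] [NormedAddCommGroup G]
  [NormedSpace ℝ G]

lemma norm_sub_taylor_two_le {F : E → G} (hF : ContDiff ℝ 2 F) (x k : E) {η : ℝ}
    (hη : ∀ y ∈ segment ℝ x (x + k),
      ‖fderiv ℝ (fderiv ℝ F) y - fderiv ℝ (fderiv ℝ F) x‖ ≤ η) :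
    ‖F (x + k) - F x - fderiv ℝ F x k - (1 / 2 : ℝ) • fderiv ℝ (fderiv ℝ F) x k k‖ ≤
      η * ‖k‖ ^ 2 := by
  set q := fderiv ℝ (fderiv ℝ F) x
  have hsymm : ∀ u v, q u v = q v u :=
    hF.contDiffAt.isSymmSndFDerivAt (by simp)
  have hx := left_mem_segment ℝ x (x + k)
  have hη₀ : 0 ≤ η :=
    (norm_nonneg (fderiv ℝ (fderiv ℝ F) x - q)).trans (hη x hx)
  have hF₁ : ∀ y, HasFDerivAt F (fderiv ℝ F y) y := fun y =>
    (hF.differentiable (by norm_num) y).hasFDerivAt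
  have hF₂ : ∀ y ∈ segment ℝ x (x + k), ‖fderiv ℝ F y - q (y - x) - fderiv ℝ F x‖ ≤ η * ‖k‖ := by
    intro y hy
    have hyx : ‖y - x‖ ≤ ‖k‖ := by simpa using norm_sub_le_of_mem_segment hy
    rw [sub_right_comm]
    refine ((convex_segment x (x + k)).norm_image_sub_le_of_norm_fderiv_le' (fun z _ =>
      (hF.fderiv_right (m := 1) (by norm_num)).differentiable (by norm_num) z) hη hx hy).trans ?_
    gcongr
  have hquad : ∀ y, HasFDerivAt (fun y => F y - (1 / 2 : ℝ) • q (y - x) (y - x))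
      (fderiv ℝ F y - q (y - x)) y := by
    intro y
    have hsub := (hasFDerivAt_id (𝕜 := ℝ) y).sub_const x
    refine ((hF₁ y).sub (((q.hasFDerivAt.comp y hsub).clm_apply hsub).const_smul
      (1 / 2 : ℝ))).congr_fderiv ?_
    ext v
    simp [hsymm v]
    module
  have hmean := (convex_segment x (x + k)).norm_image_sub_le_of_norm_hasFDerivWithin_le'
    (fun y _ => (hquad y).hasFDerivWithinAt) hF₂ hx (right_mem_segment ℝ x (x + k))
  simp only [add_sub_cancel_left, sub_self, map_zero, smul_zero, sub_zero] at hmean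
  calc _ = ‖F (x + k) - (1 / 2 : ℝ) • q k k - F x - fderiv ℝ F x k‖ := by congr 1; abel
    _ ≤ η * ‖k‖ * ‖k‖ := hmean
    _ = η * ‖k‖ ^ 2 := by ring

lemma exists_norm_sub_taylor_two_le {F : E → G} (hF : ContDiff ℝ 2 F)
    (hc : HasCompactSupport (fderiv ℝ F)) {ε : ℝ} (hε : 0 < ε) :
    ∃ D : ℝ, 0 ≤ D ∧ ∀ x k,
      ‖F (x + k) - F x - fderiv ℝ F x k - (1 / 2 : ℝ) • fderiv ℝ (fderiv ℝ F) x k k‖ ≤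
        (ε + D * ‖k‖) * ‖k‖ ^ 2 := by
  obtain ⟨D, hD, hosc⟩ := exists_norm_sub_le_add_mul_norm_sub
    ((hF.fderiv_right (m := 1) (by norm_num)).continuous_fderiv (by norm_num)) (hc.fderiv ℝ) hε
  refine ⟨D, hD, fun x k => norm_sub_taylor_two_le hF x k fun y hy => (hosc x y).trans ?_⟩
  have hyx : ‖y - x‖ ≤ ‖k‖ := by simpa using norm_sub_le_of_mem_segment hy
  gcongr

lemma norm_smul_add_sqrt_smul_le {r : ℝ} (hr : 0 ≤ r) {v : E} (hv : r * ‖v‖ ^ 2 ≤ 1) (w : E) :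
    ‖r • v + √r • w‖ ≤ √r * (1 + ‖w‖) := by
  have hsq : (√r * ‖v‖) ^ 2 ≤ 1 := by rwa [mul_pow, Real.sq_sqrt hr]
  have hle : √r * ‖v‖ ≤ 1 := (sq_le_one_iff₀ (by positivity)).1 hsq
  calc ‖r • v + √r • w‖ ≤ ‖r • v‖ + ‖√r • w‖ := norm_add_le _ _
    _ = √r * (√r * ‖v‖) + √r * ‖w‖ := by
        rw [norm_smul, norm_smul, Real.norm_of_nonneg hr, Real.norm_of_nonneg (Real.sqrt_nonneg r),
          ← mul_assoc, Real.mul_self_sqrt hr]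
    _ ≤ √r * 1 + √r * ‖w‖ := by gcongr
    _ = √r * (1 + ‖w‖) := by ring

lemma quadratic_mul_eq {r : ℝ} (hr : 0 ≤ r) (c g : ℝ) (ℓ : E →L[ℝ] ℝ) (q : E →L[ℝ] E →L[ℝ] ℝ)
    (v w : E) :
    (c + ℓ (r • v + √r • w) + 1 / 2 * q (r • v + √r • w) (r • v + √r • w)) * g =
      (c + r * ℓ v + r ^ 2 / 2 * q v v) * g +
        (√r • ℓ + (r * √r / 2) • (q v + q.flip v)) w * g + r / 2 * (q w w * g) := by
  have hs : r / 2 * (q w w * g) = √r * √r / 2 * (q w w * g) := by rw [Real.mul_self_sqrt hr]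
  rw [hs]
  simp only [map_add, map_smul, add_apply, smul_apply, smul_eq_mul,
    ContinuousLinearMap.flip_apply]
  ring

end Taylor

section Generator

variable {E : Type*} [NormedAddCommGroup E] [InnerProductSpace ℝ E] [FiniteDimensional ℝ E]

/-- The value at `x` of the diffusion operator `φ ↦ trace (B D²φ) + ⟨v, ∇φ⟩`, for a diffusion matrix
and a drift frozen at `B` and `v`. The trace is computed in a fixed orthonormal basis. -/
def generator (B : E →L[ℝ] E) (v : E) (φ : E → ℝ) (x : E) : ℝ :=
  fderiv ℝ φ x v + ∑ i, fderiv ℝ (fderiv ℝ φ) x (B (stdOrthonormalBasis ℝ E i))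
    (stdOrthonormalBasis ℝ E i)

variable [MeasurableSpace E] [BorelSpace E]

namespace IsElliptic

variable {Λ : ℝ} {B : E →L[ℝ] E}

lemma integrable_quadratic_mul_gauss (h : IsElliptic Λ B) {r : ℝ} (hr : 0 ≤ r) (c : ℝ)
    (ℓ : E →L[ℝ] ℝ) (q : E →L[ℝ] E →L[ℝ] ℝ) (v : E) :
    Integrable fun w => (c + ℓ (r • v + √r • w) +
      1 / 2 * q (r • v + √r • w) (r • v + √r • w)) * gauss B w := by
  simp_rw [quadratic_mul_eq hr]
  exact ((h.integrable_gauss.const_mul _).add (h.integrable_clm_mul_gauss _)).add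
    ((h.integrable_bilin_mul_gauss q).const_mul _)

lemma integral_quadratic_mul_gauss (h : IsElliptic Λ B) {r : ℝ} (hr : 0 ≤ r) (c : ℝ)
    (ℓ : E →L[ℝ] ℝ) (q : E →L[ℝ] E →L[ℝ] ℝ) (v : E) {ι : Type*} [Fintype ι]
    (e : OrthonormalBasis ι ℝ E) :
    ∫ w, (c + ℓ (r • v + √r • w) + 1 / 2 * q (r • v + √r • w) (r • v + √r • w)) * gauss B w =
      c + r * (ℓ v + ∑ i, q (B (e i)) (e i)) + r ^ 2 / 2 * q v v := by
  simp_rw [quadratic_mul_eq hr]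
  rw [integral_add (by exact (h.integrable_gauss.const_mul _).add (h.integrable_clm_mul_gauss _))
    ((h.integrable_bilin_mul_gauss q).const_mul _), integral_add (h.integrable_gauss.const_mul _)
    (h.integrable_clm_mul_gauss _), integral_const_mul, integral_const_mul, h.integral_gauss,
    integral_clm_mul_gauss, h.integral_bilin_mul_gauss e]
  ring

lemma abs_integral_gauss_sub_generator_le (h : IsElliptic Λ B) {F : E → ℝ} (hF : Continuous F)
    {x v : E} {ε D r : ℝ} (hε : 0 ≤ ε) (hD : 0 ≤ D) (hr : 0 ≤ r) (hv : r * ‖v‖ ^ 2 ≤ 1)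
    (hTaylor : ∀ k,
      ‖F (x + k) - F x - fderiv ℝ F x k - (1 / 2 : ℝ) • fderiv ℝ (fderiv ℝ F) x k k‖ ≤
        (ε + D * ‖k‖) * ‖k‖ ^ 2) :
    |(∫ w, F (x + (r • v + √r • w)) * gauss B w) - F x - r * generator B v F x| ≤
      r ^ 2 / 2 * |fderiv ℝ (fderiv ℝ F) x v v| +
        r * (ε + D * √r) * ∫ w, (1 + ‖w‖) ^ 3 * gauss B w := by
  set q := fderiv ℝ (fderiv ℝ F) x with hq
  let P : E → ℝ := fun k => F x + fderiv ℝ F x k + 1 / 2 * q k k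
  have hrem : ∀ w, |F (x + (r • v + √r • w)) - P (r • v + √r • w)| ≤
      r * (ε + D * √r) * (1 + ‖w‖) ^ 3 := by
    intro w
    have hk := norm_smul_add_sqrt_smul_le hr hv w
    have hw := norm_nonneg w
    calc |F (x + (r • v + √r • w)) - P (r • v + √r • w)|
        ≤ (ε + D * ‖r • v + √r • w‖) * ‖r • v + √r • w‖ ^ 2 := by
          simpa only [P, Real.norm_eq_abs, smul_eq_mul, sub_sub, add_assoc]
            using hTaylor (r • v + √r • w)
      _ ≤ (ε + D * (√r * (1 + ‖w‖))) * (√r * (1 + ‖w‖)) ^ 2 := by gcongr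
      _ = √r ^ 2 * (ε + D * √r * (1 + ‖w‖)) * (1 + ‖w‖) ^ 2 := by ring
      _ ≤ √r ^ 2 * (ε * (1 + ‖w‖) + D * √r * (1 + ‖w‖)) * (1 + ‖w‖) ^ 2 := by
          gcongr
          nlinarith
      _ = r * (ε + D * √r) * (1 + ‖w‖) ^ 3 := by
          rw [Real.sq_sqrt hr]
          ring
  have hPint : Integrable fun w => P (r • v + √r • w) * gauss B w :=
    h.integrable_quadratic_mul_gauss hr (F x) (fderiv ℝ F x) q v
  have hRint : Integrable fun w =>
      (F (x + (r • v + √r • w)) - P (r • v + √r • w)) * gauss B w :=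
    h.integrable_mul_gauss (by fun_prop) hrem
  have hsplit : ∫ w, F (x + (r • v + √r • w)) * gauss B w =
      (∫ w, P (r • v + √r • w) * gauss B w) +
        ∫ w, (F (x + (r • v + √r • w)) - P (r • v + √r • w)) * gauss B w := by
    rw [← integral_add hPint hRint]
    exact integral_congr_ae (Eventually.of_forall fun w => by ring)
  rw [hsplit, h.integral_quadratic_mul_gauss hr _ _ _ _ (stdOrthonormalBasis ℝ E)]
  calc _ = |r ^ 2 / 2 * q v v +
        ∫ w, (F (x + (r • v + √r • w)) - P (r • v + √r • w)) * gauss B w| := by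
        congr 1
        rw [generator, ← hq]
        ring
    _ ≤ _ := (abs_add_le _ _).trans (add_le_add (by rw [abs_mul, abs_of_nonneg (by positivity)])
        (h.abs_integral_mul_gauss_le hrem))

end IsElliptic

lemma exists_abs_integral_gauss_sub_generator_le {F : E → ℝ} (hF : ContDiff ℝ 2 F)
    (hc : HasCompactSupport (fderiv ℝ F)) {Λ : ℝ} (hΛ : 0 < Λ) {ε : ℝ} (hε : 0 < ε) :
    ∃ κ : ℝ, 0 < κ ∧ ∀ r, 0 < r → r ≤ κ → ∀ B : E →L[ℝ] E, IsElliptic Λ B →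
      ∀ x v : E, r * ‖v‖ ^ 2 ≤ κ →
        |(∫ w, F (x + (r • v + √r • w)) * gauss B w) - F x - r * generator B v F x| ≤ ε * r := by
  obtain ⟨J, hJ, hmoment⟩ := exists_integral_one_add_norm_pow_mul_gauss_le (E := E) hΛ 3
  obtain ⟨D, hD, hTaylor⟩ := exists_norm_sub_taylor_two_le hF hc (ε := ε / (2 * J)) (by positivity)
  obtain ⟨M, hM⟩ := ((hF.fderiv_right (m := 1) (by norm_num)).continuous_fderiv
    (by norm_num)).bounded_above_of_compact_support (hc.fderiv ℝ)
  have hM₀ : 0 ≤ M := (norm_nonneg _).trans (hM 0)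
  have hsmall : ∀ᶠ κ in 𝓝[>] (0 : ℝ), κ ≤ 1 ∧ M / 2 * κ + D * √κ * J ≤ ε / 2 := by
    have hcont : Tendsto (fun κ => M / 2 * κ + D * √κ * J) (𝓝[>] 0) (𝓝 0) := by
      have : Continuous fun κ => M / 2 * κ + D * √κ * J := by fun_prop
      simpa using (this.tendsto 0).mono_left nhdsWithin_le_nhds
    exact ((tendsto_id.mono_left nhdsWithin_le_nhds).eventually_le_const one_pos).and
      (hcont.eventually_le_const (half_pos hε))
  obtain ⟨κ, ⟨hκ₁, hκ⟩, hκ₀⟩ := (hsmall.and self_mem_nhdsWithin).exists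
  refine ⟨κ, hκ₀, fun r hr hrκ B hB x v hv => ?_⟩
  have hquad : |fderiv ℝ (fderiv ℝ F) x v v| ≤ M * ‖v‖ ^ 2 := by
    rw [pow_two, ← mul_assoc]
    exact ((fderiv ℝ (fderiv ℝ F) x).le_opNorm₂ v v).trans (by gcongr; exact hM x)
  calc _ ≤ r ^ 2 / 2 * |fderiv ℝ (fderiv ℝ F) x v v| +
        r * (ε / (2 * J) + D * √r) * ∫ w, (1 + ‖w‖) ^ 3 * gauss B w :=
        hB.abs_integral_gauss_sub_generator_le hF.continuous (by positivity) hD hr.le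
          (hv.trans hκ₁) (hTaylor x)
    _ ≤ r ^ 2 / 2 * (M * ‖v‖ ^ 2) + r * (ε / (2 * J) + D * √r) * J := by
        gcongr
        exact hmoment B hB
    _ = r * (M / 2 * (r * ‖v‖ ^ 2) + D * √r * J + ε / 2) := by
        field_simp
        ring
    _ ≤ r * (M / 2 * κ + D * √κ * J + ε / 2) := by gcongr
    _ ≤ ε * r := by nlinarith

end Generator

/-! ### The parametrix smoothing operators -/

section Smoothing

variable {E : Type*} [NormedAddCommGroup E] [InnerProductSpace ℝ E]

/-- The isotropic Gaussian profile at time `r`, normalised so that its integral does not depend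
on `r`. -/
def gaussProfile (c r : ℝ) (z : E) : ℝ :=
  (√r ^ Module.finrank ℝ E)⁻¹ * exp (-(c * ‖(√r)⁻¹ • z‖ ^ 2))

lemma gaussProfile_nonneg (c r : ℝ) (z : E) : 0 ≤ gaussProfile c r z := by
  unfold gaussProfile
  positivity

lemma norm_mul_gaussProfile (c : ℝ) {r : ℝ} (hr : 0 < r) (z : E) :
    ‖z‖ * gaussProfile c r z = ((√r ^ Module.finrank ℝ E)⁻¹ * √r) *
      (‖(√r)⁻¹ • z‖ * exp (-(c * ‖(√r)⁻¹ • z‖ ^ 2))) := by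
  simp only [gaussProfile, norm_smul, norm_inv, Real.norm_of_nonneg (sqrt_nonneg r)]
  field_simp

section FiniteDimensional

variable [FiniteDimensional ℝ E] [MeasurableSpace E] [BorelSpace E]

lemma integrable_gaussProfile {c r : ℝ} (hc : 0 < c) (hr : 0 < r) :
    Integrable (gaussProfile (E := E) c r) :=
  ((integrable_comp_smul_iff volume _ (inv_ne_zero (Real.sqrt_pos.2 hr).ne')).2
    (integrable_exp_neg_mul_sq_norm hc)).const_mul _

lemma integrable_norm_mul_gaussProfile {c r : ℝ} (hc : 0 < c) (hr : 0 < r) :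
    Integrable fun z : E => ‖z‖ * gaussProfile c r z := by
  have hone : Integrable fun w : E => ‖w‖ * exp (-(c * ‖w‖ ^ 2)) := by
    refine (integrable_one_add_norm_pow_mul_exp hc 1).mono' (by fun_prop)
      (Eventually.of_forall fun w => ?_)
    rw [Real.norm_of_nonneg (by positivity), pow_one]
    gcongr
    linarith
  simp_rw [norm_mul_gaussProfile c hr]
  exact ((integrable_comp_smul_iff volume _ (inv_ne_zero (Real.sqrt_pos.2 hr).ne')).2
    hone).const_mul _

lemma integral_gaussProfile (c : ℝ) {r : ℝ} (hr : 0 < r) :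
    ∫ z : E, gaussProfile c r z = ∫ w : E, exp (-(c * ‖w‖ ^ 2)) := by
  have hs := Real.sqrt_pos.2 hr
  unfold gaussProfile
  rw [integral_const_mul, Measure.integral_comp_inv_smul_of_nonneg volume
    (fun w : E => exp (-(c * ‖w‖ ^ 2))) hs.le, smul_eq_mul, inv_mul_cancel_left₀ (by positivity)]

lemma integral_norm_mul_gaussProfile (c : ℝ) {r : ℝ} (hr : 0 < r) :
    ∫ z : E, ‖z‖ * gaussProfile c r z = √r * ∫ w : E, ‖w‖ * exp (-(c * ‖w‖ ^ 2)) := by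
  have hs := Real.sqrt_pos.2 hr
  simp_rw [norm_mul_gaussProfile c hr]
  rw [integral_const_mul, Measure.integral_comp_inv_smul_of_nonneg volume
    (fun w : E => ‖w‖ * exp (-(c * ‖w‖ ^ 2))) hs.le, smul_eq_mul, mul_assoc,
    mul_left_comm √r, inv_mul_cancel_left₀ (by positivity)]

lemma exists_gauss_smul_le {Λ : ℝ} (hΛ : 0 < Λ) :
    ∃ C : ℝ, 0 < C ∧ ∀ r, 0 < r → ∀ B : E →L[ℝ] E, IsElliptic Λ B → ∀ z,
      gauss (r • B) z ≤ C * gaussProfile (16 * Λ)⁻¹ r z := by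
  obtain ⟨C, hC, hle⟩ := exists_gauss_le (E := E) hΛ
  refine ⟨C, hC, fun r hr B hB z => ?_⟩
  rw [hB.gauss_smul hr, gaussProfile, mul_left_comm C]
  gcongr
  exact hle B hB _

lemma exists_abs_gauss_smul_sub_le {Λ : ℝ} (hΛ : 0 < Λ) :
    ∃ C : ℝ, 0 < C ∧ ∀ r, 0 < r → ∀ B B' : E →L[ℝ] E, IsElliptic Λ B → IsElliptic Λ B' →
      ∀ z z', ‖z - z'‖ ≤ √r → |gauss (r • B) z - gauss (r • B') z'| ≤
        C * (‖B - B'‖ + ‖z - z'‖ / √r) * gaussProfile (16 * Λ)⁻¹ r z := by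
  obtain ⟨C, hC, hle⟩ := exists_abs_gauss_sub_le (E := E) hΛ
  refine ⟨C, hC, fun r hr B B' hB hB' z z' hz => ?_⟩
  have hs := Real.sqrt_pos.2 hr
  have hscale : ‖(√r)⁻¹ • z - (√r)⁻¹ • z'‖ = ‖z - z'‖ / √r := by
    rw [← smul_sub, norm_smul, norm_inv, Real.norm_of_nonneg hs.le, div_eq_inv_mul]
  have hunit := hle B B' hB hB' ((√r)⁻¹ • z) ((√r)⁻¹ • z') (by rwa [hscale, div_le_one hs])
  rw [hscale] at hunit
  rw [hB.gauss_smul hr, hB'.gauss_smul hr, ← mul_sub, abs_mul, abs_of_pos (by positivity),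
    gaussProfile, mul_left_comm]
  gcongr

lemma continuous_gauss_comp {X : Type*} [TopologicalSpace X] {Λ : ℝ} {B : X → E →L[ℝ] E}
    {z : X → E} (hB : Continuous B) (hz : Continuous z) (hE : ∀ p, IsElliptic Λ (B p)) :
    Continuous fun p => gauss (B p) (z p) := by
  rw [continuous_iff_continuousAt]
  intro p
  obtain ⟨C, hC, hle⟩ := exists_abs_gauss_sub_le (E := E) (hE p).pos
  rw [ContinuousAt, tendsto_iff_dist_tendsto_zero]
  have hlim : Tendsto (fun q => C * (‖B p - B q‖ + ‖z p - z q‖)) (𝓝 p) (𝓝 0) :=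
    (by fun_prop : Continuous fun q => C * (‖B p - B q‖ + ‖z p - z q‖)).tendsto' p 0 (by simp)
  have hnear : ∀ᶠ q in 𝓝 p, ‖z p - z q‖ ≤ 1 :=
    ((by fun_prop : Continuous fun q => ‖z p - z q‖).tendsto' p 0
      (by simp)).eventually_le_const one_pos
  refine squeeze_zero' (Eventually.of_forall fun _ => dist_nonneg) ?_ hlim
  filter_upwards [hnear] with q hq
  have hΛ := (hE p).pos
  rw [dist_comm, Real.dist_eq]
  refine (hle (B p) (B q) (hE p) (hE q) (z p) (z q) hq).trans
    (mul_le_of_le_one_right (by positivity) (exp_le_one_iff.2 (neg_nonpos.2 (by positivity))))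

/-- The parametrix smoothing operator at time `τ`: its kernel at `(x, y)` is the Gaussian density
of `x - y` at time `τ`, with the covariance frozen at `y`. -/
def smoothOp (a : E → E →L[ℝ] E) (τ : ℝ) (f : E → ℝ) (x : E) : ℝ :=
  ∫ y, gauss (τ • a y) (x - y) * f y

section Kernel

variable {Λ : ℝ} {a : E → E →L[ℝ] E} {τ : ℝ} {f : E → ℝ}

lemma continuous_gauss_smul_sub (ha : ∀ x, IsElliptic Λ (a x)) (hac : Continuous a)
    (hτ : 0 < τ) : Continuous fun p : E × E => gauss (τ • a p.2) (p.1 - p.2) :=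
  continuous_gauss_comp (by fun_prop) (by fun_prop) fun p => (ha p.2).smul hτ

lemma measurable_smoothOp (ha : ∀ x, IsElliptic Λ (a x)) (hac : Continuous a) (hτ : 0 < τ)
    (hf : Measurable f) : Measurable (smoothOp a τ f) :=
  ((continuous_gauss_smul_sub ha hac hτ).measurable.mul
    (hf.comp measurable_snd)).stronglyMeasurable.integral_prod_right.measurable

lemma exists_norm_gauss_smul_mul_le (ha : ∀ x, IsElliptic Λ (a x)) :
    ∃ C : ℝ, 0 < C ∧ ∀ f : E → ℝ, (∀ x, |f x| ≤ 1) → ∀ τ, 0 < τ → ∀ x y,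
      ‖gauss (τ • a y) (x - y) * f y‖ ≤ C * gaussProfile (16 * Λ)⁻¹ τ (x - y) := by
  obtain ⟨C, hC, hle⟩ := exists_gauss_smul_le (E := E) (ha 0).pos
  refine ⟨C, hC, fun f hf1 τ hτ x y => ?_⟩
  rw [norm_mul, Real.norm_of_nonneg (gauss_nonneg _ _), Real.norm_eq_abs]
  exact (mul_le_of_le_one_right (gauss_nonneg _ _) (hf1 y)).trans (hle τ hτ (a y) (ha y) _)

lemma integrable_gauss_smul_sub_mul (ha : ∀ x, IsElliptic Λ (a x)) (hac : Continuous a)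
    (hτ : 0 < τ) (hf : Measurable f) (hf1 : ∀ x, |f x| ≤ 1) (x : E) :
    Integrable fun y => gauss (τ • a y) (x - y) * f y := by
  have hΛ := (ha 0).pos
  obtain ⟨C, -, hle⟩ := exists_norm_gauss_smul_mul_le ha
  exact (((integrable_gaussProfile (by positivity) hτ).comp_sub_left x).const_mul C).mono'
    (((continuous_gauss_smul_sub ha hac hτ).measurable.comp measurable_prodMk_left).mul
      hf).aestronglyMeasurable (Eventually.of_forall (hle f hf1 τ hτ x))

lemma exists_integral_norm_gauss_smul_mul_le (ha : ∀ x, IsElliptic Λ (a x)) :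
    ∃ C : ℝ, 0 < C ∧ ∀ f : E → ℝ, (∀ x, |f x| ≤ 1) → ∀ τ : ℝ, 0 < τ → ∀ x,
      ∫ y, ‖gauss (τ • a y) (x - y) * f y‖ ≤ C := by
  have hΛ := (ha 0).pos
  obtain ⟨C, hC, hle⟩ := exists_norm_gauss_smul_mul_le ha
  have hmass := integral_exp_pos
    (integrable_exp_neg_mul_sq_norm (E := E) (c := (16 * Λ)⁻¹) (by positivity))
  refine ⟨C * ∫ w : E, exp (-((16 * Λ)⁻¹ * ‖w‖ ^ 2)), by positivity, fun f hf1 τ hτ x => ?_⟩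
  rw [← integral_gaussProfile _ hτ, ← integral_sub_left_eq_self (gaussProfile _ τ) volume x,
    ← integral_const_mul]
  exact integral_mono_of_nonneg (Eventually.of_forall fun _ => norm_nonneg _)
    (((integrable_gaussProfile (by positivity) hτ).comp_sub_left x).const_mul C)
    (Eventually.of_forall (hle f hf1 τ hτ x))

section Fubini

variable {Ω : Type*} [MeasurableSpace Ω] {κ : Measure Ω} {g : Ω → ℝ} {p : Ω → E}

lemma integrable_prod_mul_gauss_smul_mul (ha : ∀ x, IsElliptic Λ (a x)) (hac : Continuous a)
    (hτ : 0 < τ) (hf : Measurable f) (hf1 : ∀ x, |f x| ≤ 1) (hg : Integrable g κ)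
    (hp : Measurable p) :
    Integrable (fun q : Ω × E => g q.1 * (gauss (τ • a q.2) (p q.1 - q.2) * f q.2))
      (κ.prod volume) := by
  obtain ⟨C, -, hle⟩ := exists_integral_norm_gauss_smul_mul_le ha
  have hmeas : AEStronglyMeasurable
      (fun q : Ω × E => g q.1 * (gauss (τ • a q.2) (p q.1 - q.2) * f q.2)) (κ.prod volume) :=
    hg.aestronglyMeasurable.comp_fst.mul
      (((continuous_gauss_smul_sub ha hac hτ).measurable.comp
        ((hp.comp measurable_fst).prodMk measurable_snd)).mul
          (hf.comp measurable_snd)).aestronglyMeasurable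
  rw [integrable_prod_iff hmeas]
  refine ⟨Eventually.of_forall fun ω =>
    (integrable_gauss_smul_sub_mul ha hac hτ hf hf1 (p ω)).const_mul (g ω), ?_⟩
  refine (hg.norm.mul_const C).mono' hmeas.norm.integral_prod_right'
    (Eventually.of_forall fun ω => ?_)
  rw [Real.norm_of_nonneg (integral_nonneg fun _ => norm_nonneg _)]
  simp only [norm_mul (g ω), integral_const_mul]
  exact mul_le_mul_of_nonneg_left (hle f hf1 τ hτ (p ω)) (norm_nonneg _)

lemma integral_mul_smoothOp [SFinite κ] (ha : ∀ x, IsElliptic Λ (a x)) (hac : Continuous a)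
    (hτ : 0 < τ) (hf : Measurable f) (hf1 : ∀ x, |f x| ≤ 1) (hg : Integrable g κ)
    (hp : Measurable p) :
    ∫ ω, g ω * smoothOp a τ f (p ω) ∂κ =
      ∫ y, (∫ ω, g ω * gauss (τ • a y) (p ω - y) ∂κ) * f y := by
  have hswap := integral_integral_swap
    (f := fun ω y => g ω * (gauss (τ • a y) (p ω - y) * f y))
    (integrable_prod_mul_gauss_smul_mul ha hac hτ hf hf1 hg hp)
  simp only [integral_const_mul] at hswap
  refine hswap.trans ?_
  simp only [← mul_assoc, integral_mul_const]

end Fubini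

lemma exists_abs_smoothOp_le (ha : ∀ x, IsElliptic Λ (a x)) :
    ∃ C : ℝ, 0 < C ∧ ∀ f : E → ℝ, (∀ x, |f x| ≤ 1) → ∀ τ, 0 < τ → ∀ x,
      |smoothOp a τ f x| ≤ C := by
  obtain ⟨C, hC, hle⟩ := exists_integral_norm_gauss_smul_mul_le ha
  exact ⟨C, hC, fun f hf1 τ hτ x => (norm_integral_le_integral_norm _).trans (hle f hf1 τ hτ x)⟩

lemma exists_abs_gauss_smul_sub_gauss_smul_le (ha : ∀ x, IsElliptic Λ (a x)) :
    ∃ C c : ℝ, 0 < C ∧ 0 < c ∧ ∀ τ τ', 0 < τ → τ ≤ τ' → τ' ≤ 2 * τ → ∀ y z,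
      |gauss (τ' • a y) z - gauss (τ • a y) z| ≤
        C * ((τ' - τ) / τ) * gaussProfile c τ z := by
  have hΛ := (ha 0).pos
  obtain ⟨C, hC, hle⟩ := exists_abs_gauss_smul_sub_le (E := E) (Λ := 3 * Λ) (by positivity)
  refine ⟨C * Λ, (16 * (3 * Λ))⁻¹, by positivity, by positivity,
    fun τ τ' hτ hττ' hτ' y z => ?_⟩
  have hratio : 1 ≤ τ' / τ := by rwa [one_le_div hτ]
  have hratio' : τ' / τ ≤ 2 := by rwa [div_le_iff₀ hτ]
  have hell : IsElliptic (3 * Λ) ((τ' / τ) • a y) :=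
    ((ha y).smul (by positivity)).mono (by nlinarith [inv_le_one_of_one_le₀ hratio])
  have hnorm : ‖(τ' / τ) • a y - a y‖ ≤ Λ * ((τ' - τ) / τ) := by
    rw [show (τ' / τ) • a y - a y = (τ' / τ - 1) • a y by module, norm_smul,
      Real.norm_of_nonneg (by linarith), div_sub_one hτ.ne', mul_comm]
    exact mul_le_mul_of_nonneg_right (ha y).norm_le (div_nonneg (by linarith) hτ.le)
  have hdiff := hle τ hτ _ _ hell ((ha y).mono (by linarith)) z z (by simp)
  rw [smul_smul, mul_div_cancel₀ _ hτ.ne'] at hdiff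
  refine hdiff.trans (mul_le_mul_of_nonneg_right ?_ (gaussProfile_nonneg _ _ _))
  simp only [sub_self, norm_zero, zero_div, add_zero, mul_assoc]
  gcongr

lemma exists_abs_smoothOp_sub_le (ha : ∀ x, IsElliptic Λ (a x)) (hac : Continuous a) :
    ∃ C : ℝ, 0 < C ∧ ∀ f : E → ℝ, Measurable f → (∀ x, |f x| ≤ 1) →
      ∀ τ τ', 0 < τ → τ ≤ τ' → τ' ≤ 2 * τ → ∀ x,
        |smoothOp a τ' f x - smoothOp a τ f x| ≤ C * ((τ' - τ) / τ) := by
  obtain ⟨C, c, hC, hc, hle⟩ := exists_abs_gauss_smul_sub_gauss_smul_le ha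
  have hmass := integral_exp_pos (integrable_exp_neg_mul_sq_norm (E := E) hc)
  refine ⟨C * ∫ w : E, exp (-(c * ‖w‖ ^ 2)), by positivity,
    fun f hf hf1 τ τ' hτ hττ' hτ' x => ?_⟩
  rw [smoothOp, smoothOp, ← integral_sub
    (integrable_gauss_smul_sub_mul ha hac (hτ.trans_le hττ') hf hf1 x)
    (integrable_gauss_smul_sub_mul ha hac hτ hf hf1 x), ← Real.norm_eq_abs, mul_right_comm,
    ← integral_gaussProfile c hτ, ← integral_sub_left_eq_self (gaussProfile c τ) volume x,
    ← integral_const_mul]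
  refine norm_integral_le_of_norm_le
    (((integrable_gaussProfile hc hτ).comp_sub_left x).const_mul _)
    (Eventually.of_forall fun y => ?_)
  rw [← sub_mul, norm_mul, Real.norm_eq_abs, Real.norm_eq_abs]
  exact (mul_le_of_le_one_right (abs_nonneg _) (hf1 y)).trans (hle τ τ' hτ hττ' hτ' y (x - y))

end Kernel

end FiniteDimensional

end Smoothing

/-! ### One Euler step against the smoothing operators -/

section EulerStep

variable {E : Type*} [NormedAddCommGroup E] [InnerProductSpace ℝ E] [FiniteDimensional ℝ E]
  [MeasurableSpace E] [BorelSpace E]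

/-- The smoothing operators, extended by the identity at time `0`. -/
def flowOp (a : E → E →L[ℝ] E) (τ : ℝ) (f : E → ℝ) : E → ℝ :=
  if τ = 0 then f else smoothOp a τ f

/-- The transition operator of one Euler step of length `h` for the diffusion with generator
`φ ↦ trace (a D²φ) + ⟨β, ∇φ⟩`. -/
def eulerOp (a : E → E →L[ℝ] E) (h : ℝ) (β : E → E) (f : E → ℝ) (x : E) : ℝ :=
  ∫ w, f (x + (h • β x + √h • w)) * gauss (a x) w

variable {Λ : ℝ} {a : E → E →L[ℝ] E}

lemma flowOp_zero (f : E → ℝ) : flowOp a 0 f = f := if_pos rfl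

lemma flowOp_of_pos {τ : ℝ} (hτ : 0 < τ) (f : E → ℝ) : flowOp a τ f = smoothOp a τ f :=
  if_neg hτ.ne'

lemma measurable_flowOp (ha : ∀ x, IsElliptic Λ (a x)) (hac : Continuous a) {τ : ℝ}
    (hτ : 0 ≤ τ) {f : E → ℝ} (hf : Measurable f) : Measurable (flowOp a τ f) := by
  rcases hτ.eq_or_lt with rfl | hτ
  · rwa [flowOp_zero]
  · rw [flowOp_of_pos hτ]
    exact measurable_smoothOp ha hac hτ hf

lemma eulerOp_eq_integral_gauss_smul (ha : ∀ x, IsElliptic Λ (a x)) {h : ℝ} (hh : 0 < h)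
    (β : E → E) (f : E → ℝ) (x : E) :
    eulerOp a h β f x = ∫ y, gauss (h • a x) (x + h • β x - y) * f y := by
  calc eulerOp a h β f x = ∫ z, f (x + h • β x + z) * gauss (h • a x) z := by
        rw [(ha x).integral_mul_gauss_smul hh fun z => f (x + h • β x + z)]
        simp only [eulerOp, add_assoc]
    _ = ∫ z, gauss (h • a x) z * f (x + h • β x - z) := by
        rw [← integral_neg_eq_self]
        simp only [gauss_neg, sub_eq_add_neg, mul_comm]
    _ = ∫ y, gauss (h • a x) (x + h • β x - y) * f y := by
        rw [← integral_sub_left_eq_self _ volume (x + h • β x)]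
        simp only [sub_sub_cancel]

/- The kernel of the smoothing operator is a Gaussian in the frozen point, so composing it with an
Euler step only adds covariances. -/
lemma eulerOp_smoothOp (ha : ∀ x, IsElliptic Λ (a x)) (hac : Continuous a) {τ h : ℝ}
    (hτ : 0 < τ) (hh : 0 < h) (β : E → E) {f : E → ℝ} (hf : Measurable f) (hf1 : ∀ x, |f x| ≤ 1)
    (x : E) :
    eulerOp a h β (smoothOp a τ f) x =
      ∫ y, gauss (h • a x + τ • a y) (x + h • β x - y) * f y := by
  have hswap := integral_mul_smoothOp ha hac hτ hf hf1 (κ := volume) (ha x).integrable_gauss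
    (p := fun w => x + (h • β x + √h • w)) (by fun_prop)
  simp_rw [eulerOp, mul_comm _ (gauss (a x) _)]
  rw [hswap]
  congr 1 with y
  congr 1
  have hscale := (ha x).integral_mul_gauss_smul hh
    fun z => gauss (τ • a y) (x + (h • β x + z) - y)
  simp_rw [mul_comm (gauss (a x) _)]
  rw [← hscale, ← ((ha x).smul hh).integral_gauss_mul_gauss ((ha y).smul hτ),
    ← integral_neg_eq_self]
  congr 1 with z
  rw [gauss_neg, mul_comm]
  congr 2
  abel

lemma eulerOp_flowOp (ha : ∀ x, IsElliptic Λ (a x)) (hac : Continuous a) {τ h : ℝ}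
    (hτ : 0 ≤ τ) (hh : 0 < h) (β : E → E) {f : E → ℝ} (hf : Measurable f) (hf1 : ∀ x, |f x| ≤ 1)
    (x : E) :
    eulerOp a h β (flowOp a τ f) x =
      ∫ y, gauss (h • a x + τ • a y) (x + h • β x - y) * f y := by
  rcases hτ.eq_or_lt with rfl | hτ
  · simp only [flowOp_zero, zero_smul, add_zero]
    exact eulerOp_eq_integral_gauss_smul ha hh β f x
  · rw [flowOp_of_pos hτ]
    exact eulerOp_smoothOp ha hac hτ hh β hf hf1 x

lemma exists_abs_gauss_add_sub_le {K : ℝ≥0} (ha : ∀ x, IsElliptic Λ (a x))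
    (haL : LipschitzWith K a) :
    ∃ C : ℝ, 0 < C ∧ ∀ τ h, 0 ≤ τ → 0 < h → ∀ x y v : E, h * ‖v‖ ^ 2 ≤ 1 →
      |gauss (h • a x + τ • a y) (x + h • v - y) - gauss ((τ + h) • a y) (x - y)| ≤
        C * (h / √(τ + h)) * ((‖x - y‖ / √(τ + h) + ‖v‖) *
          gaussProfile (16 * Λ)⁻¹ (τ + h) (x - y)) := by
  obtain ⟨C, hC, hle⟩ := exists_abs_gauss_smul_sub_le (E := E) (ha 0).pos
  refine ⟨C * (K + 1), by positivity, fun τ h hτ hh x y v hv => ?_⟩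
  have hr : 0 < τ + h := by positivity
  set r := τ + h
  have hweights : h / r + τ / r = 1 := by rw [← add_div, add_comm h, div_self hr.ne']
  have hell : IsElliptic Λ ((h / r) • a x + (τ / r) • a y) :=
    (ha x).convexComb (ha y) (by positivity) (by positivity) hweights
  have hcov : r • ((h / r) • a x + (τ / r) • a y) = h • a x + τ • a y := by
    rw [smul_add, smul_smul, smul_smul, mul_div_cancel₀ _ hr.ne', mul_div_cancel₀ _ hr.ne']
  have hshift : ‖x - y - (x + h • v - y)‖ = h * ‖v‖ := by
    rw [show x - y - (x + h • v - y) = -(h • v) by abel, norm_neg, norm_smul,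
      Real.norm_of_nonneg hh.le]
  have hsmall : h * ‖v‖ ≤ √r := Real.le_sqrt_of_sq_le (by nlinarith)
  have hfrozen : ‖a y - ((h / r) • a x + (τ / r) • a y)‖ ≤ h / r * (K * ‖x - y‖) := by
    rw [show a y - ((h / r) • a x + (τ / r) • a y) = (h / r) • (a y - a x) by
      rw [eq_sub_of_add_eq' hweights]; module, norm_smul, Real.norm_of_nonneg (by positivity),
      norm_sub_rev]
    gcongr
    exact haL.norm_sub_le x y
  have hdiff := hle r hr (a y) _ (ha y) hell (x - y) (x + h • v - y) (by rwa [hshift])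
  rw [hcov, hshift] at hdiff
  rw [abs_sub_comm, ← mul_assoc]
  refine hdiff.trans (mul_le_mul_of_nonneg_right ?_ (gaussProfile_nonneg _ _ _))
  calc C * (‖a y - ((h / r) • a x + (τ / r) • a y)‖ + h * ‖v‖ / √r)
      ≤ C * (h / r * (K * ‖x - y‖) + h * ‖v‖ / √r) := by gcongr
    _ = C * (h / √r) * (K * (‖x - y‖ / √r) + 1 * ‖v‖) := by
        nth_rw 1 [← Real.mul_self_sqrt hr.le]
        field_simp
    _ ≤ C * (h / √r) * ((K + 1) * (‖x - y‖ / √r) + (K + 1) * ‖v‖) := by gcongr <;> simp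
    _ = C * (K + 1) * (h / √r) * (‖x - y‖ / √r + ‖v‖) := by ring

lemma integrable_norm_div_sqrt_add_mul_gaussProfile {c r : ℝ} (hc : 0 < c) (hr : 0 < r) (ρ : ℝ) :
    Integrable fun z : E => (‖z‖ / √r + ρ) * gaussProfile c r z := by
  refine (((integrable_norm_mul_gaussProfile hc hr).const_mul (√r)⁻¹).add
    ((integrable_gaussProfile hc hr).const_mul ρ)).congr (Eventually.of_forall fun z => ?_)
  simp only [Pi.add_apply]
  ring

lemma integral_norm_div_sqrt_add_mul_gaussProfile {c r : ℝ} (hc : 0 < c) (hr : 0 < r) (ρ : ℝ) :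
    ∫ z : E, (‖z‖ / √r + ρ) * gaussProfile c r z =
      (∫ w : E, ‖w‖ * exp (-(c * ‖w‖ ^ 2))) + ρ * ∫ w : E, exp (-(c * ‖w‖ ^ 2)) := by
  have hs := Real.sqrt_pos.2 hr
  simp_rw [add_mul, div_mul_eq_mul_div, div_eq_inv_mul]
  rw [integral_add ((integrable_norm_mul_gaussProfile hc hr).const_mul _)
    ((integrable_gaussProfile hc hr).const_mul _), integral_const_mul, integral_const_mul,
    integral_gaussProfile c hr, integral_norm_mul_gaussProfile c hr,
    inv_mul_cancel_left₀ hs.ne']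

/- Freezing the covariance at `y` costs `h ‖x - y‖ / (τ + h)` and the drift costs
`h ‖β‖ / √(τ + h)`; since `‖x - y‖` is of order `√(τ + h)`, both are of order `h / √(τ + h)`, which
is summable along the time grid. -/
lemma exists_abs_eulerOp_flowOp_sub_le {K : ℝ≥0} (ha : ∀ x, IsElliptic Λ (a x))
    (haL : LipschitzWith K a) :
    ∃ C : ℝ, 0 < C ∧ ∀ f : E → ℝ, Measurable f → (∀ x, |f x| ≤ 1) →
      ∀ τ h, 0 ≤ τ → 0 < h → ∀ (β : E → E) (x : E), h * ‖β x‖ ^ 2 ≤ 1 →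
        |eulerOp a h β (flowOp a τ f) x - flowOp a (τ + h) f x| ≤
          C * (h / √(τ + h)) * (1 + ‖β x‖) := by
  have hac := haL.continuous
  have hc : 0 < (16 * Λ)⁻¹ := by have := (ha 0).pos; positivity
  obtain ⟨C, hC, hle⟩ := exists_abs_gauss_add_sub_le ha haL
  set I := ∫ w : E, exp (-((16 * Λ)⁻¹ * ‖w‖ ^ 2))
  set J := ∫ w : E, ‖w‖ * exp (-((16 * Λ)⁻¹ * ‖w‖ ^ 2))
  have hI : 0 < I := integral_exp_pos (integrable_exp_neg_mul_sq_norm hc)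
  have hJ : 0 ≤ J := integral_nonneg fun w => by positivity
  refine ⟨C * (J + I), by positivity, fun f hf hf1 τ h hτ hh β x hβ => ?_⟩
  have hr : 0 < τ + h := by positivity
  have hpoint (y : E) : ‖gauss (h • a x + τ • a y) (x + h • β x - y) * f y -
      gauss ((τ + h) • a y) (x - y) * f y‖ ≤ C * (h / √(τ + h)) *
        ((‖x - y‖ / √(τ + h) + ‖β x‖) * gaussProfile (16 * Λ)⁻¹ (τ + h) (x - y)) := by
    rw [← sub_mul, norm_mul, Real.norm_eq_abs, Real.norm_eq_abs]
    exact (mul_le_of_le_one_right (abs_nonneg _) (hf1 y)).trans (hle τ h hτ hh x y (β x) hβ)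
  have hbound := ((integrable_norm_div_sqrt_add_mul_gaussProfile (E := E) hc hr
    ‖β x‖).comp_sub_left x).const_mul (C * (h / √(τ + h)))
  have hsmooth := integrable_gauss_smul_sub_mul ha hac hr hf hf1 x
  have hcont : Continuous fun y => gauss (h • a x + τ • a y) (x + h • β x - y) :=
    continuous_gauss_comp (by fun_prop) (by fun_prop)
      fun y => (ha x).smul_add_smul (ha y) hh.le hτ (by rwa [add_comm])
  have hdiff := hbound.mono' ((hcont.measurable.mul hf).aestronglyMeasurable.sub
    hsmooth.aestronglyMeasurable) (Eventually.of_forall hpoint)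
  have hstep : Integrable fun y => gauss (h • a x + τ • a y) (x + h • β x - y) * f y :=
    (hdiff.add hsmooth).congr (Eventually.of_forall fun y => sub_add_cancel _ _)
  rw [eulerOp_flowOp ha hac hτ hh β hf hf1, flowOp_of_pos hr, smoothOp,
    ← integral_sub hstep hsmooth, ← Real.norm_eq_abs]
  calc _ ≤ ∫ y, C * (h / √(τ + h)) *
        ((‖x - y‖ / √(τ + h) + ‖β x‖) * gaussProfile (16 * Λ)⁻¹ (τ + h) (x - y)) :=
        norm_integral_le_of_norm_le hbound (Eventually.of_forall hpoint)
    _ = C * (h / √(τ + h)) * (J + ‖β x‖ * I) := by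
        rw [integral_const_mul, integral_sub_left_eq_self
          (fun z => (‖z‖ / √(τ + h) + ‖β x‖) * gaussProfile (16 * Λ)⁻¹ (τ + h) z),
          integral_norm_div_sqrt_add_mul_gaussProfile hc hr]
    _ ≤ C * (h / √(τ + h)) * ((J + I) * (1 + ‖β x‖)) := by
        gcongr
        nlinarith [norm_nonneg (β x)]
    _ = _ := by ring

end EulerStep

/-! ### Total variation and weighted distances -/

section Clamp

/-- The truncation of a real number to the interval `[-R, R]`. -/
def clamp (R s : ℝ) : ℝ := max (-R) (min R s)

lemma continuous_clamp (R : ℝ) : Continuous (clamp R) := by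
  unfold clamp
  fun_prop

lemma abs_clamp_le {R : ℝ} (hR : 0 ≤ R) (s : ℝ) : |clamp R s| ≤ R :=
  abs_le.2 ⟨le_max_left _ _, max_le (by linarith) (min_le_left _ _)⟩

lemma abs_sub_clamp_le {R s : ℝ} (hs : |s| ≤ R) (t : ℝ) : |s - clamp R t| ≤ |s - t| := by
  have hself : s = clamp R s := by
    rw [clamp, min_eq_right (abs_le.1 hs).2, max_eq_right (abs_le.1 hs).1]
  nth_rw 1 [hself]
  refine (abs_max_sub_max_le_max _ _ _ _).trans (max_le (by simp) ?_)
  exact (abs_min_sub_min_le_max _ _ _ _).trans (max_le (by simp) le_rfl)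

lemma abs_sub_clamp_self_le {R s t : ℝ} (ht : 0 ≤ t) (hs : |s| ≤ R + t) :
    |s - clamp R s| ≤ t := by
  obtain ⟨hs₁, hs₂⟩ := abs_le.1 hs
  rw [clamp, abs_le]
  rcases min_cases R s with h | h <;> rcases max_cases (-R) (min R s) with h' | h' <;>
    constructor <;> linarith

end Clamp

/-- `TVLe μ σ c` says that the total variation norm of `μ - σ` is at most `c`, expressed by
testing against measurable functions with values in `[-1, 1]`. -/
def TVLe {X : Type*} [MeasurableSpace X] (μ σ : Measure X) (c : ℝ) : Prop :=
  ∀ f : X → ℝ, Measurable f → (∀ x, |f x| ≤ 1) → |(∫ x, f x ∂μ) - ∫ x, f x ∂σ| ≤ c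

/-- Convergence of `ν i` to `μ` in total variation along the filter `l`. -/
def TendstoTV {ι X : Type*} [MeasurableSpace X] (ν : ι → Measure X) (l : Filter ι)
    (μ : Measure X) : Prop :=
  ∀ δ : ℝ, 0 < δ → ∀ᶠ i in l, TVLe (ν i) μ δ

/-- `W` grows more slowly than `V`: for every `ε > 0`, it is bounded by `ε * V` up to an additive
constant. -/
def IsSubordinate {X : Type*} (W V : X → ℝ) : Prop :=
  ∀ ε : ℝ, 0 < ε → ∃ R : ℝ, 0 < R ∧ ∀ x, W x ≤ R + ε * V x

namespace TVLe

variable {X : Type*} [MeasurableSpace X] {μ σ τ : Measure X} {c c' : ℝ}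

lemma symm (h : TVLe μ σ c) : TVLe σ μ c := fun f hf hf1 => by
  rw [abs_sub_comm]
  exact h f hf hf1

lemma trans (h : TVLe μ σ c) (h' : TVLe σ τ c') : TVLe μ τ (c + c') := fun f hf hf1 =>
  (abs_sub_le _ _ _).trans (add_le_add (h f hf hf1) (h' f hf hf1))

lemma mono (h : TVLe μ σ c) (hc : c ≤ c') : TVLe μ σ c' := fun f hf hf1 => (h f hf hf1).trans hc

lemma abs_integral_sub_le (h : TVLe μ σ c) {f : X → ℝ} {C : ℝ} (hC : 0 < C) (hf : Measurable f)
    (hfC : ∀ x, |f x| ≤ C) : |(∫ x, f x ∂μ) - ∫ x, f x ∂σ| ≤ C * c := by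
  have hscaled := h (fun x => C⁻¹ * f x) (hf.const_mul _) fun x => by
    rw [abs_mul, abs_of_pos (inv_pos.2 hC), inv_mul_le_iff₀ hC, mul_one]
    exact hfC x
  rwa [integral_const_mul, integral_const_mul, ← mul_sub, abs_mul, abs_of_pos (inv_pos.2 hC),
    inv_mul_le_iff₀ hC] at hscaled

end TVLe

lemma abs_integral_sub_integral_le {X : Type*} [MeasurableSpace X] {ρ : Measure X} {f g u : X → ℝ}
    (hf : Integrable f ρ) (hg : Integrable g ρ) (hu : Integrable u ρ)
    (hfg : ∀ x, |f x - g x| ≤ u x) : |(∫ x, f x ∂ρ) - ∫ x, g x ∂ρ| ≤ ∫ x, u x ∂ρ := by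
  rw [← integral_sub hf hg, ← Real.norm_eq_abs]
  exact norm_integral_le_of_norm_le hu (Eventually.of_forall hfg)

/- By Lusin's theorem, in the form of density of the bounded continuous functions in
`L¹ (μ + σ)`. -/
lemma tvLe_of_continuous {X : Type*} [TopologicalSpace X] [NormalSpace X] [MeasurableSpace X]
    [BorelSpace X] {μ σ : Measure X} [IsFiniteMeasure μ] [IsFiniteMeasure σ]
    [(μ + σ).WeaklyRegular] {c : ℝ}
    (h : ∀ g : X → ℝ, Continuous g → (∀ x, |g x| ≤ 1) → |(∫ x, g x ∂μ) - ∫ x, g x ∂σ| ≤ c) :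
    TVLe μ σ c := by
  intro f hf hf1
  refine le_of_forall_pos_le_add fun δ hδ => ?_
  have hinteg {ρ : Measure X} [IsFiniteMeasure ρ] {u : X → ℝ} (hu : Measurable u)
      (hu1 : ∀ x, |u x| ≤ 1) : Integrable u ρ :=
    Integrable.of_bound hu.aestronglyMeasurable 1 (Eventually.of_forall hu1)
  obtain ⟨g, hg, hgi⟩ :=
    (hinteg (ρ := μ + σ) hf hf1).exists_boundedContinuous_integral_sub_le hδ
  have hcont : Continuous fun x => clamp 1 (g x) := (continuous_clamp 1).comp g.continuous
  have hcont1 (x : X) : |clamp 1 (g x)| ≤ 1 := abs_clamp_le zero_le_one _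
  have hdist : Integrable (fun x => |f x - g x|) (μ + σ) := ((hinteg hf hf1).sub hgi).abs
  have hclose {ρ : Measure X} [IsFiniteMeasure ρ] (hρ : Integrable (fun x => |f x - g x|) ρ) :
      |(∫ x, f x ∂ρ) - ∫ x, clamp 1 (g x) ∂ρ| ≤ ∫ x, |f x - g x| ∂ρ :=
    abs_integral_sub_integral_le (hinteg hf hf1) (hinteg hcont.measurable hcont1) hρ
      fun x => abs_sub_clamp_le (hf1 x) _
  have hμ := hclose hdist.left_of_add_measure
  have hσ := hclose hdist.right_of_add_measure
  simp only [Real.norm_eq_abs] at hg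
  rw [integral_add_measure hdist.left_of_add_measure hdist.right_of_add_measure] at hg
  have hg' := h _ hcont hcont1
  rw [abs_le] at *
  constructor <;> linarith [hμ.1, hμ.2, hσ.1, hσ.2, hg'.1, hg'.2]

lemma tendsto_integral_abs_sub_of_tendsto {α ι : Type*} [MeasurableSpace α] {κ : Measure α}
    {l : Filter ι} [l.IsCountablyGenerated] {u : ι → α → ℝ} {v : α → ℝ}
    (hu : ∀ i, Integrable (u i) κ) (hv : Integrable v κ) (hu0 : ∀ i x, 0 ≤ u i x)
    (hv0 : ∀ x, 0 ≤ v x) (hlim : ∀ x, Tendsto (fun i => u i x) l (𝓝 (v x)))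
    (hinteg : Tendsto (fun i => ∫ x, u i x ∂κ) l (𝓝 (∫ x, v x ∂κ))) :
    Tendsto (fun i => ∫ x, |u i x - v x| ∂κ) l (𝓝 0) := by
  have hpos (i : ι) : Integrable (fun x => max (v x - u i x) 0) κ := (hv.sub (hu i)).pos_part
  have hpos_lim : Tendsto (fun i => ∫ x, max (v x - u i x) 0 ∂κ) l (𝓝 (∫ _, (0 : ℝ) ∂κ)) := by
    refine tendsto_integral_filter_of_dominated_convergence v
      (Eventually.of_forall fun i => (hpos i).aestronglyMeasurable)
      (Eventually.of_forall fun i => Eventually.of_forall fun x => ?_) hv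
      (Eventually.of_forall fun x => ?_)
    · rw [Real.norm_of_nonneg (le_max_right _ _)]
      exact max_le (by linarith [hu0 i x]) (hv0 x)
    · simpa only [sub_self, max_self] using
        ((hlim x).const_sub (v x)).max (tendsto_const_nhds (x := (0 : ℝ)))
  have habs (i : ι) : ∫ x, |u i x - v x| ∂κ =
      (∫ x, u i x ∂κ) - (∫ x, v x ∂κ) + 2 * ∫ x, max (v x - u i x) 0 ∂κ := by
    rw [← integral_const_mul, ← integral_sub (hu i) hv,
      ← integral_add (by exact (hu i).sub hv) ((hpos i).const_mul 2)]
    refine integral_congr_ae (Eventually.of_forall fun x => ?_)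
    change |u i x - v x| = u i x - v x + 2 * max (v x - u i x) 0
    grind
  simp_rw [habs]
  simpa using (hinteg.sub_const (∫ x, v x ∂κ)).add (hpos_lim.const_mul 2)

namespace TendstoTV

variable {ι X : Type*} [MeasurableSpace X] {ν : ι → Measure X} {l : Filter ι} {μ : Measure X}

lemma tendsto_integral (h : TendstoTV ν l μ) {f : X → ℝ} {C : ℝ} (hf : Measurable f)
    (hfC : ∀ x, |f x| ≤ C) : Tendsto (fun i => ∫ x, f x ∂(ν i)) l (𝓝 (∫ x, f x ∂μ)) := by
  rw [Metric.tendsto_nhds]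
  intro δ hδ
  filter_upwards [h (δ / (2 * (|C| + 1))) (by positivity)] with i hi
  have hbound := hi.abs_integral_sub_le (show 0 < |C| + 1 by positivity) hf
    fun x => (hfC x).trans (by linarith [le_abs_self C])
  rw [Real.dist_eq]
  refine hbound.trans_lt ?_
  field_simp
  linarith

lemma integral_min_le [l.NeBot] [IsFiniteMeasure μ] (h : TendstoTV ν l μ) {V : X → ℝ} {M : ℝ}
    (hV : Measurable V) (hV0 : ∀ x, 0 ≤ V x)
    (hM : ∀ᶠ i in l, Integrable V (ν i) ∧ (∫ x, V x ∂(ν i)) ≤ M) (R : ℕ) :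
    (∫ x, min (V x) R ∂μ) ≤ M := by
  have hmeas : Measurable fun x => min (V x) (R : ℝ) := hV.min measurable_const
  have hnonneg (x : X) : 0 ≤ min (V x) (R : ℝ) := le_min (hV0 x) (Nat.cast_nonneg R)
  refine le_of_tendsto (h.tendsto_integral hmeas (C := R) fun x => ?_) (hM.mono fun i hi => ?_)
  · exact (abs_of_nonneg (hnonneg x)).trans_le (min_le_right _ _)
  · have hinteg : Integrable (fun x => min (V x) (R : ℝ)) (ν i) :=
      hi.1.mono' hmeas.aestronglyMeasurable (Eventually.of_forall fun x =>
        (Real.norm_of_nonneg (hnonneg x)).trans_le (min_le_left _ _))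
    exact (integral_mono hinteg hi.1 fun x => min_le_left _ _).trans hi.2

lemma lintegral_ofReal_le [l.NeBot] [IsFiniteMeasure μ] (h : TendstoTV ν l μ) {V : X → ℝ} {M : ℝ}
    (hV : Measurable V) (hV0 : ∀ x, 0 ≤ V x)
    (hM : ∀ᶠ i in l, Integrable V (ν i) ∧ (∫ x, V x ∂(ν i)) ≤ M) :
    ∫⁻ x, ENNReal.ofReal (V x) ∂μ ≤ ENNReal.ofReal M := by
  have hmeas (R : ℕ) : Measurable fun x => min (V x) (R : ℝ) := hV.min measurable_const
  have hnonneg (R : ℕ) (x : X) : 0 ≤ min (V x) (R : ℝ) := le_min (hV0 x) (Nat.cast_nonneg R)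
  have hsup (x : X) : ENNReal.ofReal (V x) = ⨆ R : ℕ, ENNReal.ofReal (min (V x) R) := by
    refine le_antisymm ?_ (iSup_le fun R => ENNReal.ofReal_le_ofReal (min_le_left _ _))
    obtain ⟨R, hR⟩ := exists_nat_ge (V x)
    exact le_iSup_of_le R (by rw [min_eq_left hR])
  simp_rw [hsup]
  rw [lintegral_iSup (fun R => (hmeas R).ennreal_ofReal) fun R S hRS x =>
    ENNReal.ofReal_le_ofReal (min_le_min le_rfl (by exact_mod_cast hRS))]
  refine iSup_le fun R => ?_
  have hinteg : Integrable (fun x => min (V x) (R : ℝ)) μ :=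
    Integrable.of_bound (hmeas R).aestronglyMeasurable R (Eventually.of_forall fun x =>
      (Real.norm_of_nonneg (hnonneg R x)).trans_le (min_le_right _ _))
  rw [← ofReal_integral_eq_lintegral_ofReal hinteg (Eventually.of_forall (hnonneg R))]
  exact ENNReal.ofReal_le_ofReal (h.integral_min_le hV hV0 hM R)

lemma integrable [l.NeBot] [IsFiniteMeasure μ] (h : TendstoTV ν l μ) {V : X → ℝ} {M : ℝ}
    (hV : Measurable V) (hV0 : ∀ x, 0 ≤ V x)
    (hM : ∀ᶠ i in l, Integrable V (ν i) ∧ (∫ x, V x ∂(ν i)) ≤ M) : Integrable V μ := by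
  refine ⟨hV.aestronglyMeasurable, ?_⟩
  rw [hasFiniteIntegral_iff_ofReal (Eventually.of_forall hV0)]
  exact (h.lintegral_ofReal_le hV hV0 hM).trans_lt ENNReal.ofReal_lt_top

lemma integral_le [l.NeBot] [IsFiniteMeasure μ] (h : TendstoTV ν l μ) {V : X → ℝ} {M : ℝ}
    (hV : Measurable V) (hV0 : ∀ x, 0 ≤ V x)
    (hM : ∀ᶠ i in l, Integrable V (ν i) ∧ (∫ x, V x ∂(ν i)) ≤ M) : (∫ x, V x ∂μ) ≤ M := by
  obtain ⟨i, -, hi⟩ := hM.exists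
  rw [integral_eq_lintegral_of_nonneg_ae (Eventually.of_forall hV0) hV.aestronglyMeasurable]
  exact ENNReal.toReal_le_of_le_ofReal ((integral_nonneg hV0).trans hi)
    (h.lintegral_ofReal_le hV hV0 hM)

end TendstoTV

lemma TVLe.abs_integral_sub_le_of_le_add {X : Type*} [MeasurableSpace X] {μ σ : Measure X}
    [IsFiniteMeasure μ] [IsFiniteMeasure σ] {c ε M R : ℝ} {f V : X → ℝ} (h : TVLe μ σ c)
    (hR : 0 < R) (hε : 0 ≤ ε) (hf : Measurable f) (hV0 : ∀ x, 0 ≤ V x)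
    (hfV : ∀ x, |f x| ≤ R + ε * V x) (hμ : Integrable V μ) (hσ : Integrable V σ)
    (hμM : (∫ x, V x ∂μ) ≤ M) (hσM : (∫ x, V x ∂σ) ≤ M) :
    |(∫ x, f x ∂μ) - ∫ x, f x ∂σ| ≤ R * c + 2 * (ε * M) := by
  have hcut : Measurable fun x => clamp R (f x) := (continuous_clamp R).measurable.comp hf
  have hcutR (x : X) : |clamp R (f x)| ≤ R := abs_clamp_le hR.le _
  have hclose {ρ : Measure X} [IsFiniteMeasure ρ] (hρ : Integrable V ρ)
      (hρM : (∫ x, V x ∂ρ) ≤ M) :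
      |(∫ x, f x ∂ρ) - ∫ x, clamp R (f x) ∂ρ| ≤ ε * M := by
    have hfint : Integrable f ρ := ((integrable_const R).add (hρ.const_mul ε)).mono'
      hf.aestronglyMeasurable (Eventually.of_forall hfV)
    have hcut_int : Integrable (fun x => clamp R (f x)) ρ :=
      Integrable.of_bound hcut.aestronglyMeasurable R (Eventually.of_forall hcutR)
    refine (abs_integral_sub_integral_le hfint hcut_int (hρ.const_mul ε) fun x =>
      abs_sub_clamp_self_le (mul_nonneg hε (hV0 x)) (hfV x)).trans ?_
    rw [integral_const_mul]
    gcongr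
  have hmid := h.abs_integral_sub_le hR hcut hcutR
  have hμ' := hclose hμ hμM
  have hσ' := hclose hσ hσM
  rw [abs_le] at *
  constructor <;> linarith [hμ'.1, hμ'.2, hσ'.1, hσ'.2, hmid.1, hmid.2]

/- Split `W ≤ R + ε V`: the bounded part is controlled by total variation, the remainder by the
moments. -/
lemma TendstoTV.eventually_wDist_le {ι : Type*} {l : Filter ι} {ν : ι → Measure (Ed d)}
    {μ : Measure (Ed d)} {V W : Ed d → ℝ} {M δ : ℝ} (h : TendstoTV ν l μ) (hV0 : ∀ x, 0 ≤ V x)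
    (hW0 : ∀ x, 0 ≤ W x) (hWV : IsSubordinate W V)
    (hM : ∀ᶠ i in l, memPV V (ν i) ∧ (∫ x, V x ∂(ν i)) ≤ M) (hμ : memPV V μ)
    (hμM : (∫ x, V x ∂μ) ≤ M) (hδ : 0 < δ) : ∀ᶠ i in l, wDist W (ν i) μ ≤ δ := by
  have hM0 : 0 ≤ M := (integral_nonneg hV0).trans hμM
  have hμ_prob := hμ.1
  obtain ⟨R, hR, hWR⟩ := hWV (δ / (4 * (M + 1))) (by positivity)
  have : Nonempty {f : Ed d → ℝ // Measurable f ∧ ∀ x, |f x| ≤ W x} :=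
    ⟨⟨fun _ => 0, measurable_const, fun x => by simpa using hW0 x⟩⟩
  filter_upwards [h (δ / 2 / R) (by positivity), hM] with i hi ⟨hνi, hνM⟩
  have hν_prob := hνi.1
  refine ciSup_le fun ⟨f, hf, hfW⟩ => (le_abs_self _).trans ?_
  refine (hi.abs_integral_sub_le_of_le_add hR (by positivity) hf hV0
    (fun x => (hfW x).trans (hWR x)) hνi.2 hμ.2 hνM hμM).trans ?_
  rw [mul_div_cancel₀ _ hR.ne']
  have hratio : δ / (4 * (M + 1)) * M ≤ δ / 4 := by
    field_simp
    linarith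
  linarith

/- Weighted AM-GM: `s ^ γ = (ε s) ^ γ (ε ^ (-γ / (1 - γ))) ^ (1 - γ)`. -/
lemma isSubordinate_rpow {X : Type*} {V : X → ℝ} {γ : ℝ} (hV0 : ∀ x, 0 ≤ V x) (hγ0 : 0 ≤ γ)
    (hγ1 : γ < 1) : IsSubordinate (fun x => V x ^ γ) V := fun ε hε => by
  refine ⟨ε ^ (-γ / (1 - γ)), by positivity, fun x => ?_⟩
  have hγ : 0 < 1 - γ := by linarith
  have hR : 0 ≤ ε ^ (-γ / (1 - γ)) := by positivity
  have hεV : 0 ≤ ε * V x := mul_nonneg hε.le (hV0 x)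
  calc V x ^ γ = (ε * V x) ^ γ * (ε ^ (-γ / (1 - γ))) ^ (1 - γ) := by
        rw [← rpow_mul hε.le, div_mul_cancel₀ _ hγ.ne', mul_rpow hε.le (hV0 x), rpow_neg hε.le]
        field_simp
    _ ≤ γ * (ε * V x) + (1 - γ) * ε ^ (-γ / (1 - γ)) :=
        geom_mean_le_arith_mean2_weighted hγ0 hγ.le hεV hR (by ring)
    _ ≤ ε ^ (-γ / (1 - γ)) + ε * V x := by nlinarith

/-! ### The Euler step on measures -/

section EulerMeasure

variable {E : Type*} [NormedAddCommGroup E] [InnerProductSpace ℝ E] [FiniteDimensional ℝ E]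
  [MeasurableSpace E] [BorelSpace E]

/-- One Euler step: the law of `x + h β(x) + √h w`, where `x` has law `μ` and, given `x`, `w` has
density `gauss (a x)`. -/
def eulerStep (a : E → E →L[ℝ] E) (h : ℝ) (β : E → E) (μ : Measure E) : Measure E :=
  ((μ.prod volume).withDensity fun q => ENNReal.ofReal (gauss (a q.1) q.2)).map
    fun q => q.1 + (h • β q.1 + √h • q.2)

variable {Λ : ℝ} {a : E → E →L[ℝ] E} {h : ℝ} {β : E → E} {μ : Measure E}

lemma continuous_gauss_uncurry (ha : ∀ x, IsElliptic Λ (a x)) (hac : Continuous a) :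
    Continuous fun q : E × E => gauss (a q.1) q.2 :=
  continuous_gauss_comp (by fun_prop) (by fun_prop) fun p => ha p.1

lemma lintegral_prod_gauss [IsProbabilityMeasure μ] (ha : ∀ x, IsElliptic Λ (a x))
    (hac : Continuous a) :
    ∫⁻ q : E × E, ENNReal.ofReal (gauss (a q.1) q.2) ∂(μ.prod volume) = 1 := by
  rw [lintegral_prod _ (continuous_gauss_uncurry ha hac).measurable.ennreal_ofReal.aemeasurable]
  have hfiber (x : E) : ∫⁻ w, ENNReal.ofReal (gauss (a x) w) = 1 := by
    rw [← ofReal_integral_eq_lintegral_ofReal (ha x).integrable_gauss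
      (Eventually.of_forall fun w => gauss_nonneg _ _), (ha x).integral_gauss, ENNReal.ofReal_one]
  simp [hfiber]

lemma isProbabilityMeasure_eulerStep [IsProbabilityMeasure μ] (ha : ∀ x, IsElliptic Λ (a x))
    (hac : Continuous a) (hβ : Measurable β) : IsProbabilityMeasure (eulerStep a h β μ) := by
  have : IsProbabilityMeasure
      ((μ.prod volume).withDensity fun q : E × E => ENNReal.ofReal (gauss (a q.1) q.2)) :=
    ⟨by rw [withDensity_apply _ MeasurableSet.univ, Measure.restrict_univ,
      lintegral_prod_gauss ha hac]⟩
  exact Measure.isProbabilityMeasure_map (by fun_prop)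

lemma integrable_prod_mul_gauss [IsProbabilityMeasure μ] (ha : ∀ x, IsElliptic Λ (a x))
    (hac : Continuous a) {F : E × E → ℝ} (hF : Measurable F) {C : ℝ} (hC : ∀ q, |F q| ≤ C) :
    Integrable (fun q : E × E => F q * gauss (a q.1) q.2) (μ.prod volume) := by
  have hdensity : Integrable (fun q : E × E => gauss (a q.1) q.2) (μ.prod volume) := by
    refine ⟨(continuous_gauss_uncurry ha hac).aestronglyMeasurable, ?_⟩
    rw [hasFiniteIntegral_iff_ofReal (Eventually.of_forall fun q => gauss_nonneg _ _),
      lintegral_prod_gauss ha hac]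
    exact ENNReal.one_lt_top
  exact hdensity.bdd_mul hF.aestronglyMeasurable (Eventually.of_forall hC)

lemma integrable_eulerOp [IsProbabilityMeasure μ] (ha : ∀ x, IsElliptic Λ (a x))
    (hac : Continuous a) (hβ : Measurable β) {f : E → ℝ} (hf : Measurable f) {C : ℝ}
    (hC : ∀ x, |f x| ≤ C) : Integrable (eulerOp a h β f) μ :=
  (integrable_prod_mul_gauss (μ := μ) ha hac (hf.comp (by fun_prop :
    Measurable fun q : E × E => q.1 + (h • β q.1 + √h • q.2))) fun q => hC _).integral_prod_left

lemma integral_eulerStep [IsProbabilityMeasure μ] (ha : ∀ x, IsElliptic Λ (a x))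
    (hac : Continuous a) (hβ : Measurable β) {f : E → ℝ} (hf : Measurable f) {C : ℝ}
    (hC : ∀ x, |f x| ≤ C) :
    ∫ y, f y ∂(eulerStep a h β μ) = ∫ x, eulerOp a h β f x ∂μ := by
  have hmap : Measurable fun q : E × E => q.1 + (h • β q.1 + √h • q.2) := by fun_prop
  rw [eulerStep, integral_map hmap.aemeasurable hf.aestronglyMeasurable,
    integral_withDensity_eq_integral_toReal_smul
      (continuous_gauss_uncurry ha hac).measurable.ennreal_ofReal
      (Eventually.of_forall fun q => ENNReal.ofReal_lt_top)]
  simp only [ENNReal.toReal_ofReal (gauss_nonneg _ _), smul_eq_mul, mul_comm (gauss _ _)]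
  exact integral_prod _ (integrable_prod_mul_gauss ha hac (hf.comp hmap) fun q => hC _)

end EulerMeasure

/-! ### Cutting off -/

section CutMap

variable {X : Type*} [Zero X] {V : X → ℝ} {m : ℝ}

open Classical in
/-- The map sending the complement of `{V ≤ m}` to the origin. -/
def cutMap (V : X → ℝ) (m : ℝ) (y : X) : X := if V y ≤ m then y else 0

lemma cutMap_of_le {y : X} (h : V y ≤ m) : cutMap V m y = y := if_pos h

lemma cutMap_of_lt {y : X} (h : m < V y) : cutMap V m y = 0 := if_neg h.not_ge

lemma apply_cutMap_le (h0 : V 0 ≤ m) (y : X) : V (cutMap V m y) ≤ m := by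
  rcases le_or_gt (V y) m with h | h
  · rwa [cutMap_of_le h]
  · rwa [cutMap_of_lt h]

lemma apply_cutMap_le_self (h0 : V 0 ≤ m) (y : X) : V (cutMap V m y) ≤ V y := by
  rcases le_or_gt (V y) m with h | h
  · rw [cutMap_of_le h]
  · rw [cutMap_of_lt h]
    exact h0.trans h.le

variable [MeasurableSpace X] {μ : Measure X}

lemma measurable_cutMap (hV : Measurable V) : Measurable (cutMap V m) :=
  Measurable.ite (measurableSet_le hV measurable_const) measurable_id measurable_const

lemma ae_map_cutMap_le (hV : Measurable V) (h0 : V 0 ≤ m) :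
    ∀ᵐ y ∂(μ.map (cutMap V m)), V y ≤ m := by
  rw [ae_map_iff (measurable_cutMap hV).aemeasurable (measurableSet_le hV measurable_const)]
  exact Eventually.of_forall (apply_cutMap_le h0)

lemma abs_integral_map_cutMap_sub_le [IsFiniteMeasure μ] (hV : Measurable V) {f : X → ℝ}
    (hf : Measurable f) {C : ℝ} (hC : ∀ x, |f x| ≤ C) :
    |(∫ y, f y ∂(μ.map (cutMap V m))) - ∫ y, f y ∂μ| ≤ 2 * C * μ.real {y | m < V y} := by
  have hS : MeasurableSet {y | m < V y} := measurableSet_lt measurable_const hV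
  have hcut := measurable_cutMap (m := m) hV
  have hinteg : Integrable f μ :=
    Integrable.of_bound hf.aestronglyMeasurable C (Eventually.of_forall hC)
  have hinteg_cut : Integrable (fun y => f (cutMap V m y)) μ :=
    Integrable.of_bound (hf.comp hcut).aestronglyMeasurable C (Eventually.of_forall fun _ => hC _)
  rw [integral_map hcut.aemeasurable hf.aestronglyMeasurable, ← integral_sub hinteg_cut hinteg,
    ← Real.norm_eq_abs, mul_comm, ← smul_eq_mul, ← integral_indicator_const _ hS]
  refine norm_integral_le_of_norm_le ((integrable_const _).indicator hS)
    (Eventually.of_forall fun y => ?_)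
  rcases le_or_gt (V y) m with h | h
  · rw [cutMap_of_le h, sub_self, norm_zero, indicator_of_notMem (by simpa using h)]
  · rw [indicator_of_mem (by exact h), two_mul]
    exact (norm_sub_le _ _).trans (add_le_add (hC _) (hC _))

end CutMap

section SmoothCap

/-- A smooth function of `s`, equal to `s` for `s ≤ m + 1` and to `m + 2` for `s ≥ m + 2`. -/
def smoothCap (m s : ℝ) : ℝ :=
  s * (1 - Real.smoothTransition (s - m - 1)) + (m + 2) * Real.smoothTransition (s - m - 1)

variable {m s : ℝ}

lemma smoothCap_of_le (h : s ≤ m + 1) : smoothCap m s = s := by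
  rw [smoothCap, Real.smoothTransition.zero_of_nonpos (by linarith)]
  ring

lemma smoothCap_of_ge (h : m + 2 ≤ s) : smoothCap m s = m + 2 := by
  rw [smoothCap, Real.smoothTransition.one_of_one_le (by linarith)]
  ring

lemma le_smoothCap (h : m ≤ s) : m ≤ smoothCap m s := by
  have h0 := Real.smoothTransition.nonneg (s - m - 1)
  have h1 := Real.smoothTransition.le_one (s - m - 1)
  rw [smoothCap]
  nlinarith

lemma abs_smoothCap_le (hs : 0 ≤ s) (hm : 0 ≤ m) : |smoothCap m s| ≤ m + 2 := by
  rcases le_total (m + 2) s with h | h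
  · rw [smoothCap_of_ge h, abs_of_nonneg (by linarith)]
  · have h0 := Real.smoothTransition.nonneg (s - m - 1)
    have h1 := Real.smoothTransition.le_one (s - m - 1)
    rw [smoothCap, abs_le]
    constructor <;> nlinarith

lemma contDiff_smoothCap (n : ℕ∞) (m : ℝ) : ContDiff ℝ n (smoothCap m) := by
  have : ContDiff ℝ n fun s => Real.smoothTransition (s - m - 1) :=
    Real.smoothTransition.contDiff.comp (by fun_prop)
  unfold smoothCap
  fun_prop

lemma hasCompactSupport_fderiv_smoothCap_comp {E : Type*} [NormedAddCommGroup E]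
    [NormedSpace ℝ E] {V : E → ℝ} (hV : Tendsto V (cocompact E) atTop) (m : ℝ) :
    HasCompactSupport (fderiv ℝ fun x => smoothCap m (V x)) := by
  obtain ⟨S, hS, hlarge⟩ := mem_cocompact.1 (hV.eventually_gt_atTop (m + 2))
  have hsupp : HasCompactSupport fun x => smoothCap m (V x) - (m + 2) :=
    HasCompactSupport.intro hS fun x hx => by
      rw [smoothCap_of_ge (show m + 2 < V x from hlarge hx).le, sub_self]
  have hderiv : (fderiv ℝ fun x => smoothCap m (V x) - (m + 2)) =
      fderiv ℝ fun x => smoothCap m (V x) := funext fun x => fderiv_sub_const (m + 2)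
  exact hderiv ▸ hsupp.fderiv (𝕜 := ℝ)

/- The slack `m - V 0` bought by cutting off pays for the mass that is moved. -/
lemma integral_map_cutMap_add_le {X : Type*} [Zero X] [MeasurableSpace X] {V : X → ℝ}
    {η : Measure X} [IsFiniteMeasure η] (hV : Measurable V) (hV0 : ∀ x, 0 ≤ V x) (hm : V 0 ≤ m) :
    (∫ x, V x ∂(η.map (cutMap V m))) + (m - V 0) * η.real {y | m < V y} ≤
      ∫ y, smoothCap m (V y) ∂η := by
  have hS : MeasurableSet {y | m < V y} := measurableSet_lt measurable_const hV
  have hcut := measurable_cutMap (m := m) hV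
  have hinteg_cut : Integrable (fun y => V (cutMap V m y)) η :=
    Integrable.of_bound (hV.comp hcut).aestronglyMeasurable m (Eventually.of_forall fun y => by
      rw [Real.norm_of_nonneg (hV0 _)]
      exact apply_cutMap_le hm y)
  have hinteg_ind : Integrable ({y | m < V y}.indicator fun _ => m - V 0) η :=
    (integrable_const _).indicator hS
  have hinteg_cap : Integrable (fun y => smoothCap m (V y)) η :=
    Integrable.of_bound
      ((contDiff_smoothCap 0 m).continuous.measurable.comp hV).aestronglyMeasurable (m + 2)
      (Eventually.of_forall fun y => abs_smoothCap_le (hV0 y) ((hV0 0).trans hm))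
  rw [integral_map hcut.aemeasurable hV.aestronglyMeasurable, mul_comm, ← smul_eq_mul,
    ← integral_indicator_const _ hS, ← integral_add hinteg_cut hinteg_ind]
  refine integral_mono (hinteg_cut.add hinteg_ind) hinteg_cap fun y => ?_
  rcases le_or_gt (V y) m with h | h
  · simp only [cutMap_of_le h, indicator_of_notMem (show y ∉ {y | m < V y} from h.not_gt),
      smoothCap_of_le (show V y ≤ m + 1 by linarith), add_zero, le_refl]
  · simp only [cutMap_of_lt h, indicator_of_mem (show y ∈ {y | m < V y} from h),
      add_sub_cancel, le_smoothCap h.le]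

end SmoothCap

/-! ### The Lyapunov estimate along one step -/

section Lyapunov

variable {E : Type*} [NormedAddCommGroup E] [InnerProductSpace ℝ E] [FiniteDimensional ℝ E]

lemma generator_congr_of_eventuallyEq {φ ψ : E → ℝ} {x : E} (h : φ =ᶠ[𝓝 x] ψ) (B : E →L[ℝ] E)
    (v : E) : generator B v φ x = generator B v ψ x := by
  rw [generator, generator, h.fderiv_eq, h.fderiv.fderiv_eq]

variable [MeasurableSpace E] [BorelSpace E] {Λ : ℝ} {a : E → E →L[ℝ] E} {V : E → ℝ}

lemma exists_eulerOp_smoothCap_le (ha : ∀ x, IsElliptic Λ (a x)) (hV : ContDiff ℝ 2 V)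
    (hVinf : Tendsto V (cocompact E) atTop) (m : ℝ) {ε : ℝ} (hε : 0 < ε) :
    ∃ κ : ℝ, 0 < κ ∧ ∀ h, 0 < h → h ≤ κ → ∀ (β : E → E) (x : E), V x ≤ m →
      h * ‖β x‖ ^ 2 ≤ κ → eulerOp a h β (fun y => smoothCap m (V y)) x ≤
        V x + h * (generator (a x) (β x) V x + ε) := by
  obtain ⟨κ, hκ, hexp⟩ := exists_abs_integral_gauss_sub_generator_le
    ((contDiff_smoothCap 2 m).comp hV) (hasCompactSupport_fderiv_smoothCap_comp hVinf m)
    (ha 0).pos hε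
  refine ⟨κ, hκ, fun h hh hhκ β x hx hβ => ?_⟩
  have hlocal : (smoothCap m ∘ V) =ᶠ[𝓝 x] V := by
    filter_upwards [hV.continuous.continuousAt.eventually_lt continuousAt_const
      (show V x < m + 1 by linarith)] with y hy using smoothCap_of_le hy.le
  have hbound := (abs_le.1 (hexp h hh hhκ (a x) (ha x) x (β x) hβ)).2
  rw [generator_congr_of_eventuallyEq hlocal, hlocal.eq_of_nhds] at hbound
  simp only [Function.comp_apply] at hbound
  rw [eulerOp]
  linarith

lemma exists_integral_map_cutMap_eulerStep_le (ha : ∀ x, IsElliptic Λ (a x)) (hac : Continuous a)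
    (hV : ContDiff ℝ 2 V) (hV0 : ∀ x, 0 ≤ V x) (hVinf : Tendsto V (cocompact E) atTop)
    {m ε : ℝ} (hm : V 0 ≤ m) (hε : 0 < ε) :
    ∃ κ : ℝ, 0 < κ ∧ ∀ h, 0 < h → h ≤ κ → ∀ μ : Measure E, IsProbabilityMeasure μ →
      (∀ᵐ x ∂μ, V x ≤ m) → ∀ β : E → E, Measurable β → (∀ᵐ x ∂μ, h * ‖β x‖ ^ 2 ≤ κ) →
      ∀ N : ℝ, (∀ x, generator (a x) (β x) V x ≤ N) →
        (∫ x, V x ∂((eulerStep a h β μ).map (cutMap V m))) +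
            (m - V 0) * (eulerStep a h β μ).real {y | m < V y} ≤
          (∫ x, V x ∂μ) + h * (N + ε) := by
  obtain ⟨κ, hκ, hstep⟩ := exists_eulerOp_smoothCap_le ha hV hVinf m hε
  refine ⟨κ, hκ, fun h hh hhκ μ _ hμ β hβ hβκ N hN => ?_⟩
  have hprob := isProbabilityMeasure_eulerStep (h := h) (μ := μ) ha hac hβ
  have hVm := hV.continuous.measurable
  have hcap : Measurable fun x => smoothCap m (V x) :=
    (contDiff_smoothCap 0 m).continuous.measurable.comp hVm
  have hcap_bound (x : E) : |smoothCap m (V x)| ≤ m + 2 :=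
    abs_smoothCap_le (hV0 x) ((hV0 0).trans hm)
  have hVint : Integrable V μ := Integrable.of_bound hVm.aestronglyMeasurable m (hμ.mono fun y hy =>
    by rwa [Real.norm_of_nonneg (hV0 y)])
  calc _ ≤ ∫ y, smoothCap m (V y) ∂(eulerStep a h β μ) := integral_map_cutMap_add_le hVm hV0 hm
    _ = ∫ x, eulerOp a h β (fun y => smoothCap m (V y)) x ∂μ :=
        integral_eulerStep ha hac hβ hcap hcap_bound
    _ ≤ ∫ x, (V x + h * (N + ε)) ∂μ := by
        refine integral_mono_ae (integrable_eulerOp ha hac hβ hcap hcap_bound)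
          (hVint.add (integrable_const _)) ?_
        filter_upwards [hμ, hβκ] with x hx hxβ
        refine (hstep h hh hhκ β x hx hxβ).trans ?_
        gcongr
        exact hN x
    _ = (∫ x, V x ∂μ) + h * (N + ε) := by
        rw [integral_add hVint (integrable_const _)]
        simp

end Lyapunov

/-! ### A discrete Osgood estimate -/

/-- Osgood's condition on a growth rate `N`: it is continuous and positive on `[0, ∞)` and
`∫₀^∞ dα / N α = ∞`, so that no solution of `y' ≤ N y` blows up in finite time. -/
structure IsOsgood (N : ℝ → ℝ) : Prop where
  continuousOn : ContinuousOn N (Ici 0)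
  pos : ∀ α ∈ Ici (0 : ℝ), 0 < N α
  lintegral_eq_top : ∫⁻ α in Ioi (0 : ℝ), ENNReal.ofReal (1 / N α) = ⊤

namespace IsOsgood

variable {N : ℝ → ℝ} {x y : ℝ}

lemma continuousOn_one_div (hN : IsOsgood N) : ContinuousOn (fun α => 1 / N α) (Ici 0) :=
  continuousOn_const.div hN.continuousOn fun α hα => (hN.pos α hα).ne'

lemma intervalIntegrable (hN : IsOsgood N) (hx : 0 ≤ x) (hy : 0 ≤ y) :
    IntervalIntegrable (fun α => 1 / N α) volume x y :=
  (hN.continuousOn_one_div.mono fun _ hz => (le_min hx hy).trans hz.1).intervalIntegrable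

lemma integral_add (hN : IsOsgood N) (hx : 0 ≤ x) (hy : 0 ≤ y) :
    (∫ α in 0..x, 1 / N α) + (∫ α in x..y, 1 / N α) = ∫ α in 0..y, 1 / N α :=
  intervalIntegral.integral_add_adjacent_intervals (hN.intervalIntegrable le_rfl hx)
    (hN.intervalIntegrable hx hy)

lemma integral_le_integral (hN : IsOsgood N) (hx : 0 ≤ x) (hxy : x ≤ y) :
    (∫ α in 0..x, 1 / N α) ≤ ∫ α in 0..y, 1 / N α := by
  rw [← hN.integral_add hx (hx.trans hxy), le_add_iff_nonneg_right]
  exact intervalIntegral.integral_nonneg hxy fun α hα =>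
    (one_div_pos.2 (hN.pos α (hx.trans hα.1))).le

lemma exists_lt_integral (hN : IsOsgood N) (I c : ℝ) :
    ∃ M : ℝ, c ≤ M ∧ 0 ≤ M ∧ I < ∫ α in 0..M, 1 / N α := by
  by_contra! hcon
  have hinteg : IntegrableOn (fun α => 1 / N α) (Ioi 0) := by
    refine integrableOn_Ioi_of_intervalIntegral_norm_bounded I 0 (l := atTop) (b := id)
      (fun M => ?_) tendsto_id ?_
    · exact ((hN.continuousOn_one_div.mono Icc_subset_Ici_self).integrableOn_Icc).mono_set
        Ioc_subset_Icc_self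
    · filter_upwards [eventually_ge_atTop c, eventually_ge_atTop 0] with M hcM hM
      refine (intervalIntegral.integral_congr fun α hα => ?_).trans_le (hcon M hcM hM)
      rw [id, uIcc_of_le hM] at hα
      exact Real.norm_of_nonneg (one_div_pos.2 (hN.pos α hα.1)).le
  refine ((hasFiniteIntegral_iff_ofReal ?_).1 hinteg.hasFiniteIntegral).ne hN.lintegral_eq_top
  filter_upwards [ae_restrict_mem measurableSet_Ioi] with α hα
  exact (one_div_pos.2 (hN.pos α (mem_Ioi.1 hα).le)).le

/- On `[x, y]` the increment `y - x` is at most `2 h N`, because the error `e` is dominated by the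
minimum of `N`; dividing by `N` and integrating gives the claim. -/
lemma integral_le_of_le_add (hN : IsOsgood N) {M δ h e : ℝ} (hδ : ∀ α ∈ Icc 0 M, δ ≤ N α)
    (hh : 0 ≤ h) (he : e ≤ δ) (hx : 0 < x) (hy : 0 ≤ y) (hyM : y ≤ M)
    (hxy : ∀ α, x ≤ α → α ≤ y → y ≤ x + h * (N α + e)) :
    (∫ α in 0..y, 1 / N α) ≤ (∫ α in 0..x, 1 / N α) + 2 * h := by
  rcases le_or_gt y x with hle | hlt
  · linarith [hN.integral_le_integral hy hle]
  have hpiece : (∫ α in x..y, 1 / N α) ≤ ∫ _ in x..y, 2 * h / (y - x) := by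
    refine intervalIntegral.integral_mono_on hlt.le (hN.intervalIntegrable hx.le hy)
      intervalIntegrable_const fun α hα => ?_
    have hα0 : 0 ≤ α := hx.le.trans hα.1
    rw [div_le_div_iff₀ (hN.pos α hα0) (by linarith), one_mul]
    nlinarith [hxy α hα.1 hα.2, hδ α ⟨hα0, hα.2.trans hyM⟩]
  rw [intervalIntegral.integral_const, smul_eq_mul, mul_div_cancel₀ _ (by linarith)] at hpiece
  linarith [hN.integral_add hx.le hy]

lemma exists_discrete_bound (hN : IsOsgood N) (c T : ℝ) :
    ∃ M δ : ℝ, 0 < M ∧ 0 < δ ∧ ∀ h : ℝ, 0 < h → ∀ e ≤ δ, ∀ u : ℕ → ℝ, (∀ k, 0 < u k) → u 0 ≤ c →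
      (∀ k α, u k ≤ α → u (k + 1) ≤ u k + h * (N α + e)) → ∀ k : ℕ, k * h ≤ T → u k ≤ M := by
  obtain ⟨M, hcM, hM, hIM⟩ := hN.exists_lt_integral ((∫ α in 0..c, 1 / N α) + 2 * T) (max c 1)
  obtain ⟨hcM, hM1⟩ := max_le_iff.1 hcM
  obtain ⟨α₀, hα₀, hmin⟩ := isCompact_Icc.exists_isMinOn (nonempty_Icc.2 hM)
    (hN.continuousOn.mono Icc_subset_Ici_self)
  refine ⟨M, N α₀, by linarith, hN.pos _ hα₀.1, fun h hh e he u hu hu0 hstep k hk => ?_⟩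
  suffices u k ≤ M ∧ (∫ α in 0..u k, 1 / N α) ≤ (∫ α in 0..c, 1 / N α) + 2 * (k * h) from this.1
  induction k with
  | zero => exact ⟨hu0.trans hcM, by simpa using hN.integral_le_integral (hu 0).le hu0⟩
  | succ k ih =>
    push_cast at hk ⊢
    obtain ⟨-, hk_int⟩ := ih (by linarith)
    have hadvance : ∀ y, 0 ≤ y → y ≤ M → y ≤ u (k + 1) →
        (∫ α in 0..y, 1 / N α) ≤ (∫ α in 0..u k, 1 / N α) + 2 * h := fun y hy hyM hyu =>
      hN.integral_le_of_le_add (fun α hα => hmin hα) hh.le he (hu k) hy hyM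
        fun α hα _ => hyu.trans (hstep k α hα)
    have hkM : u (k + 1) ≤ M := by
      by_contra! hcon
      linarith [hadvance M hM le_rfl hcon.le]
    exact ⟨hkM, by linarith [hadvance _ (hu (k + 1)).le hkM le_rfl]⟩

end IsOsgood

/-! ### The truncated Euler scheme -/

/-- `N` bounds the generator of the Lyapunov function `V` on measures with a given moment:
`L_μ V ≤ N α` as soon as `∫ V dμ ≤ α`. -/
def IsLyapunov (a : Ed d → Ed d →L[ℝ] Ed d) (V : Ed d → ℝ) (b : Ed d → Measure (Ed d) → Ed d)
    (N : ℝ → ℝ) : Prop :=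
  ∀ α : ℝ, 0 < α → ∀ μ : Measure (Ed d), memPV V μ → (∫ x, V x ∂μ) ≤ α →
    ∀ x, generator (a x) (b x μ) V x ≤ N α

/-- The drift grows at most like `V`, locally uniformly with respect to the moment of the
measure. -/
def HasLocalGrowth (V : Ed d → ℝ) (b : Ed d → Measure (Ed d) → Ed d) : Prop :=
  ∀ α : ℝ, 0 < α → ∃ B : ℝ, 0 < B ∧ ∀ μ : Measure (Ed d), memPV V μ → (∫ x, V x ∂μ) ≤ α →
    ∀ x, ‖b x μ‖ ≤ B * V x

/-- The laws `μ k` of the Euler scheme with step `h` in which the particles that leave `{V ≤ m}`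
are sent back to the origin; `r k` is the mass that is moved in step `k`. -/
structure IsScheme (a : Ed d → Ed d →L[ℝ] Ed d) (V : Ed d → ℝ) (b : Ed d → Measure (Ed d) → Ed d)
    (N : ℝ → ℝ) (h m : ℝ) (μ : ℕ → Measure (Ed d)) (r : ℕ → ℝ) : Prop where
  one_le : 1 ≤ m
  apply_zero_le : V 0 ≤ m
  pos : 0 < h
  mesh_le : h ≤ 1 / m
  prob : ∀ k, IsProbabilityMeasure (μ k)
  ae_le : ∀ k, ∀ᵐ x ∂(μ k), V x ≤ m
  nonneg : ∀ k, 0 ≤ r k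
  drift : ∀ k, ∀ᵐ x ∂(μ k), h * ‖b x (μ k)‖ ^ 2 ≤ 1 / m
  defect : ∀ k (f : Ed d → ℝ), Measurable f → ∀ C, (∀ x, |f x| ≤ C) →
    |(∫ x, f x ∂(μ (k + 1))) - ∫ x, eulerOp a h (fun y => b y (μ k)) f x ∂(μ k)| ≤ 2 * C * r k
  lyapunov : ∀ k α, 0 < α → (∫ x, V x ∂(μ k)) ≤ α →
    (∫ x, V x ∂(μ (k + 1))) + (m - V 0) * r k ≤ (∫ x, V x ∂(μ k)) + h * (N α + 1 / m)

/-- The measures produced by the truncated Euler scheme started from `ν`. -/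
def schemeSeq (a : Ed d → Ed d →L[ℝ] Ed d) (V : Ed d → ℝ) (b : Ed d → Measure (Ed d) → Ed d)
    (h m : ℝ) (ν : Measure (Ed d)) : ℕ → Measure (Ed d)
  | 0 => ν.map (cutMap V m)
  | k + 1 => (eulerStep a h (fun x => b x (schemeSeq a V b h m ν k))
      (schemeSeq a V b h m ν k)).map (cutMap V m)

/-- A sequence of discrete flows `k ↦ μ j k` with meshes `h j → 0` which satisfy the Euler scheme
up to defects `r j k` that are asymptotically negligible on bounded time intervals. -/
structure IsEulerApprox (a : Ed d → Ed d →L[ℝ] Ed d) (V : Ed d → ℝ)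
    (b : Ed d → Measure (Ed d) → Ed d) (h : ℕ → ℝ) (μ : ℕ → ℕ → Measure (Ed d))
    (r : ℕ → ℕ → ℝ) : Prop where
  pos : ∀ j, 0 < h j
  tendsto_mesh : Tendsto h atTop (𝓝 0)
  memPV : ∀ j k, memPV V (μ j k)
  moment : ∀ T : ℝ, ∃ M : ℝ, 0 < M ∧ ∀ᶠ j in atTop, ∀ k : ℕ, k * h j ≤ T →
    (∫ x, V x ∂(μ j k)) ≤ M
  drift : ∀ ε : ℝ, 0 < ε → ∀ᶠ j in atTop, ∀ k, ∀ᵐ x ∂(μ j k), h j * ‖b x (μ j k)‖ ^ 2 ≤ ε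
  nonneg : ∀ j k, 0 ≤ r j k
  defect : ∀ j k (f : Ed d → ℝ), Measurable f → ∀ C, (∀ x, |f x| ≤ C) →
    |(∫ x, f x ∂(μ j (k + 1))) - ∫ x, eulerOp a (h j) (fun y => b y (μ j k)) f x ∂(μ j k)| ≤
      2 * C * r j k
  small_defect : ∀ (T : ℝ) (δ : ℝ), 0 < δ → ∀ᶠ j in atTop, ∀ N : ℕ, N * h j ≤ T →
    ∑ k ∈ Finset.range N, r j k ≤ δ

section Bounds

variable {X : Type*} [MeasurableSpace X] {V : X → ℝ} {μ : Measure X}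

lemma integrable_of_ae_le [IsFiniteMeasure μ] {m : ℝ} (hV : Measurable V) (hV0 : ∀ x, 0 ≤ V x)
    (h : ∀ᵐ x ∂μ, V x ≤ m) : Integrable V μ :=
  Integrable.of_bound hV.aestronglyMeasurable m
    (h.mono fun x hx => (Real.norm_of_nonneg (hV0 x)).trans_le hx)

lemma integral_le_of_ae_le [IsProbabilityMeasure μ] {m : ℝ} (hV : Integrable V μ)
    (h : ∀ᵐ x ∂μ, V x ≤ m) : (∫ x, V x ∂μ) ≤ m := by
  simpa using integral_mono_ae hV (integrable_const m) h

lemma measureReal_ge_le_integral_div {R : ℝ} (hV : Integrable V μ) (hV0 : ∀ x, 0 ≤ V x)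
    (hR : 0 < R) : μ.real {x | R ≤ V x} ≤ (∫ x, V x ∂μ) / R := by
  rw [le_div_iff₀' hR]
  exact mul_meas_ge_le_integral_of_nonneg (Eventually.of_forall hV0) hV R

end Bounds

section Construction

variable {Λ h m : ℝ} {a : Ed d → Ed d →L[ℝ] Ed d} {V : Ed d → ℝ}
  {b : Ed d → Measure (Ed d) → Ed d} {ν : Measure (Ed d)}

lemma isProbabilityMeasure_schemeSeq (ha : ∀ x, IsElliptic Λ (a x)) (hac : Continuous a)
    (hV : Measurable V) (hb : ∀ μ, Measurable fun x => b x μ) [IsProbabilityMeasure ν] (k : ℕ) :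
    IsProbabilityMeasure (schemeSeq a V b h m ν k) := by
  induction k with
  | zero => exact Measure.isProbabilityMeasure_map (measurable_cutMap hV).aemeasurable
  | succ k ih =>
    have hstep := isProbabilityMeasure_eulerStep (h := h) (μ := schemeSeq a V b h m ν k) ha hac
      (hb (schemeSeq a V b h m ν k))
    exact Measure.isProbabilityMeasure_map (measurable_cutMap hV).aemeasurable

lemma ae_schemeSeq_le (hV : Measurable V) (hm : V 0 ≤ m) (k : ℕ) :
    ∀ᵐ x ∂(schemeSeq a V b h m ν k), V x ≤ m := by
  cases k with
  | zero => exact ae_map_cutMap_le hV hm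
  | succ k => exact ae_map_cutMap_le hV hm

lemma integral_schemeSeq_zero_le (hV : Measurable V) (hV0 : ∀ x, 0 ≤ V x) (hm : V 0 ≤ m)
    (hν : Integrable V ν) : (∫ x, V x ∂(schemeSeq a V b h m ν 0)) ≤ ∫ x, V x ∂ν := by
  rw [schemeSeq, integral_map (measurable_cutMap hV).aemeasurable hV.aestronglyMeasurable]
  exact integral_mono_of_nonneg (Eventually.of_forall fun y => hV0 _) hν
    (Eventually.of_forall fun y => apply_cutMap_le_self hm y)

lemma tvLe_schemeSeq_zero [IsFiniteMeasure ν] (hV : Measurable V) :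
    TVLe (schemeSeq a V b h m ν 0) ν (2 * ν.real {y | m < V y}) := fun f hf hf1 => by
  rw [schemeSeq]
  simpa only [mul_one] using abs_integral_map_cutMap_sub_le hV hf hf1

lemma memPV_schemeSeq (ha : ∀ x, IsElliptic Λ (a x)) (hac : Continuous a) (hV : Measurable V)
    (hV0 : ∀ x, 0 ≤ V x) (hm : V 0 ≤ m) (hb : ∀ μ, Measurable fun x => b x μ)
    [IsProbabilityMeasure ν] (k : ℕ) : memPV V (schemeSeq a V b h m ν k) :=
  have hprob := isProbabilityMeasure_schemeSeq ha hac hV hb k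
  ⟨hprob, integrable_of_ae_le hV hV0 (ae_schemeSeq_le hV hm k)⟩

lemma ae_mul_sq_norm_schemeSeq_le (ha : ∀ x, IsElliptic Λ (a x)) (hac : Continuous a)
    (hV : Measurable V) (hV0 : ∀ x, 0 ≤ V x) (hm : V 0 ≤ m) (hb : ∀ μ, Measurable fun x => b x μ)
    [IsProbabilityMeasure ν] (hh : 0 ≤ h) {B : ℝ} (hB : 0 ≤ B)
    (hBb : ∀ μ : Measure (Ed d), memPV V μ → (∫ x, V x ∂μ) ≤ m → ∀ x, ‖b x μ‖ ≤ B * V x) (k : ℕ) :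
    ∀ᵐ x ∂(schemeSeq a V b h m ν k),
      h * ‖b x (schemeSeq a V b h m ν k)‖ ^ 2 ≤ h * (B * m) ^ 2 := by
  have hmem := memPV_schemeSeq (h := h) (ν := ν) ha hac hV hV0 hm hb k
  have hprob := hmem.1
  have hae := ae_schemeSeq_le (a := a) (b := b) (h := h) (ν := ν) hV hm k
  filter_upwards [hae] with x hx
  have hbx := hBb _ hmem (integral_le_of_ae_le hmem.2 hae) x
  gcongr
  exact hbx.trans (mul_le_mul_of_nonneg_left hx hB)

lemma exists_isScheme (ha : ∀ x, IsElliptic Λ (a x)) (hac : Continuous a) (hV : ContDiff ℝ 2 V)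
    (hV0 : ∀ x, 0 ≤ V x) (hVinf : Tendsto V (cocompact (Ed d)) atTop)
    (hb : ∀ μ, Measurable fun x => b x μ) {N : ℝ → ℝ} (hN : IsLyapunov a V b N)
    (hGrow : HasLocalGrowth V b) (hm1 : 1 ≤ m) (hm : V 0 ≤ m) (ν : Measure (Ed d))
    [IsProbabilityMeasure ν] :
    ∃ (h : ℝ) (r : ℕ → ℝ), IsScheme a V b N h m (schemeSeq a V b h m ν) r := by
  have hm0 : 0 < m := zero_lt_one.trans_le hm1
  have hVm := hV.continuous.measurable
  obtain ⟨κ, hκ, hstep⟩ := exists_integral_map_cutMap_eulerStep_le ha hac hV hV0 hVinf hm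
    (one_div_pos.2 hm0)
  obtain ⟨B, hB, hBb⟩ := hGrow m hm0
  have hmin : 0 < min κ (1 / m) := lt_min hκ (one_div_pos.2 hm0)
  obtain ⟨h, hh⟩ : ∃ h, h = min κ (1 / m) / (1 + (B * m) ^ 2) := ⟨_, rfl⟩
  have hpos : 0 < h := hh ▸ by positivity
  have hle : h ≤ min κ (1 / m) := hh ▸ div_le_self hmin.le (by nlinarith)
  have hdrift_le : h * (B * m) ^ 2 ≤ min κ (1 / m) := by
    rw [hh, div_mul_eq_mul_div, div_le_iff₀ (by positivity)]
    nlinarith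
  have hprob (k : ℕ) := isProbabilityMeasure_schemeSeq (h := h) (m := m) (ν := ν) ha hac hVm hb k
  have hae (k : ℕ) := ae_schemeSeq_le (a := a) (b := b) (h := h) (ν := ν) hVm hm k
  have hmem (k : ℕ) := memPV_schemeSeq (h := h) (ν := ν) ha hac hVm hV0 hm hb k
  have hdrift (k : ℕ) := (ae_mul_sq_norm_schemeSeq_le (ν := ν) ha hac hVm hV0 hm hb hpos.le hB.le
    hBb k).mono fun x hx => hx.trans hdrift_le
  refine ⟨h, fun k => (eulerStep a h (fun x => b x (schemeSeq a V b h m ν k))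
    (schemeSeq a V b h m ν k)).real {y | m < V y}, hm1, hm, hpos, hle.trans (min_le_right _ _),
    hprob, hae, fun k => measureReal_nonneg,
    fun k => (hdrift k).mono fun x hx => hx.trans (min_le_right _ _), fun k f hf C hC => ?_,
    fun k α hα hαV => ?_⟩
  · have := isProbabilityMeasure_eulerStep (h := h) (μ := schemeSeq a V b h m ν k) ha hac
      (hb (schemeSeq a V b h m ν k))
    rw [← integral_eulerStep ha hac (hb _) hf hC]
    exact abs_integral_map_cutMap_sub_le hVm hf hC
  · exact hstep h hpos (hle.trans (min_le_left _ _)) _ (hprob k) (hae k) _ (hb _)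
      ((hdrift k).mono fun x hx => hx.trans (min_le_left _ _)) (N α) (hN α hα _ (hmem k) hαV)

end Construction

namespace IsScheme

variable {a : Ed d → Ed d →L[ℝ] Ed d} {V : Ed d → ℝ} {b : Ed d → Measure (Ed d) → Ed d}
  {N : ℝ → ℝ}

lemma memPV {h m : ℝ} {μ : ℕ → Measure (Ed d)} {r : ℕ → ℝ} (hs : IsScheme a V b N h m μ r)
    (hV : Measurable V) (hV0 : ∀ x, 0 ≤ V x) (k : ℕ) : memPV V (μ k) :=
  have := hs.prob k
  ⟨hs.prob k, integrable_of_ae_le hV hV0 (hs.ae_le k)⟩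

lemma integral_add_mul_sum_le {h m M : ℝ} {μ : ℕ → Measure (Ed d)} {r : ℕ → ℝ}
    (hs : IsScheme a V b N h m μ r) (hM : 0 < M) {n : ℕ}
    (hn : ∀ k < n, (∫ x, V x ∂(μ k)) ≤ M) :
    (∫ x, V x ∂(μ n)) + (m - V 0) * ∑ k ∈ Finset.range n, r k ≤
      (∫ x, V x ∂(μ 0)) + n * h * (N M + 1 / m) := by
  induction n with
  | zero => simp
  | succ n ih =>
    have hprev := ih fun k hk => hn k (hk.trans n.lt_succ_self)
    have hstep := hs.lyapunov n M hM (hn n n.lt_succ_self)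
    rw [Finset.sum_range_succ]
    push_cast
    linarith

variable {h m : ℕ → ℝ} {μ : ℕ → ℕ → Measure (Ed d)} {r : ℕ → ℕ → ℝ}

lemma exists_moment_bound (hs : ∀ j, IsScheme a V b N (h j) (m j) (μ j) (r j))
    (hm : Tendsto m atTop atTop) (hV : Measurable V) (hV1 : ∀ x, 1 ≤ V x) (hN : IsOsgood N) {c : ℝ}
    (hc : ∀ j, (∫ x, V x ∂(μ j 0)) ≤ c) (T : ℝ) :
    ∃ M : ℝ, 0 < M ∧ ∀ᶠ j in atTop, ∀ k : ℕ, k * h j ≤ T → (∫ x, V x ∂(μ j k)) ≤ M := by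
  obtain ⟨M, δ, hM, hδ, hbound⟩ := hN.exists_discrete_bound c T
  refine ⟨M, hM, ?_⟩
  filter_upwards [hm.eventually_ge_atTop (1 / δ)] with j hj
  have hmj : 0 < m j := zero_lt_one.trans_le (hs j).one_le
  have hpos (k : ℕ) : 0 < ∫ x, V x ∂(μ j k) := by
    have := (hs j).prob k
    refine zero_lt_one.trans_le ?_
    simpa using integral_mono (integrable_const (1 : ℝ))
      ((hs j).memPV hV (fun x => zero_le_one.trans (hV1 x)) k).2 hV1
  refine hbound (h j) (hs j).pos (1 / m j) ((one_div_le hδ hmj).1 hj) _ hpos (hc j)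
    fun k α hα => ?_
  have hstep := (hs j).lyapunov k α ((hpos k).trans_le hα) hα
  have hloss := mul_nonneg (sub_nonneg.2 (hs j).apply_zero_le) ((hs j).nonneg k)
  linarith

lemma eventually_sum_le (hs : ∀ j, IsScheme a V b N (h j) (m j) (μ j) (r j))
    (hm : Tendsto m atTop atTop) (hV : Measurable V) (hV1 : ∀ x, 1 ≤ V x) (hN : IsOsgood N) {c : ℝ}
    (hc : ∀ j, (∫ x, V x ∂(μ j 0)) ≤ c) (T : ℝ) {δ : ℝ} (hδ : 0 < δ) :
    ∀ᶠ j in atTop, ∀ n : ℕ, n * h j ≤ T → ∑ k ∈ Finset.range n, r j k ≤ δ := by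
  obtain ⟨M, hM, hmom⟩ := exists_moment_bound hs hm hV hV1 hN hc T
  have hNM := hN.pos M hM.le
  filter_upwards [hmom, hm.eventually_ge_atTop (V 0 + (|c| + |T| * (N M + 1)) / δ + 1)]
    with j hj hmj n hn
  have hm1 : 1 / m j ≤ 1 := (div_le_one (zero_lt_one.trans_le (hs j).one_le)).2 (hs j).one_le
  have hsum := (hs j).integral_add_mul_sum_le hM (n := n) fun k hk => hj k
    (le_trans (mul_le_mul_of_nonneg_right (by exact_mod_cast hk.le) (hs j).pos.le) hn)
  have hnonneg : 0 ≤ ∫ x, V x ∂(μ j n) := integral_nonneg fun x => zero_le_one.trans (hV1 x)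
  have htime : n * h j * (N M + 1 / m j) ≤ |T| * (N M + 1) := by
    have hsum0 : 0 ≤ N M + 1 / m j :=
      add_nonneg hNM.le (one_div_nonneg.2 (zero_le_one.trans (hs j).one_le))
    gcongr
    exact hn.trans (le_abs_self T)
  have hgap : (|c| + |T| * (N M + 1)) / δ + 1 ≤ m j - V 0 := by linarith
  have hgap0 : 0 < m j - V 0 := lt_of_lt_of_le (by positivity) hgap
  refine le_of_mul_le_mul_left ?_ hgap0
  calc (m j - V 0) * ∑ k ∈ Finset.range n, r j k ≤ |c| + |T| * (N M + 1) := by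
        linarith [hc j, le_abs_self c]
    _ = (|c| + |T| * (N M + 1)) / δ * δ := by field_simp
    _ ≤ (m j - V 0) * δ := by
        gcongr
        linarith

theorem isEulerApprox (hs : ∀ j, IsScheme a V b N (h j) (m j) (μ j) (r j))
    (hm : Tendsto m atTop atTop) (hV : Measurable V) (hV1 : ∀ x, 1 ≤ V x) (hN : IsOsgood N) {c : ℝ}
    (hc : ∀ j, (∫ x, V x ∂(μ j 0)) ≤ c) : IsEulerApprox a V b h μ r where
  pos j := (hs j).pos
  tendsto_mesh := squeeze_zero (fun j => (hs j).pos.le) (fun j => (hs j).mesh_le)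
    (by simpa only [one_div, Function.comp_def] using tendsto_inv_atTop_zero.comp hm)
  memPV j := (hs j).memPV hV fun x => zero_le_one.trans (hV1 x)
  moment := exists_moment_bound hs hm hV hV1 hN hc
  drift ε hε := by
    filter_upwards [hm.eventually_ge_atTop (1 / ε)] with j hj k
    filter_upwards [(hs j).drift k] with x hx
    exact hx.trans ((one_div_le hε (zero_lt_one.trans_le (hs j).one_le)).1 hj)
  nonneg j := (hs j).nonneg
  defect j := (hs j).defect
  small_defect T δ hδ := eventually_sum_le hs hm hV hV1 hN hc T hδ

end IsScheme

theorem exists_isEulerApprox {Λ : ℝ} {a : Ed d → Ed d →L[ℝ] Ed d} {V : Ed d → ℝ}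
    {b : Ed d → Measure (Ed d) → Ed d} {N : ℝ → ℝ} {ν : Measure (Ed d)}
    (ha : ∀ x, IsElliptic Λ (a x)) (hac : Continuous a) (hV : ContDiff ℝ 2 V)
    (hV1 : ∀ x, 1 ≤ V x) (hVinf : Tendsto V (cocompact (Ed d)) atTop)
    (hb : ∀ μ, Measurable fun x => b x μ) (hLyap : IsLyapunov a V b N) (hN : IsOsgood N)
    (hGrow : HasLocalGrowth V b) (hν : memPV V ν) :
    ∃ (h : ℕ → ℝ) (μ : ℕ → ℕ → Measure (Ed d)) (r : ℕ → ℕ → ℝ), IsEulerApprox a V b h μ r ∧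
      TendstoTV (fun j => μ j 0) atTop ν := by
  have hV0 (x : Ed d) : 0 ≤ V x := zero_le_one.trans (hV1 x)
  have hVm := hV.continuous.measurable
  have hν_prob := hν.1
  have hlevel (j : ℕ) : V 0 ≤ V 0 + j := le_add_of_nonneg_right j.cast_nonneg
  have hlim : Tendsto (fun j : ℕ => V 0 + j) atTop atTop :=
    tendsto_atTop_add_const_left _ _ tendsto_natCast_atTop_atTop
  choose h r hs using fun j : ℕ => exists_isScheme ha hac hV hV0 hVinf hb hLyap hGrow
    ((hV1 0).trans (hlevel j)) (hlevel j) ν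
  refine ⟨h, _, r, IsScheme.isEulerApprox hs hlim hVm hV1 hN fun j =>
    integral_schemeSeq_zero_le hVm hV0 (hlevel j) hν.2, fun δ hδ => ?_⟩
  have hI : 0 ≤ ∫ x, V x ∂ν := integral_nonneg hV0
  filter_upwards [hlim.eventually_ge_atTop (2 * ((∫ x, V x ∂ν) + 1) / δ)] with j hj
  have hmj : 0 < V 0 + (j : ℝ) := lt_of_lt_of_le (by positivity) hj
  refine (tvLe_schemeSeq_zero hVm).mono ?_
  calc 2 * ν.real {y | V 0 + (j : ℝ) < V y} ≤ 2 * ν.real {y | V 0 + (j : ℝ) ≤ V y} := by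
        exact mul_le_mul_of_nonneg_left (measureReal_mono fun y (hy : _ < V y) => hy.le)
          zero_le_two
    _ ≤ 2 * ((∫ x, V x ∂ν) / (V 0 + j)) := by
        gcongr
        exact measureReal_ge_le_integral_div hν.2 hV0 hmj
    _ ≤ δ := by
        rw [div_le_iff₀ hδ] at hj
        rw [← mul_div_assoc, div_le_iff₀ hmj]
        linarith

/-! ### The Euler scheme against the smoothing operators -/

lemma div_sqrt_add_le {x h : ℝ} (hx : 0 ≤ x) (hh : 0 < h) :
    h / √(x + h) ≤ 2 * (√(x + h) - √x) := by
  have hs : 0 < √(x + h) := Real.sqrt_pos.2 (by linarith)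
  have hle : √x ≤ √(x + h) := Real.sqrt_le_sqrt (by linarith)
  have hsq : √x ^ 2 = x := Real.sq_sqrt hx
  have hsq' : √(x + h) ^ 2 = x + h := Real.sq_sqrt (by linarith)
  rw [div_le_iff₀ hs]
  nlinarith [mul_nonneg (sub_nonneg.2 hle) (Real.sqrt_nonneg x)]

lemma abs_sub_le_add_sum_of_forall_abs_sub_le {Φ : ℕ → ℕ → ℝ} {g ρ : ℕ → ℝ} {n : ℕ}
    (h : ∀ l < n, ∀ i, |Φ i (l + 1) - Φ (i + 1) l| ≤ g (i + 1) - g i + ρ l) (i : ℕ) :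
    |Φ i n - Φ (i + n) 0| ≤ g (i + n) - g i + ∑ l ∈ Finset.range n, ρ l := by
  induction n generalizing i with
  | zero => simp
  | succ n ih =>
    have hlast := h n n.lt_succ_self i
    have hrest := ih (fun l hl => h l (hl.trans n.lt_succ_self)) (i + 1)
    rw [show i + (n + 1) = i + 1 + n by omega, Finset.sum_range_succ]
    refine (abs_sub_le _ _ _).trans ((add_le_add hlast hrest).trans_eq ?_)
    ring

section FlowComparison

variable {E : Type*} [NormedAddCommGroup E] [InnerProductSpace ℝ E] [FiniteDimensional ℝ E]
  [MeasurableSpace E] [BorelSpace E] {Λ : ℝ} {a : E → E →L[ℝ] E}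

lemma exists_abs_flowOp_le (ha : ∀ x, IsElliptic Λ (a x)) :
    ∃ C : ℝ, 0 < C ∧ ∀ f : E → ℝ, (∀ x, |f x| ≤ 1) → ∀ τ, 0 ≤ τ → ∀ x, |flowOp a τ f x| ≤ C := by
  obtain ⟨C, hC, hle⟩ := exists_abs_smoothOp_le ha
  refine ⟨max C 1, lt_max_of_lt_left hC, fun f hf1 τ hτ x => ?_⟩
  rcases hτ.eq_or_lt with rfl | hτ
  · rw [flowOp_zero]
    exact (hf1 x).trans (le_max_right _ _)
  · rw [flowOp_of_pos hτ]
    exact (hle f hf1 τ hτ x).trans (le_max_left _ _)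

lemma exists_abs_integral_eulerOp_flowOp_sub_le {K : ℝ≥0} (ha : ∀ x, IsElliptic Λ (a x))
    (haL : LipschitzWith K a) :
    ∃ C : ℝ, 0 < C ∧ ∀ f : E → ℝ, Measurable f → (∀ x, |f x| ≤ 1) → ∀ τ h, 0 ≤ τ → 0 < h →
      ∀ (μ : Measure E) [IsProbabilityMeasure μ] (β : E → E), Measurable β →
        Integrable (fun x => ‖β x‖) μ → (∀ᵐ x ∂μ, h * ‖β x‖ ^ 2 ≤ 1) →
          |(∫ x, eulerOp a h β (flowOp a τ f) x ∂μ) - ∫ x, flowOp a (τ + h) f x ∂μ| ≤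
            C * (√(τ + h) - √τ) * (1 + ∫ x, ‖β x‖ ∂μ) := by
  have hac := haL.continuous
  obtain ⟨C, hC, hstep⟩ := exists_abs_eulerOp_flowOp_sub_le ha haL
  obtain ⟨C', -, hflow⟩ := exists_abs_flowOp_le ha
  refine ⟨2 * C, by positivity, fun f hf hf1 τ h hτ hh μ _ β hβ hβi hβ1 => ?_⟩
  have hstart := integrable_eulerOp (h := h) (μ := μ) ha hac hβ (measurable_flowOp ha hac hτ hf)
    (hflow f hf1 τ hτ)
  have hend : Integrable (flowOp a (τ + h) f) μ :=
    Integrable.of_bound (measurable_flowOp ha hac (by positivity) hf).aestronglyMeasurable C'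
      (Eventually.of_forall (hflow f hf1 (τ + h) (by positivity)))
  have hbound : Integrable (fun x => C * (h / √(τ + h)) * (1 + ‖β x‖)) μ :=
    ((integrable_const 1).add hβi).const_mul _
  rw [← integral_sub hstart hend, ← Real.norm_eq_abs]
  calc _ ≤ ∫ x, C * (h / √(τ + h)) * (1 + ‖β x‖) ∂μ :=
        norm_integral_le_of_norm_le hbound (hβ1.mono fun x hx => hstep f hf hf1 τ h hτ hh β x hx)
    _ = C * (h / √(τ + h)) * (1 + ∫ x, ‖β x‖ ∂μ) := by
        rw [integral_const_mul, integral_add (integrable_const 1) hβi]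
        simp
    _ ≤ C * (2 * (√(τ + h) - √τ)) * (1 + ∫ x, ‖β x‖ ∂μ) := by
        exact mul_le_mul_of_nonneg_right (mul_le_mul_of_nonneg_left (div_sqrt_add_le hτ hh) hC.le)
          (add_nonneg zero_le_one (integral_nonneg fun x => norm_nonneg _))
    _ = _ := by ring

end FlowComparison

namespace IsEulerApprox

variable {Λ : ℝ} {K : ℝ≥0} {a : Ed d → Ed d →L[ℝ] Ed d} {V : Ed d → ℝ}
  {b : Ed d → Measure (Ed d) → Ed d} {h : ℕ → ℝ} {μ : ℕ → ℕ → Measure (Ed d)} {r : ℕ → ℕ → ℝ}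

lemma eventually_sum_add_le (hμ : IsEulerApprox a V b h μ r) (T : ℝ) {δ : ℝ} (hδ : 0 < δ) :
    ∀ᶠ j in atTop, ∀ k N : ℕ, (k + N : ℕ) * h j ≤ T →
      ∑ l ∈ Finset.range N, r j (k + l) ≤ δ := by
  filter_upwards [hμ.small_defect T δ hδ] with j hj k N hkN
  have hhead : 0 ≤ ∑ l ∈ Finset.range k, r j l := Finset.sum_nonneg fun l _ => hμ.nonneg j l
  have hsum := hj (k + N) hkN
  rw [Finset.sum_range_add] at hsum
  linarith

lemma exists_integral_norm_drift_le (hμ : IsEulerApprox a V b h μ r)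
    (hb : ∀ σ, Measurable fun x => b x σ) (hGrow : HasLocalGrowth V b) (T : ℝ) :
    ∃ D : ℝ, 0 < D ∧ ∀ᶠ j in atTop, ∀ k : ℕ, k * h j ≤ T →
      Integrable (fun x => ‖b x (μ j k)‖) (μ j k) ∧ (∫ x, ‖b x (μ j k)‖ ∂(μ j k)) ≤ D := by
  obtain ⟨M, hM, hmoment⟩ := hμ.moment T
  obtain ⟨B, hB, hbound⟩ := hGrow M hM
  refine ⟨B * M, by positivity, ?_⟩
  filter_upwards [hmoment] with j hj k hk
  have hmem := hμ.memPV j k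
  have hle := hbound _ hmem (hj k hk)
  have hinteg : Integrable (fun x => ‖b x (μ j k)‖) (μ j k) :=
    (hmem.2.const_mul B).mono' (hb _).norm.aestronglyMeasurable
      (Eventually.of_forall fun x => (norm_norm _).trans_le (hle x))
  refine ⟨hinteg, (integral_mono hinteg (hmem.2.const_mul B) hle).trans ?_⟩
  rw [integral_const_mul]
  exact mul_le_mul_of_nonneg_left (hj k hk) hB.le

lemma exists_abs_integral_flowOp_succ_sub_le (hμ : IsEulerApprox a V b h μ r)
    (ha : ∀ x, IsElliptic Λ (a x)) (haL : LipschitzWith K a)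
    (hb : ∀ σ, Measurable fun x => b x σ) (hGrow : HasLocalGrowth V b) (T : ℝ) :
    ∃ C C' : ℝ, 0 < C ∧ 0 < C' ∧ ∀ᶠ j in atTop, ∀ l : ℕ, l * h j ≤ T →
      ∀ f : Ed d → ℝ, Measurable f → (∀ x, |f x| ≤ 1) → ∀ i : ℕ,
        |(∫ x, flowOp a (i * h j) f x ∂(μ j (l + 1))) -
          ∫ x, flowOp a ((i + 1 : ℕ) * h j) f x ∂(μ j l)| ≤
        C * √((i + 1 : ℕ) * h j) - C * √(i * h j) + C' * r j l := by
  obtain ⟨C, hC, hstep⟩ := exists_abs_integral_eulerOp_flowOp_sub_le ha haL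
  obtain ⟨C', hC', hflow⟩ := exists_abs_flowOp_le ha
  obtain ⟨D, hD, hdrift⟩ := hμ.exists_integral_norm_drift_le hb hGrow T
  refine ⟨C * (1 + D), 2 * C', by positivity, by positivity, ?_⟩
  filter_upwards [hdrift, hμ.drift 1 one_pos] with j hDj hb1 l hl f hf hf1 i
  have hpos := hμ.pos j
  have hprob := (hμ.memPV j l).1
  have htime : 0 ≤ i * h j := by positivity
  obtain ⟨hbi, hbD⟩ := hDj l hl
  have hdefect := hμ.defect j l _ (measurable_flowOp ha haL.continuous htime hf) C'
    (hflow f hf1 _ htime)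
  have hsmooth := hstep f hf hf1 (i * h j) (h j) htime hpos (μ j l) _ (hb _) hbi (hb1 l)
  rw [show (i : ℝ) * h j + h j = (i + 1 : ℕ) * h j by push_cast; ring] at hsmooth
  have hsqrt : 0 ≤ √((i + 1 : ℕ) * h j) - √(i * h j) :=
    sub_nonneg.2 (Real.sqrt_le_sqrt (by gcongr; omega))
  refine (abs_sub_le _ _ _).trans ((add_le_add hdefect (hsmooth.trans
    (mul_le_mul_of_nonneg_left (add_le_add_right hbD 1) (by positivity)))).trans_eq ?_)
  ring

theorem exists_abs_integral_sub_flowOp_le (hμ : IsEulerApprox a V b h μ r)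
    (ha : ∀ x, IsElliptic Λ (a x)) (haL : LipschitzWith K a)
    (hb : ∀ σ, Measurable fun x => b x σ) (hGrow : HasLocalGrowth V b) (T : ℝ) :
    ∃ C : ℝ, 0 < C ∧ ∀ δ : ℝ, 0 < δ → ∀ᶠ j in atTop, ∀ k N : ℕ, (k + N : ℕ) * h j ≤ T →
      ∀ f : Ed d → ℝ, Measurable f → (∀ x, |f x| ≤ 1) →
        |(∫ x, f x ∂(μ j (k + N))) - ∫ x, flowOp a (N * h j) f x ∂(μ j k)| ≤
          C * √(N * h j) + δ := by
  obtain ⟨C, C', hC, hC', hstep⟩ := hμ.exists_abs_integral_flowOp_succ_sub_le ha haL hb hGrow T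
  refine ⟨C, hC, fun δ hδ => ?_⟩
  filter_upwards [hstep, hμ.eventually_sum_add_le T (δ := δ / C') (by positivity)]
    with j hone hsum k N hkN f hf hf1
  have hpos := hμ.pos j
  have htotal := abs_sub_le_add_sum_of_forall_abs_sub_le (n := N)
    (Φ := fun i l => ∫ x, flowOp a (i * h j) f x ∂(μ j (k + l))) (g := fun i => C * √(i * h j))
    (ρ := fun l => C' * r j (k + l))
    (fun l hl i => hone (k + l) (le_trans (by gcongr) hkN) f hf hf1 i) 0
  simp only [Nat.cast_zero, zero_mul, flowOp_zero, zero_add, add_zero, Real.sqrt_zero, mul_zero,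
    sub_zero, ← Finset.mul_sum] at htotal
  refine htotal.trans (add_le_add_right ?_ _)
  rw [← le_div_iff₀' hC']
  exact hsum k N hkN

end IsEulerApprox

/-! ### Compactness of approximating flows -/

section Smoothing

variable {E : Type*} [NormedAddCommGroup E] [InnerProductSpace ℝ E] [FiniteDimensional ℝ E]
  [MeasurableSpace E] [BorelSpace E]

/-- The density of the image of the measure `σ` under the adjoint of the smoothing operator
`smoothOp a τ`. -/
def smoothDensity (a : E → E →L[ℝ] E) (τ : ℝ) (σ : Measure E) (y : E) : ℝ :=
  ∫ x, gauss (τ • a y) (x - y) ∂σ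

lemma smoothDensity_nonneg (a : E → E →L[ℝ] E) (τ : ℝ) (σ : Measure E) (y : E) :
    0 ≤ smoothDensity a τ σ y :=
  integral_nonneg fun _ => gauss_nonneg _ _

variable {Λ : ℝ} {a : E → E →L[ℝ] E} {τ : ℝ} {f : E → ℝ}

lemma integral_smoothOp (ha : ∀ x, IsElliptic Λ (a x)) (hac : Continuous a) (hτ : 0 < τ)
    (hf : Measurable f) (hf1 : ∀ x, |f x| ≤ 1) (σ : Measure E) [IsFiniteMeasure σ] :
    ∫ x, smoothOp a τ f x ∂σ = ∫ y, smoothDensity a τ σ y * f y := by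
  simpa only [one_mul, id, smoothDensity] using integral_mul_smoothOp ha hac hτ hf hf1 (κ := σ)
    (integrable_const (1 : ℝ)) measurable_id

lemma integrable_smoothDensity_mul (ha : ∀ x, IsElliptic Λ (a x)) (hac : Continuous a)
    (hτ : 0 < τ) (hf : Measurable f) (hf1 : ∀ x, |f x| ≤ 1) (σ : Measure E) [IsFiniteMeasure σ] :
    Integrable fun y => smoothDensity a τ σ y * f y := by
  simpa only [one_mul, id, integral_mul_const, smoothDensity] using
    (integrable_prod_mul_gauss_smul_mul ha hac hτ hf hf1 (κ := σ) (integrable_const (1 : ℝ))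
      measurable_id).integral_prod_right

lemma integrable_smoothDensity (ha : ∀ x, IsElliptic Λ (a x)) (hac : Continuous a) (hτ : 0 < τ)
    (σ : Measure E) [IsFiniteMeasure σ] : Integrable (smoothDensity a τ σ) := by
  simpa only [mul_one] using
    integrable_smoothDensity_mul ha hac hτ (measurable_const (a := (1 : ℝ))) (by simp) σ

lemma integrable_smoothOp (ha : ∀ x, IsElliptic Λ (a x)) (hac : Continuous a) (hτ : 0 < τ)
    (hf : Measurable f) (hf1 : ∀ x, |f x| ≤ 1) (σ : Measure E) [IsFiniteMeasure σ] :
    Integrable (smoothOp a τ f) σ := by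
  obtain ⟨C, -, hle⟩ := exists_abs_smoothOp_le ha
  exact Integrable.of_bound (measurable_smoothOp ha hac hτ hf).aestronglyMeasurable C
    (Eventually.of_forall (hle f hf1 τ hτ))

lemma exists_abs_integral_smoothOp_sub_le (ha : ∀ x, IsElliptic Λ (a x)) (hac : Continuous a) :
    ∃ C : ℝ, 0 < C ∧ ∀ f : E → ℝ, Measurable f → (∀ x, |f x| ≤ 1) →
      ∀ τ τ' : ℝ, 0 < τ → |τ' - τ| ≤ τ / 2 → ∀ σ : Measure E, IsProbabilityMeasure σ →
        |(∫ x, smoothOp a τ' f x ∂σ) - ∫ x, smoothOp a τ f x ∂σ| ≤ C * (|τ' - τ| / τ) := by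
  obtain ⟨C, hC, hle⟩ := exists_abs_smoothOp_sub_le ha hac
  refine ⟨2 * C, by positivity, fun f hf hf1 τ τ' hτ hττ' σ _ => ?_⟩
  obtain ⟨hlow, hupp⟩ := abs_le.1 hττ'
  have hτ' : 0 < τ' := by linarith
  have hpoint : ∀ x, |smoothOp a τ' f x - smoothOp a τ f x| ≤ 2 * C * (|τ' - τ| / τ) := by
    intro x
    rcases le_total τ τ' with h | h
    · rw [abs_of_nonneg (sub_nonneg.2 h)]
      refine (hle f hf hf1 τ τ' hτ h (by linarith) x).trans ?_
      exact mul_le_mul_of_nonneg_right (by linarith) (div_nonneg (sub_nonneg.2 h) hτ.le)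
    · rw [abs_sub_comm, abs_sub_comm τ', abs_of_nonneg (sub_nonneg.2 h)]
      refine (hle f hf hf1 τ' τ hτ' h (by linarith) x).trans ?_
      rw [mul_comm 2 C, mul_assoc, ← mul_div_assoc 2]
      refine mul_le_mul_of_nonneg_left ((div_le_div_iff₀ hτ' hτ).2 ?_) hC.le
      nlinarith
  simpa using abs_integral_sub_integral_le (integrable_smoothOp ha hac hτ' hf hf1 σ)
    (integrable_smoothOp ha hac hτ hf hf1 σ) (integrable_const _) hpoint

lemma continuous_smoothOp_one (ha : ∀ x, IsElliptic Λ (a x)) (hac : Continuous a) (hτ : 0 < τ) :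
    Continuous (smoothOp a τ fun _ => 1) := by
  have hΛ := (ha 0).pos
  obtain ⟨C, -, hle⟩ := exists_gauss_smul_le (E := E) hΛ
  have hshift : (smoothOp a τ fun _ => 1) = fun x => ∫ z, gauss (τ • a (x - z)) z := by
    ext x
    rw [smoothOp, ← integral_sub_left_eq_self (fun y => gauss (τ • a y) (x - y) * 1) volume x]
    simp only [sub_sub_cancel, mul_one]
  have hcont {x z : E → E} (hx : Continuous x) (hz : Continuous z) :
      Continuous fun w => gauss (τ • a (x w - z w)) (z w) :=
    continuous_gauss_comp (by fun_prop) hz fun w => (ha (x w - z w)).smul hτ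
  rw [hshift]
  refine continuous_of_dominated (F := fun x z => gauss (τ • a (x - z)) z)
    (bound := fun z => C * gaussProfile (16 * Λ)⁻¹ τ z)
    (fun x => (hcont continuous_const continuous_id).aestronglyMeasurable)
    (fun x => Eventually.of_forall fun z => ?_)
    ((integrable_gaussProfile (by positivity) hτ).const_mul C)
    (Eventually.of_forall fun z => hcont continuous_id continuous_const)
  rw [Real.norm_of_nonneg (gauss_nonneg _ _)]
  exact hle τ hτ (a (x - z)) (ha (x - z)) z

lemma tendsto_integral_of_continuous {X : Type*} [TopologicalSpace X] [MeasurableSpace X]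
    [OpensMeasurableSpace X] {ι : Type*} {l : Filter ι} {P : ι → ProbabilityMeasure X}
    {μ : ProbabilityMeasure X} (hP : Tendsto P l (𝓝 μ)) {g : X → ℝ} {C : ℝ} (hg : Continuous g)
    (hgC : ∀ x, |g x| ≤ C) :
    Tendsto (fun i => ∫ x, g x ∂(P i : Measure X)) l (𝓝 (∫ x, g x ∂(μ : Measure X))) :=
  ProbabilityMeasure.tendsto_iff_forall_integral_tendsto.1 hP
    (BoundedContinuousFunction.ofNormedAddCommGroup g hg C hgC)

lemma tendsto_smoothDensity (ha : ∀ x, IsElliptic Λ (a x)) (hτ : 0 < τ)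
    (μ : ProbabilityMeasure E) (y : E) :
    Tendsto (fun σ : ProbabilityMeasure E => smoothDensity a τ σ y) (𝓝 μ)
      (𝓝 (smoothDensity a τ μ y)) := by
  have hell := (ha y).smul hτ
  obtain ⟨C, hC, hle⟩ := exists_gauss_le (E := E) hell.pos
  refine tendsto_integral_of_continuous tendsto_id (C := C)
    ((continuous_gauss _).comp (by fun_prop)) fun x => ?_
  rw [abs_of_nonneg (gauss_nonneg _ _)]
  have hΛ := hell.pos
  exact (hle _ hell _).trans (mul_le_of_le_one_right hC.le
    (exp_le_one_iff.2 (neg_nonpos.2 (by positivity))))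

lemma tendsto_integral_smoothDensity (ha : ∀ x, IsElliptic Λ (a x)) (hac : Continuous a)
    (hτ : 0 < τ) (μ : ProbabilityMeasure E) :
    Tendsto (fun σ : ProbabilityMeasure E => ∫ y, smoothDensity a τ σ y) (𝓝 μ)
      (𝓝 (∫ y, smoothDensity a τ μ y)) := by
  obtain ⟨C, -, hle⟩ := exists_abs_smoothOp_le ha
  have hmass : ∀ σ : ProbabilityMeasure E, ∫ x, smoothOp a τ (fun _ => 1) x ∂(σ : Measure E) =
      ∫ y, smoothDensity a τ σ y := fun σ => by
    rw [integral_smoothOp ha hac hτ measurable_const (by simp)]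
    simp only [mul_one]
  simp_rw [← hmass]
  exact tendsto_integral_of_continuous tendsto_id (continuous_smoothOp_one ha hac hτ)
    (hle (fun _ => 1) (by simp) τ hτ)

/- Under weak convergence the smoothed densities converge pointwise and so do their masses, hence
they converge in `L¹` by Scheffé's lemma. -/
lemma eventually_abs_integral_smoothOp_sub_le (ha : ∀ x, IsElliptic Λ (a x)) (hac : Continuous a)
    (hτ : 0 < τ) (μ : ProbabilityMeasure E) {δ : ℝ} (hδ : 0 < δ) :
    ∀ᶠ σ : ProbabilityMeasure E in 𝓝 μ, ∀ f : E → ℝ, Measurable f → (∀ x, |f x| ≤ 1) →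
      |(∫ x, smoothOp a τ f x ∂(σ : Measure E)) - ∫ x, smoothOp a τ f x ∂(μ : Measure E)| ≤ δ := by
  have hL1 := tendsto_integral_abs_sub_of_tendsto
    (fun σ : ProbabilityMeasure E => integrable_smoothDensity ha hac hτ (σ : Measure E))
    (integrable_smoothDensity ha hac hτ μ) (fun _ => smoothDensity_nonneg _ _ _)
    (smoothDensity_nonneg _ _ _) (tendsto_smoothDensity ha hτ μ)
    (tendsto_integral_smoothDensity ha hac hτ μ)
  filter_upwards [hL1.eventually_le_const hδ] with σ hσ f hf hf1
  rw [integral_smoothOp ha hac hτ hf hf1, integral_smoothOp ha hac hτ hf hf1]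
  refine (abs_integral_sub_integral_le (integrable_smoothDensity_mul ha hac hτ hf hf1 σ)
    (integrable_smoothDensity_mul ha hac hτ hf hf1 μ) ((integrable_smoothDensity ha hac hτ σ).sub
    (integrable_smoothDensity ha hac hτ μ)).abs fun y => ?_).trans hσ
  rw [← sub_mul, abs_mul]
  exact mul_le_of_le_one_right (abs_nonneg _) (hf1 y)

end Smoothing

lemma exists_tendsto_of_integral_le {ι X : Type*} [TopologicalSpace X] [T2Space X]
    [MeasurableSpace X] [BorelSpace X] {V : X → ℝ} {M : ℝ} (hV0 : ∀ x, 0 ≤ V x)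
    (hVinf : Tendsto V (cocompact X) atTop) (U : Ultrafilter ι) {P : ι → ProbabilityMeasure X}
    (hP : ∀ᶠ i in (U : Filter ι), Integrable V (P i) ∧ (∫ x, V x ∂(P i : Measure X)) ≤ M) :
    ∃ μ, Tendsto P U (𝓝 μ) := by
  let S : Set (ProbabilityMeasure X) := {μ | Integrable V μ ∧ (∫ x, V x ∂(μ : Measure X)) ≤ M}
  have htight : IsTightMeasureSet {((μ : ProbabilityMeasure X) : Measure X) | μ ∈ S} := by
    rw [isTightMeasureSet_iff_exists_isCompact_measure_compl_le]
    intro ε hε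
    obtain ⟨η, hη, hηε⟩ := ENNReal.lt_iff_exists_nnreal_btwn.1 hε
    have hη0 : (0 : ℝ) < η := by exact_mod_cast hη
    set R : ℝ := (|M| + 1) / η with hR
    have hR0 : 0 < R := by positivity
    obtain ⟨Q, hQ, hQV⟩ := mem_cocompact.1 (hVinf.eventually_ge_atTop R)
    refine ⟨Q, hQ, ?_⟩
    rintro _ ⟨μ, ⟨hμV, hμM⟩, rfl⟩
    refine (measure_mono hQV).trans (le_trans ?_ hηε.le)
    change (μ : Measure X) {x | R ≤ V x} ≤ η
    rw [← ENNReal.ofReal_coe_nnreal, ← ofReal_measureReal]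
    refine ENNReal.ofReal_le_ofReal ((measureReal_ge_le_integral_div hμV hV0 hR0).trans ?_)
    rw [div_le_iff₀ hR0, hR, mul_div_cancel₀ _ hη0.ne']
    exact hμM.trans ((le_abs_self M).trans (by linarith))
  obtain ⟨μ, -, hμ⟩ := (isCompact_closure_of_isTightMeasureSet htight).ultrafilter_le_nhds
    (U.map P) (le_principal_iff.2 (hP.mono fun i hi => subset_closure hi))
  exact ⟨μ, hμ⟩

lemma exists_forall_tendstoTV_comp {ι X : Type*} [Countable ι] [MeasurableSpace X]
    {ν : ι → ℕ → Measure X} {μ : ι → Measure X} {l : Filter ℕ} [l.NeBot] (hl : l ≤ atTop)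
    (h : ∀ i, TendstoTV (ν i) l (μ i)) :
    ∃ ψ : ℕ → ℕ, StrictMono ψ ∧ ∀ i, TendstoTV (fun n => ν i (ψ n)) atTop (μ i) := by
  obtain ⟨code, hcode⟩ := exists_injective_nat ι
  have hfin (n : ℕ) : {i | code i ≤ n}.Finite :=
    (Set.finite_Iic n).preimage hcode.injOn
  obtain ⟨ψ, hψ, hclose⟩ := extraction_forall_of_frequently
    (P := fun n j => ∀ i ∈ {i | code i ≤ n}, TVLe (ν i j) (μ i) (1 / (n + 1))) fun n =>
    (((hfin n).eventually_all).2 fun i _ =>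
      h i (1 / (n + 1)) Nat.one_div_pos_of_nat).frequently.filter_mono hl
  refine ⟨ψ, hψ, fun i δ hδ => ?_⟩
  filter_upwards [eventually_ge_atTop (code i),
    tendsto_one_div_add_atTop_nhds_zero_nat.eventually_le_const hδ] with n hn hnδ
  exact (hclose n i hn).mono hnδ

section ApproxFlow

variable {E : Type*} [NormedAddCommGroup E] [InnerProductSpace ℝ E] [FiniteDimensional ℝ E]
  [MeasurableSpace E] [BorelSpace E]

/-- A sequence of flows `t ↦ X j t` of probability measures with locally bounded moments which,
over short time intervals, is asymptotically close to the action of the smoothing operators. -/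
structure IsApproxFlow (a : E → E →L[ℝ] E) (V : E → ℝ) (X : ℕ → ℝ → Measure E) : Prop where
  prob : ∀ j t, IsProbabilityMeasure (X j t)
  moment : ∀ T : ℝ, ∃ M : ℝ, 0 < M ∧ ∀ᶠ j in atTop, ∀ t, 0 ≤ t → t ≤ T →
    Integrable V (X j t) ∧ (∫ x, V x ∂(X j t)) ≤ M
  flow : ∀ T : ℝ, ∃ C : ℝ, 0 < C ∧ ∀ s t : ℝ, 0 ≤ s → s < t → t ≤ T → ∀ δ : ℝ, 0 < δ →
    ∀ᶠ j in atTop, ∀ f : E → ℝ, Measurable f → (∀ x, |f x| ≤ 1) →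
      |(∫ x, f x ∂(X j t)) - ∫ x, smoothOp a (t - s) f x ∂(X j s)| ≤ C * √(t - s) + δ

namespace IsApproxFlow

variable {Λ : ℝ} {a : E → E →L[ℝ] E} {V : E → ℝ} {X : ℕ → ℝ → Measure E} {t δ : ℝ}

/-- The measure `X j t` as a point of the space of probability measures with its weak topology. -/
def toProb (h : IsApproxFlow a V X) (j : ℕ) (t : ℝ) : ProbabilityMeasure E := ⟨X j t, h.prob j t⟩

lemma exists_tendsto (h : IsApproxFlow a V X) (hV0 : ∀ x, 0 ≤ V x)
    (hVinf : Tendsto V (cocompact E) atTop) {U : Ultrafilter ℕ} (hU : (U : Filter ℕ) ≤ atTop)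
    (ht : 0 ≤ t) : ∃ μ, Tendsto (fun j => h.toProb j t) U (𝓝 μ) := by
  obtain ⟨M, -, hM⟩ := h.moment t
  exact exists_tendsto_of_integral_le hV0 hVinf U (hU (hM.mono fun j hj => hj t ht le_rfl))

lemma exists_abs_integral_sub_smoothOp_le (h : IsApproxFlow a V X) (ht : 0 < t) (hδ : 0 < δ) :
    ∃ ε : ℝ, 0 < ε ∧ ε < t ∧ ∀ q, t ≤ q → q ≤ t + ε → ∀ᶠ j in atTop, ∀ f : E → ℝ, Measurable f →
      (∀ x, |f x| ≤ 1) →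
        |(∫ x, f x ∂(X j q)) - ∫ x, smoothOp a (q - (t - ε)) f x ∂(X j (t - ε))| ≤ δ := by
  obtain ⟨C, hC, hflow⟩ := h.flow (2 * t)
  have hlim : Tendsto (fun ε : ℝ => C * √(2 * ε)) (𝓝[>] 0) (𝓝 0) :=
    ((by fun_prop : Continuous fun ε : ℝ => C * √(2 * ε)).tendsto' 0 0 (by simp)).mono_left
      nhdsWithin_le_nhds
  obtain ⟨ε, hCε, hε, hεt⟩ := ((hlim.eventually_le_const (half_pos hδ)).and
    (Ioo_mem_nhdsGT ht)).exists
  refine ⟨ε, hε, hεt, fun q htq hq => ?_⟩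
  filter_upwards [hflow (t - ε) q (by linarith) (by linarith) (by linarith) _ (half_pos hδ)]
    with j hj f hf hf1
  calc _ ≤ C * √(q - (t - ε)) + δ / 2 := hj f hf hf1
    _ ≤ C * √(2 * ε) + δ / 2 := by gcongr; linarith
    _ ≤ δ := by linarith

lemma tendstoTV_of_tendsto (h : IsApproxFlow a V X) (ha : ∀ x, IsElliptic Λ (a x))
    (hac : Continuous a) (hV0 : ∀ x, 0 ≤ V x) (hVinf : Tendsto V (cocompact E) atTop)
    {U : Ultrafilter ℕ} (hU : (U : Filter ℕ) ≤ atTop) (ht : 0 < t) {μ : ProbabilityMeasure E}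
    (hμ : Tendsto (fun j => h.toProb j t) U (𝓝 μ)) :
    TendstoTV (fun j => X j t) U μ := by
  intro δ hδ
  obtain ⟨ε, hε, hεt, hflow⟩ := h.exists_abs_integral_sub_smoothOp_le ht
    (show 0 < δ / 4 by positivity)
  obtain ⟨σ, hσ⟩ := h.exists_tendsto hV0 hVinf hU (t := t - ε) (by linarith)
  have hsmooth := hσ.eventually
    (eventually_abs_integral_smoothOp_sub_le ha hac hε σ (show 0 < δ / 4 by positivity))
  have hclose : ∀ᶠ j in (U : Filter ℕ), ∀ f : E → ℝ, Measurable f → (∀ x, |f x| ≤ 1) →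
      |(∫ x, f x ∂(X j t)) - ∫ x, smoothOp a ε f x ∂(σ : Measure E)| ≤ δ / 2 := by
    filter_upwards [hU (hflow t le_rfl (by linarith)), hsmooth] with j hj hjσ f hf hf1
    have hjt := hj f hf hf1
    rw [sub_sub_cancel] at hjt
    exact (abs_sub_le _ _ _).trans ((add_le_add hjt (hjσ f hf hf1)).trans (by linarith))
  have hlim : ∀ g : E → ℝ, Continuous g → (∀ x, |g x| ≤ 1) →
      |(∫ x, g x ∂(μ : Measure E)) - ∫ x, smoothOp a ε g x ∂(σ : Measure E)| ≤ δ / 2 :=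
    fun g hg hg1 => le_of_tendsto ((tendsto_integral_of_continuous hμ hg hg1).sub_const _).abs
      (hclose.mono fun j hj => hj g hg.measurable hg1)
  filter_upwards [hclose] with j hj
  have := h.prob j t
  refine tvLe_of_continuous fun g hg hg1 => ?_
  have hgμ := hlim g hg hg1
  rw [abs_sub_comm] at hgμ
  exact (abs_sub_le _ _ _).trans ((add_le_add (hj g hg.measurable hg1) hgμ).trans (by linarith))

lemma exists_forall_tvLe_right (h : IsApproxFlow a V X) (ha : ∀ x, IsElliptic Λ (a x))
    (hac : Continuous a) (ht : 0 < t) (hδ : 0 < δ) :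
    ∃ η : ℝ, 0 < η ∧ ∀ q, t < q → q < t + η → ∀ᶠ j in atTop, TVLe (X j t) (X j q) δ := by
  obtain ⟨D, hD, hsmooth⟩ := exists_abs_integral_smoothOp_sub_le ha hac
  obtain ⟨ε, hε, -, hflow⟩ := h.exists_abs_integral_sub_smoothOp_le ht
    (show 0 < δ / 3 by positivity)
  refine ⟨min (ε / 2) (ε * (δ / 3) / D), by positivity, fun q htq hq => ?_⟩
  have hqε : q - t ≤ ε / 2 := by linarith [min_le_left (ε / 2) (ε * (δ / 3) / D)]
  have hqD : q - t ≤ ε * (δ / 3) / D := by linarith [min_le_right (ε / 2) (ε * (δ / 3) / D)]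
  filter_upwards [hflow t le_rfl (by linarith), hflow q htq.le (by linarith)]
    with j hjt hjq f hf hf1
  have hft := hjt f hf hf1
  have hfq := hjq f hf hf1
  have hdiff : q - (t - ε) - ε = q - t := by ring
  have hmid := hsmooth f hf hf1 ε (q - (t - ε)) hε
    (by rwa [hdiff, abs_of_pos (sub_pos.2 htq)]) (X j (t - ε)) (h.prob j _)
  rw [hdiff, abs_of_pos (sub_pos.2 htq)] at hmid
  have hmid' : D * ((q - t) / ε) ≤ δ / 3 := by
    rwa [← mul_div_assoc, div_le_iff₀ hε, mul_comm, mul_comm (δ / 3), ← le_div_iff₀ hD]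
  rw [sub_sub_cancel] at hft
  rw [abs_le] at hft hfq hmid ⊢
  constructor <;> linarith

lemma exists_tendstoTV (h : IsApproxFlow a V X) (ha : ∀ x, IsElliptic Λ (a x))
    (hac : Continuous a) (hV0 : ∀ x, 0 ≤ V x) (hVinf : Tendsto V (cocompact E) atTop)
    {U : Ultrafilter ℕ} (hU : (U : Filter ℕ) ≤ atTop) (ht : 0 < t) :
    ∃ μ : ProbabilityMeasure E, TendstoTV (fun j => X j t) U μ := by
  obtain ⟨μ, hμ⟩ := h.exists_tendsto hV0 hVinf hU ht.le
  exact ⟨μ, h.tendstoTV_of_tendsto ha hac hV0 hVinf hU ht hμ⟩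

/- Diagonal extraction gives convergence at the positive rational times, and right equicontinuity
carries it over to every positive time. -/
theorem exists_subseq_tendstoTV (h : IsApproxFlow a V X) (ha : ∀ x, IsElliptic Λ (a x))
    (hac : Continuous a) (hV0 : ∀ x, 0 ≤ V x) (hVinf : Tendsto V (cocompact E) atTop) :
    ∃ (ψ : ℕ → ℕ) (μ : ℝ → ProbabilityMeasure E), StrictMono ψ ∧
      ∀ t, 0 < t → TendstoTV (fun i => X (ψ i) t) atTop (μ t) := by
  have hU : (hyperfilter ℕ : Filter ℕ) ≤ atTop := by
    rw [← Nat.cofinite_eq_atTop]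
    exact hyperfilter_le_cofinite
  have hlim (t : ℝ) : ∃ μ : ProbabilityMeasure E,
      0 < t → TendstoTV (fun j => X j t) (hyperfilter ℕ) μ := by
    by_cases ht : 0 < t
    · exact (h.exists_tendstoTV ha hac hV0 hVinf hU ht).imp fun μ hμ _ => hμ
    · exact ⟨h.toProb 0 0, fun ht' => absurd ht' ht⟩
  choose μ hμ using hlim
  obtain ⟨ψ, hψ, hrat⟩ := exists_forall_tendstoTV_comp hU
    fun q : {q : ℚ // (0 : ℝ) < q} => hμ q q.2
  refine ⟨ψ, μ, hψ, fun t ht δ hδ => ?_⟩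
  obtain ⟨η, hη, hright⟩ := h.exists_forall_tvLe_right ha hac ht (show 0 < δ / 5 by positivity)
  obtain ⟨q, htq, hqη⟩ := exists_rat_btwn (show t < t + η by linarith)
  have hq : (0 : ℝ) < q := ht.trans htq
  have hclose := hright q htq hqη
  have hδ5 : 0 < δ / 5 := by positivity
  obtain ⟨j, hjq, hjt, hj⟩ := (((hμ q hq) _ hδ5).and
    (((hμ t ht) _ hδ5).and (hU hclose))).exists
  have hlimits : TVLe (μ q : Measure E) (μ t) (3 * (δ / 5)) :=
    ((hjq.symm.trans hj.symm).trans hjt).mono (by linarith)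
  filter_upwards [hψ.tendsto_atTop.eventually hclose, hrat ⟨q, hq⟩ _ hδ5] with i hi hiq
  exact ((hi.trans hiq).trans hlimits).mono (by linarith)

end IsApproxFlow

end ApproxFlow

lemma natFloor_div_mul_le {h t : ℝ} (hh : 0 < h) (ht : 0 ≤ t) : ⌊t / h⌋₊ * h ≤ t :=
  (le_div_iff₀ hh).1 (Nat.floor_le (by positivity))

lemma exists_natFloor_div_eq_add {h s t : ℝ} (hh : 0 < h) (hs : 0 ≤ s) (hst : s ≤ t) :
    ∃ N : ℕ, ⌊t / h⌋₊ = ⌊s / h⌋₊ + N ∧ |N * h - (t - s)| ≤ h := by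
  obtain ⟨N, hN⟩ := Nat.exists_eq_add_of_le
    (Nat.floor_mono (show s / h ≤ t / h by gcongr))
  refine ⟨N, hN, ?_⟩
  have hs₁ := natFloor_div_mul_le hh hs
  have ht₁ := natFloor_div_mul_le hh (hs.trans hst)
  have hs₂ := (div_lt_iff₀ hh).1 (Nat.lt_floor_add_one (s / h))
  have ht₂ := (div_lt_iff₀ hh).1 (Nat.lt_floor_add_one (t / h))
  rw [hN] at ht₁ ht₂
  push_cast at ht₁ ht₂
  exact abs_le.2 ⟨by linarith, by linarith⟩

theorem IsEulerApprox.isApproxFlow {Λ : ℝ} {K : ℝ≥0} {a : Ed d → Ed d →L[ℝ] Ed d} {V : Ed d → ℝ}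
    {b : Ed d → Measure (Ed d) → Ed d} {h : ℕ → ℝ} {μ : ℕ → ℕ → Measure (Ed d)} {r : ℕ → ℕ → ℝ}
    (hμ : IsEulerApprox a V b h μ r) (ha : ∀ x, IsElliptic Λ (a x)) (haL : LipschitzWith K a)
    (hb : ∀ σ, Measurable fun x => b x σ) (hGrow : HasLocalGrowth V b) :
    IsApproxFlow a V fun j t => μ j ⌊t / h j⌋₊ where
  prob j t := (hμ.memPV j _).1
  moment T := by
    obtain ⟨M, hM0, hM⟩ := hμ.moment T
    refine ⟨M, hM0, ?_⟩
    filter_upwards [hM] with j hj t ht htT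
    exact ⟨(hμ.memPV j _).2, hj _ ((natFloor_div_mul_le (hμ.pos j) ht).trans htT)⟩
  flow T := by
    obtain ⟨C, hC, hflow⟩ := hμ.exists_abs_integral_sub_flowOp_le ha haL hb hGrow T
    obtain ⟨D, hD, hsmooth⟩ := exists_abs_integral_smoothOp_sub_le ha haL.continuous
    refine ⟨C, hC, fun s t hs hst htT δ hδ => ?_⟩
    have hts : 0 < t - s := sub_pos.2 hst
    have hsqrt : Tendsto (fun η => C * √(t - s + η)) (𝓝 0) (𝓝 (C * √(t - s))) :=
      (by fun_prop : Continuous fun η => C * √(t - s + η)).tendsto' 0 _ (by simp)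
    have hratio : Tendsto (fun η => D * (η / (t - s))) (𝓝 0) (𝓝 0) :=
      (by fun_prop : Continuous fun η => D * (η / (t - s))).tendsto' 0 _ (by simp)
    filter_upwards [hflow (δ / 3) (by positivity),
      hμ.tendsto_mesh.eventually_le_const (half_pos hts),
      (hsqrt.comp hμ.tendsto_mesh).eventually_le_const
        (show C * √(t - s) < C * √(t - s) + δ / 3 by linarith),
      (hratio.comp hμ.tendsto_mesh).eventually_le_const (show 0 < δ / 3 by positivity)]
      with j hj hmesh hjsqrt hjratio f hf hf1
    simp only [Function.comp_apply] at hjsqrt hjratio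
    obtain ⟨N, hN, hNh⟩ := exists_natFloor_div_eq_add (hμ.pos j) hs hst.le
    have hNpos : 0 < N * h j := by linarith [(abs_le.1 hNh).1]
    have hNle : N * h j ≤ t - s + h j := by linarith [(abs_le.1 hNh).2]
    have hEuler := hj ⌊s / h j⌋₊ N (hN ▸ (natFloor_div_mul_le (hμ.pos j)
      (hs.trans hst.le)).trans htT) f hf hf1
    rw [flowOp_of_pos hNpos, ← hN] at hEuler
    have htime := hsmooth f hf hf1 (t - s) (N * h j) hts (hNh.trans hmesh) _
      (hμ.memPV j ⌊s / h j⌋₊).1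
    calc _ ≤ (C * √(N * h j) + δ / 3) + D * (|N * h j - (t - s)| / (t - s)) :=
          (abs_sub_le _ _ _).trans (add_le_add hEuler htime)
      _ ≤ (C * √(t - s + h j) + δ / 3) + D * (h j / (t - s)) := by gcongr
      _ ≤ C * √(t - s) + δ := by linarith

/-! ### Passage to the limit in the equation -/

/-- The mean of `L_μ φ` with respect to `μ`, which is the time derivative of `∫ φ dμ` along a
solution. -/
def meanGenerator (a : Ed d → Ed d →L[ℝ] Ed d) (b : Ed d → Measure (Ed d) → Ed d)
    (φ : Ed d → ℝ) (μ : Measure (Ed d)) : ℝ :=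
  ∫ x, generator (a x) (b x μ) φ x ∂μ

/-- The drift is Lipschitz in the measure for the distance weighted by `W`, with a constant that
grows at most like `V` in space and is locally uniform with respect to the moments. -/
def IsLocallyLipschitz (V W : Ed d → ℝ) (b : Ed d → Measure (Ed d) → Ed d) : Prop :=
  ∀ α : ℝ, 0 < α → ∃ L : ℝ, 0 < L ∧ ∀ μ σ : Measure (Ed d), memPV V μ → memPV V σ →
    (∫ x, V x ∂μ) ≤ α → (∫ x, V x ∂σ) ≤ α → ∀ x, ‖b x μ - b x σ‖ ≤ L * V x * wDist W μ σ

section GeneratorBounds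

variable {E : Type*} [NormedAddCommGroup E] [InnerProductSpace ℝ E] {V φ : E → ℝ}

lemma exists_abs_fderiv_mul_le (hV : Continuous V) (hV0 : ∀ x, 0 ≤ V x) (hφ : ContDiff ℝ 1 φ)
    (hφc : HasCompactSupport φ) : ∃ D : ℝ, 0 < D ∧ ∀ x v, |fderiv ℝ φ x v| * V x ≤ D * ‖v‖ := by
  obtain ⟨D, hD⟩ := Continuous.bounded_above_of_compact_support
    (hV.mul (hφ.continuous_fderiv one_ne_zero).norm) ((hφc.fderiv (𝕜 := ℝ)).norm.mul_left (f := V))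
  refine ⟨|D| + 1, by positivity, fun x v => ?_⟩
  calc |fderiv ℝ φ x v| * V x ≤ ‖fderiv ℝ φ x‖ * ‖v‖ * V x :=
        mul_le_mul_of_nonneg_right ((fderiv ℝ φ x).le_opNorm v) (hV0 x)
    _ = V x * ‖fderiv ℝ φ x‖ * ‖v‖ := by ring
    _ ≤ (|D| + 1) * ‖v‖ := by
        gcongr
        exact (le_abs_self _).trans ((hD x).trans (by linarith [le_abs_self D]))

variable [FiniteDimensional ℝ E] {a : E → E →L[ℝ] E}

lemma generator_sub_generator (B : E →L[ℝ] E) (v w : E) (φ : E → ℝ) (x : E) :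
    generator B v φ x - generator B w φ x = fderiv ℝ φ x (v - w) := by
  rw [generator, generator, add_sub_add_right_eq_sub, map_sub]

lemma continuous_generator_zero (hac : Continuous a) (hφ : ContDiff ℝ 2 φ) :
    Continuous fun x => generator (a x) 0 φ x := by
  simp only [generator, map_zero, zero_add]
  exact continuous_finsetSum _ fun i _ =>
    (((hφ.fderiv_right (m := 1) (by norm_num)).continuous_fderiv one_ne_zero).clm_apply
      (hac.clm_apply continuous_const)).clm_apply continuous_const

lemma measurable_generator [MeasurableSpace E] [BorelSpace E] {β : E → E} (hac : Continuous a)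
    (hβ : Measurable β) (hφ : ContDiff ℝ 2 φ) :
    Measurable fun x => generator (a x) (β x) φ x := by
  have heval : Continuous fun q : (E →L[ℝ] ℝ) × E => q.1 q.2 := by fun_prop
  have hfirst := heval.measurable.comp
    ((hφ.continuous_fderiv two_ne_zero).measurable.prodMk hβ)
  have hsplit : (fun x => generator (a x) (β x) φ x) =
      fun x => fderiv ℝ φ x (β x) + generator (a x) 0 φ x := by
    funext x
    rw [← sub_eq_iff_eq_add, generator_sub_generator, sub_zero]
  rw [hsplit]
  exact hfirst.add (continuous_generator_zero hac hφ).measurable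

lemma exists_abs_generator_le_of_norm_le (hac : Continuous a) (hV : Continuous V)
    (hV0 : ∀ x, 0 < V x) (hφ : ContDiff ℝ 2 φ) (hφc : HasCompactSupport φ) (B : ℝ) :
    ∃ C : ℝ, 0 < C ∧ ∀ x v, ‖v‖ ≤ B * V x → |generator (a x) v φ x| ≤ C := by
  obtain ⟨D, hD, hfst⟩ := exists_abs_fderiv_mul_le hV (fun x => (hV0 x).le)
    (hφ.of_le (by norm_num)) hφc
  have hsupp : HasCompactSupport fun x => generator (a x) 0 φ x :=
    (hφc.fderiv (𝕜 := ℝ)).fderiv (𝕜 := ℝ) |>.mono' fun x hx => subset_tsupport _ fun h => hx (by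
      simp only [generator, map_zero, h, zero_apply, Finset.sum_const_zero,
        add_zero])
  obtain ⟨C, hC⟩ := (continuous_generator_zero hac hφ).bounded_above_of_compact_support hsupp
  refine ⟨D * |B| + |C| + 1, by positivity, fun x v hv => ?_⟩
  have hfirst : |fderiv ℝ φ x v| ≤ D * |B| := by
    refine le_of_mul_le_mul_right ?_ (hV0 x)
    calc |fderiv ℝ φ x v| * V x ≤ D * ‖v‖ := hfst x v
      _ ≤ D * (|B| * V x) := by
        gcongr
        exact hv.trans (mul_le_mul_of_nonneg_right (le_abs_self B) (hV0 x).le)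
      _ = D * |B| * V x := by ring
  have hsplit := generator_sub_generator (a x) v 0 φ x
  rw [sub_zero, sub_eq_iff_eq_add] at hsplit
  rw [hsplit]
  have hsecond : |generator (a x) 0 φ x| ≤ C := hC x
  exact (abs_add_le _ _).trans (by linarith [le_abs_self C])

end GeneratorBounds

section MeanGenerator

variable {a : Ed d → Ed d →L[ℝ] Ed d} {V W φ : Ed d → ℝ} {b : Ed d → Measure (Ed d) → Ed d}

lemma HasLocalGrowth.exists_abs_generator_le (hGrow : HasLocalGrowth V b) (hac : Continuous a)
    (hV : Continuous V) (hV0 : ∀ x, 0 < V x) (hφ : ContDiff ℝ 2 φ) (hφc : HasCompactSupport φ)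
    {M : ℝ} (hM : 0 < M) : ∃ C : ℝ, 0 < C ∧ ∀ μ : Measure (Ed d), memPV V μ → (∫ x, V x ∂μ) ≤ M →
      ∀ x, |generator (a x) (b x μ) φ x| ≤ C := by
  obtain ⟨B, -, hB⟩ := hGrow M hM
  obtain ⟨C, hC, hbound⟩ := exists_abs_generator_le_of_norm_le hac hV hV0 hφ hφc B
  exact ⟨C, hC, fun μ hμ hμM x => hbound x _ (hB μ hμ hμM x)⟩

lemma HasLocalGrowth.exists_abs_meanGenerator_le (hGrow : HasLocalGrowth V b) (hac : Continuous a)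
    (hV : Continuous V) (hV0 : ∀ x, 0 < V x) (hφ : ContDiff ℝ 2 φ) (hφc : HasCompactSupport φ)
    {M : ℝ} (hM : 0 < M) : ∃ C : ℝ, 0 < C ∧ ∀ μ : Measure (Ed d), memPV V μ → (∫ x, V x ∂μ) ≤ M →
      |meanGenerator a b φ μ| ≤ C := by
  obtain ⟨C, hC, hbound⟩ := hGrow.exists_abs_generator_le hac hV hV0 hφ hφc hM
  refine ⟨C, hC, fun μ hμ hμM => ?_⟩
  have := hμ.1
  simpa only [meanGenerator, Real.norm_eq_abs, probReal_univ, mul_one] using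
    norm_integral_le_of_norm_le_const (μ := μ) (f := fun x => generator (a x) (b x μ) φ x)
      (Eventually.of_forall (hbound μ hμ hμM))

lemma HasLocalGrowth.integrable_generator (hGrow : HasLocalGrowth V b) (hac : Continuous a)
    (hb : ∀ σ, Measurable fun x => b x σ) (hV : Continuous V) (hV0 : ∀ x, 0 < V x)
    (hφ : ContDiff ℝ 2 φ) (hφc : HasCompactSupport φ) {μ σ : Measure (Ed d)} [IsFiniteMeasure σ]
    (hμ : memPV V μ) : Integrable (fun x => generator (a x) (b x μ) φ x) σ := by
  obtain ⟨C, -, hC⟩ := hGrow.exists_abs_generator_le hac hV hV0 hφ hφc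
    (show 0 < |∫ x, V x ∂μ| + 1 by positivity)
  exact .of_bound (measurable_generator hac (hb μ) hφ).aestronglyMeasurable C
    (Eventually.of_forall (hC μ hμ (by linarith [le_abs_self (∫ x, V x ∂μ)])))

lemma IsLocallyLipschitz.exists_abs_generator_sub_le (hLip : IsLocallyLipschitz V W b)
    (a : Ed d → Ed d →L[ℝ] Ed d) (hV : Continuous V) (hV0 : ∀ x, 0 < V x) (hφ : ContDiff ℝ 1 φ)
    (hφc : HasCompactSupport φ) {M : ℝ} (hM : 0 < M) :
    ∃ L : ℝ, 0 < L ∧ ∀ μ σ : Measure (Ed d), memPV V μ → memPV V σ → (∫ x, V x ∂μ) ≤ M →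
      (∫ x, V x ∂σ) ≤ M → ∀ x,
        |generator (a x) (b x μ) φ x - generator (a x) (b x σ) φ x| ≤ L * wDist W μ σ := by
  obtain ⟨L, hL, hLb⟩ := hLip M hM
  obtain ⟨D, hD, hfst⟩ := exists_abs_fderiv_mul_le hV (fun x => (hV0 x).le) hφ hφc
  refine ⟨D * L, by positivity, fun μ σ hμ hσ hμM hσM x => ?_⟩
  rw [generator_sub_generator]
  refine le_of_mul_le_mul_right ?_ (hV0 x)
  calc |fderiv ℝ φ x (b x μ - b x σ)| * V x ≤ D * ‖b x μ - b x σ‖ := hfst x _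
    _ ≤ D * (L * V x * wDist W μ σ) := by gcongr; exact hLb μ σ hμ hσ hμM hσM x
    _ = D * L * wDist W μ σ * V x := by ring

lemma TendstoTV.tendsto_meanGenerator {ι : Type*} {l : Filter ι} {X : ι → Measure (Ed d)}
    {μ : Measure (Ed d)} {M : ℝ} (h : TendstoTV X l μ) (hac : Continuous a)
    (hb : ∀ σ, Measurable fun x => b x σ) (hV : Continuous V) (hV0 : ∀ x, 0 < V x)
    (hW0 : ∀ x, 0 ≤ W x) (hWV : IsSubordinate W V) (hGrow : HasLocalGrowth V b)
    (hLip : IsLocallyLipschitz V W b) (hφ : ContDiff ℝ 2 φ) (hφc : HasCompactSupport φ)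
    (hM0 : 0 < M) (hM : ∀ᶠ i in l, memPV V (X i) ∧ (∫ x, V x ∂(X i)) ≤ M) (hμ : memPV V μ)
    (hμM : (∫ x, V x ∂μ) ≤ M) :
    Tendsto (fun i => meanGenerator a b φ (X i)) l (𝓝 (meanGenerator a b φ μ)) := by
  obtain ⟨C, -, hC⟩ := hGrow.exists_abs_generator_le hac hV hV0 hφ hφc hM0
  obtain ⟨L, hL, hdiff⟩ := hLip.exists_abs_generator_sub_le a hV hV0 (hφ.of_le (by norm_num)) hφc
    hM0
  have hfrozen : Tendsto (fun i => ∫ x, generator (a x) (b x μ) φ x ∂(X i)) l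
      (𝓝 (meanGenerator a b φ μ)) :=
    h.tendsto_integral (measurable_generator hac (hb μ) hφ) (hC μ hμ hμM)
  have hdrift : Tendsto (fun i => meanGenerator a b φ (X i) -
      ∫ x, generator (a x) (b x μ) φ x ∂(X i)) l (𝓝 0) := by
    refine Metric.tendsto_nhds.2 fun δ hδ => ?_
    filter_upwards [hM, h.eventually_wDist_le (fun x => (hV0 x).le) hW0 hWV hM hμ hμM
      (show 0 < δ / 2 / L by positivity)] with i ⟨hi, hiM⟩ hiW
    have := hi.1
    rw [dist_zero_right, Real.norm_eq_abs]
    calc _ ≤ ∫ _, δ / 2 ∂(X i) :=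
          abs_integral_sub_integral_le (hGrow.integrable_generator hac hb hV hV0 hφ hφc hi)
            (hGrow.integrable_generator hac hb hV hV0 hφ hφc hμ) (integrable_const _) fun x =>
              (hdiff _ _ hi hμ hiM hμM x).trans ((le_div_iff₀' hL).1 hiW)
      _ < δ := by
          rw [integral_const, probReal_univ, one_smul]
          linarith
  simpa only [sub_add_cancel, zero_add] using hdrift.add hfrozen

end MeanGenerator

section StepFunctions

variable {η t : ℝ} {k : ℕ}

lemma eqOn_comp_natFloor_div (hη : 0 < η) (g : ℕ → ℝ) (ht : t ≤ (k + 1) * η) :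
    EqOn (fun s => g ⌊s / η⌋₊) (fun _ => g k) (Ioo (k * η) t) := fun s hs => by
  have hfloor : ⌊s / η⌋₊ = k := by
    rw [Nat.floor_eq_iff (div_nonneg ((by positivity : 0 ≤ k * η).trans hs.1.le) hη.le)]
    exact ⟨((lt_div_iff₀ hη).2 hs.1).le, (div_lt_iff₀ hη).2 (hs.2.trans_le ht)⟩
  exact congrArg g hfloor

lemma intervalIntegrable_comp_natFloor_div (hη : 0 < η) (g : ℕ → ℝ) (hkt : k * η ≤ t)
    (ht : t ≤ (k + 1) * η) : IntervalIntegrable (fun s => g ⌊s / η⌋₊) volume (k * η) t :=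
  (intervalIntegrable_const (c := g k)).congr_uIoo
    (by rw [uIoo_of_le hkt]; exact (eqOn_comp_natFloor_div hη g ht).symm)

lemma integral_comp_natFloor_div_of_le (hη : 0 < η) (g : ℕ → ℝ) (hkt : k * η ≤ t)
    (ht : t ≤ (k + 1) * η) : (∫ s in (k * η)..t, g ⌊s / η⌋₊) = (t - k * η) * g k := by
  rw [intervalIntegral.integral_congr_Ioo_of_le hkt (eqOn_comp_natFloor_div hη g ht),
    intervalIntegral.integral_const, smul_eq_mul]

lemma integral_comp_natFloor_div (hη : 0 < η) (g : ℕ → ℝ) (ht : 0 ≤ t) :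
    (∫ s in (0 : ℝ)..t, g ⌊s / η⌋₊) =
      (∑ k ∈ Finset.range ⌊t / η⌋₊, η * g k) + (t - ⌊t / η⌋₊ * η) * g ⌊t / η⌋₊ := by
  have hmesh (k : ℕ) : k * η ≤ (k + 1 : ℕ) * η := by gcongr; exact k.le_succ
  have hsucc (k : ℕ) : (k + 1 : ℕ) * η ≤ (k + 1) * η := by rw [Nat.cast_succ]
  have hinteg (k : ℕ) : IntervalIntegrable (fun s => g ⌊s / η⌋₊) volume (k * η) ((k + 1 : ℕ) * η) :=
    intervalIntegrable_comp_natFloor_div hη g (hmesh k) (hsucc k)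
  have hfloor := natFloor_div_mul_le hη ht
  have hlt := ((div_lt_iff₀ hη).1 (Nat.lt_floor_add_one (t / η))).le
  have hfull : (∫ s in (0 : ℝ)..(⌊t / η⌋₊ * η), g ⌊s / η⌋₊) =
      ∑ k ∈ Finset.range ⌊t / η⌋₊, η * g k := by
    have hsum := intervalIntegral.sum_integral_adjacent_intervals (n := ⌊t / η⌋₊)
      fun k _ => hinteg k
    rw [Nat.cast_zero, zero_mul] at hsum
    rw [← hsum]
    refine Finset.sum_congr rfl fun k _ => ?_
    rw [integral_comp_natFloor_div_of_le hη g (hmesh k) (hsucc k), Nat.cast_succ]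
    ring
  have hinteg_full := IntervalIntegrable.trans_iterate (n := ⌊t / η⌋₊) fun k _ => hinteg k
  rw [Nat.cast_zero, zero_mul] at hinteg_full
  rw [← intervalIntegral.integral_add_adjacent_intervals hinteg_full
    (intervalIntegrable_comp_natFloor_div hη g hfloor hlt), hfull,
    integral_comp_natFloor_div_of_le hη g hfloor hlt]

lemma abs_sub_sub_integral_comp_natFloor_div_le {y g ρ : ℕ → ℝ} {C : ℝ} (hη : 0 < η) (ht : 0 ≤ t)
    (hy : ∀ k, |y (k + 1) - y k - η * g k| ≤ ρ k) (hg : ∀ k : ℕ, k * η ≤ t → |g k| ≤ C) :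
    |y ⌊t / η⌋₊ - y 0 - ∫ s in (0 : ℝ)..t, g ⌊s / η⌋₊| ≤
      (∑ k ∈ Finset.range ⌊t / η⌋₊, ρ k) + η * C := by
  have hfloor := natFloor_div_mul_le hη ht
  have hlt := (div_lt_iff₀ hη).1 (Nat.lt_floor_add_one (t / η))
  have htail : |(t - ⌊t / η⌋₊ * η) * g ⌊t / η⌋₊| ≤ η * C := by
    rw [abs_mul, abs_of_nonneg (sub_nonneg.2 hfloor)]
    exact mul_le_mul (by linarith) (hg _ hfloor) (abs_nonneg _) hη.le
  rw [integral_comp_natFloor_div hη g ht, ← Finset.sum_range_sub, ← sub_sub,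
    ← Finset.sum_sub_distrib]
  exact (abs_sub _ _).trans (add_le_add ((Finset.abs_sum_le_sum_abs _ _).trans
    (Finset.sum_le_sum fun k _ => hy k)) htail)

end StepFunctions

namespace IsEulerApprox

variable {Λ t M : ℝ} {a : Ed d → Ed d →L[ℝ] Ed d} {V W φ : Ed d → ℝ}
  {b : Ed d → Measure (Ed d) → Ed d} {h : ℕ → ℝ} {μ : ℕ → ℕ → Measure (Ed d)} {r : ℕ → ℕ → ℝ}

lemma comp_strictMono (hμ : IsEulerApprox a V b h μ r) {ψ : ℕ → ℕ} (hψ : StrictMono ψ) :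
    IsEulerApprox a V b (h ∘ ψ) (μ ∘ ψ) (r ∘ ψ) where
  pos j := hμ.pos (ψ j)
  tendsto_mesh := hμ.tendsto_mesh.comp hψ.tendsto_atTop
  memPV j := hμ.memPV (ψ j)
  moment T := (hμ.moment T).imp fun _ hM => ⟨hM.1, hψ.tendsto_atTop.eventually hM.2⟩
  drift ε hε := hψ.tendsto_atTop.eventually (hμ.drift ε hε)
  nonneg j := hμ.nonneg (ψ j)
  defect j := hμ.defect (ψ j)
  small_defect T δ hδ := hψ.tendsto_atTop.eventually (hμ.small_defect T δ hδ)

lemma eventually_abs_integral_succ_sub_le (hμ : IsEulerApprox a V b h μ r)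
    (ha : ∀ x, IsElliptic Λ (a x)) (hac : Continuous a) (hb : ∀ σ, Measurable fun x => b x σ)
    (hV : Continuous V) (hV0 : ∀ x, 0 < V x) (hGrow : HasLocalGrowth V b) (hφ : ContDiff ℝ 2 φ)
    (hφc : HasCompactSupport φ) {C ε : ℝ} (hC : ∀ x, |φ x| ≤ C) (hε : 0 < ε) :
    ∀ᶠ j in atTop, ∀ k, |(∫ x, φ x ∂(μ j (k + 1))) - (∫ x, φ x ∂(μ j k)) -
      h j * meanGenerator a b φ (μ j k)| ≤ 2 * C * r j k + ε * h j := by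
  obtain ⟨κ, hκ, hexp⟩ := exists_abs_integral_gauss_sub_generator_le hφ (hφc.fderiv (𝕜 := ℝ))
    (ha 0).pos hε
  filter_upwards [hμ.drift κ hκ, hμ.tendsto_mesh.eventually_le_const hκ] with j hdrift hmesh k
  have := (hμ.memPV j k).1
  have hφm : Measurable φ := hφ.continuous.measurable
  have hφi : Integrable φ (μ j k) :=
    .of_bound hφm.aestronglyMeasurable C (Eventually.of_forall hC)
  have hgen := hGrow.integrable_generator (σ := μ j k) hac hb hV hV0 hφ hφc (hμ.memPV j k)
  have hEuler := integrable_eulerOp (h := h j) (μ := μ j k) ha hac (hb (μ j k)) hφm hC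
  have hTaylor : |(∫ x, eulerOp a (h j) (fun y => b y (μ j k)) φ x ∂(μ j k)) -
      (∫ x, φ x ∂(μ j k)) - h j * meanGenerator a b φ (μ j k)| ≤ ε * h j := by
    rw [← integral_sub hEuler hφi, meanGenerator, ← integral_const_mul,
      ← integral_sub (by exact hEuler.sub hφi) (hgen.const_mul _), ← Real.norm_eq_abs]
    refine (norm_integral_le_of_norm_le_const ?_).trans_eq
      (by rw [probReal_univ, mul_one] : ε * h j * (μ j k).real univ = ε * h j)
    filter_upwards [hdrift k] with x hx
    exact hexp (h j) (hμ.pos j) hmesh (a x) (ha x) x (b x (μ j k)) hx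
  have hdefect := hμ.defect j k φ hφm C hC
  rw [abs_le] at hdefect hTaylor ⊢
  constructor <;> linarith

lemma eventually_abs_weakEquation_le (hμ : IsEulerApprox a V b h μ r)
    (ha : ∀ x, IsElliptic Λ (a x)) (hac : Continuous a) (hb : ∀ σ, Measurable fun x => b x σ)
    (hV : Continuous V) (hV0 : ∀ x, 0 < V x) (hGrow : HasLocalGrowth V b) (hφ : ContDiff ℝ 2 φ)
    (hφc : HasCompactSupport φ) (ht : 0 ≤ t) {δ : ℝ} (hδ : 0 < δ) :
    ∀ᶠ j in atTop, |(∫ x, φ x ∂(μ j ⌊t / h j⌋₊)) - (∫ x, φ x ∂(μ j 0)) -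
      ∫ s in (0 : ℝ)..t, meanGenerator a b φ (μ j ⌊s / h j⌋₊)| ≤ δ := by
  obtain ⟨M, hM0, hM⟩ := hμ.moment t
  obtain ⟨C, hC0, hC⟩ := hGrow.exists_abs_meanGenerator_le hac hV hV0 hφ hφc hM0
  obtain ⟨D, hD⟩ := hφ.continuous.bounded_above_of_compact_support hφc
  have hD0 : 0 ≤ D := (norm_nonneg _).trans (hD 0)
  filter_upwards [hM, hμ.eventually_abs_integral_succ_sub_le ha hac hb hV hV0 hGrow hφ hφc hD
      (show 0 < δ / 3 / (t + 1) by positivity),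
    hμ.small_defect t _ (show 0 < δ / 3 / (2 * D + 1) by positivity),
    hμ.tendsto_mesh.eventually_le_const (show 0 < δ / 3 / C by positivity)]
    with j hmoment hstep hdefect hmesh
  have hfloor := natFloor_div_mul_le (hμ.pos j) ht
  have hr : 0 ≤ ∑ k ∈ Finset.range ⌊t / h j⌋₊, r j k := Finset.sum_nonneg fun k _ => hμ.nonneg j k
  have hsum : 2 * D * (∑ k ∈ Finset.range ⌊t / h j⌋₊, r j k) ≤ δ / 3 :=
    (mul_le_mul_of_nonneg_right (by linarith) hr).trans
      ((le_div_iff₀' (by positivity)).1 (hdefect _ hfloor))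
  have htaylor : δ / 3 / (t + 1) * (⌊t / h j⌋₊ * h j) ≤ δ / 3 := by
    rw [div_mul_eq_mul_div, div_le_iff₀ (by positivity)]
    exact mul_le_mul_of_nonneg_left (by linarith) (by positivity)
  calc _ ≤ (∑ k ∈ Finset.range ⌊t / h j⌋₊, (2 * D * r j k + δ / 3 / (t + 1) * h j)) + h j * C :=
        abs_sub_sub_integral_comp_natFloor_div_le (y := fun k => ∫ x, φ x ∂(μ j k))
          (g := fun k => meanGenerator a b φ (μ j k)) (hμ.pos j) ht hstep
          fun k hk => hC _ (hμ.memPV j k) (hmoment k hk)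
    _ = 2 * D * (∑ k ∈ Finset.range ⌊t / h j⌋₊, r j k) +
          δ / 3 / (t + 1) * (⌊t / h j⌋₊ * h j) + h j * C := by
        rw [Finset.sum_add_distrib, ← Finset.mul_sum, Finset.sum_const, Finset.card_range,
          nsmul_eq_mul]
        ring
    _ ≤ δ := by linarith [(le_div_iff₀ hC0).1 hmesh]

variable {ρ : ℝ → Measure (Ed d)}

lemma exists_moment_limit_le [∀ t, IsProbabilityMeasure (ρ t)] (hμ : IsEulerApprox a V b h μ r)
    (hV : Measurable V) (hV0 : ∀ x, 0 ≤ V x)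
    (hρ : ∀ t, 0 < t → TendstoTV (fun j => μ j ⌊t / h j⌋₊) atTop (ρ t)) (T : ℝ) :
    ∃ M : ℝ, 0 < M ∧
      (∀ᶠ j in atTop, ∀ t, 0 < t → t ≤ T → (∫ x, V x ∂(μ j ⌊t / h j⌋₊)) ≤ M) ∧
      ∀ t, 0 < t → t ≤ T → _root_.memPV V (ρ t) ∧ (∫ x, V x ∂(ρ t)) ≤ M := by
  obtain ⟨M, hM0, hM⟩ := hμ.moment T
  have hfloor : ∀ᶠ j in atTop, ∀ t, 0 < t → t ≤ T → (∫ x, V x ∂(μ j ⌊t / h j⌋₊)) ≤ M := by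
    filter_upwards [hM] with j hj t ht htT
    exact hj _ ((natFloor_div_mul_le (hμ.pos j) ht.le).trans htT)
  refine ⟨M, hM0, hfloor, fun t ht htT => ?_⟩
  have hmoment : ∀ᶠ j in atTop, Integrable V (μ j ⌊t / h j⌋₊) ∧
      (∫ x, V x ∂(μ j ⌊t / h j⌋₊)) ≤ M :=
    hfloor.mono fun j hj => ⟨(hμ.memPV j _).2, hj t ht htT⟩
  exact ⟨⟨inferInstance, (hρ t ht).integrable hV hV0 hmoment⟩,
    (hρ t ht).integral_le hV hV0 hmoment⟩

lemma tendsto_integral_meanGenerator [∀ t, IsProbabilityMeasure (ρ t)]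
    (hμ : IsEulerApprox a V b h μ r) (hac : Continuous a) (hb : ∀ σ, Measurable fun x => b x σ)
    (hV : Continuous V) (hV0 : ∀ x, 0 < V x) (hW0 : ∀ x, 0 ≤ W x) (hWV : IsSubordinate W V)
    (hGrow : HasLocalGrowth V b) (hLip : IsLocallyLipschitz V W b) (hφ : ContDiff ℝ 2 φ)
    (hφc : HasCompactSupport φ)
    (hρ : ∀ t, 0 < t → TendstoTV (fun j => μ j ⌊t / h j⌋₊) atTop (ρ t)) (ht : 0 ≤ t) :
    Tendsto (fun j => ∫ s in (0 : ℝ)..t, meanGenerator a b φ (μ j ⌊s / h j⌋₊)) atTop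
      (𝓝 (∫ s in (0 : ℝ)..t, meanGenerator a b φ (ρ s))) := by
  obtain ⟨M, hM0, hM, hρM⟩ := hμ.exists_moment_limit_le hV.measurable (fun x => (hV0 x).le) hρ t
  obtain ⟨C, -, hC⟩ := hGrow.exists_abs_meanGenerator_le hac hV hV0 hφ hφc hM0
  refine intervalIntegral.tendsto_integral_filter_of_dominated_convergence (fun _ => C)
    (Eventually.of_forall fun j => ?_) ?_ intervalIntegrable_const
    (Eventually.of_forall fun s hs => ?_)
  · have hstep : Measurable fun k : ℕ => meanGenerator a b φ (μ j k) := measurable_from_nat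
    exact (hstep.comp (Nat.measurable_floor.comp
      (measurable_id.div_const (h j)))).aestronglyMeasurable
  · filter_upwards [hM] with j hj
    refine Eventually.of_forall fun s hs => ?_
    rw [uIoc_of_le ht] at hs
    exact hC _ (hμ.memPV j _) (hj s hs.1 hs.2)
  · rw [uIoc_of_le ht] at hs
    obtain ⟨hρs, hρsM⟩ := hρM s hs.1 hs.2
    exact (hρ s hs.1).tendsto_meanGenerator hac hb hV hV0 hW0 hWV hGrow hLip hφ hφc hM0
      (hM.mono fun j hj => ⟨hμ.memPV j _, hj s hs.1 hs.2⟩) hρs hρsM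

theorem weakEquation_of_tendstoTV [∀ t, IsProbabilityMeasure (ρ t)]
    (hμ : IsEulerApprox a V b h μ r) (ha : ∀ x, IsElliptic Λ (a x)) (hac : Continuous a)
    (hb : ∀ σ, Measurable fun x => b x σ) (hV : Continuous V) (hV0 : ∀ x, 0 < V x)
    (hW0 : ∀ x, 0 ≤ W x) (hWV : IsSubordinate W V) (hGrow : HasLocalGrowth V b)
    (hLip : IsLocallyLipschitz V W b) (hφ : ContDiff ℝ 2 φ) (hφc : HasCompactSupport φ)
    {ν : Measure (Ed d)} (hν : TendstoTV (fun j => μ j 0) atTop ν)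
    (hρ : ∀ t, 0 < t → TendstoTV (fun j => μ j ⌊t / h j⌋₊) atTop (ρ t)) (ht : 0 < t) :
    (∫ x, φ x ∂(ρ t)) - (∫ x, φ x ∂ν) = ∫ s in (0 : ℝ)..t, meanGenerator a b φ (ρ s) := by
  obtain ⟨D, hD⟩ := hφ.continuous.bounded_above_of_compact_support hφc
  have hφm : Measurable φ := hφ.continuous.measurable
  have hlim := ((((hρ t ht).tendsto_integral hφm hD).sub (hν.tendsto_integral hφm hD)).sub
    (hμ.tendsto_integral_meanGenerator hac hb hV hV0 hW0 hWV hGrow hLip hφ hφc hρ ht.le)).abs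
  have hzero (δ : ℝ) (hδ : 0 < δ) : |(∫ x, φ x ∂(ρ t)) - (∫ x, φ x ∂ν) -
      ∫ s in (0 : ℝ)..t, meanGenerator a b φ (ρ s)| ≤ δ :=
    le_of_tendsto hlim (hμ.eventually_abs_weakEquation_le ha hac hb hV hV0 hGrow hφ hφc ht.le hδ)
  exact sub_eq_zero.1 (abs_nonpos_iff.1 (le_of_forall_pos_le_add fun δ hδ => by
    rw [zero_add]
    exact hzero δ hδ))

end IsEulerApprox

/-! ### Existence of solutions -/

section Existence

variable {a : Ed d → Ed d →L[ℝ] Ed d} {V W φ : Ed d → ℝ} {b : Ed d → Measure (Ed d) → Ed d}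
  {ν : Measure (Ed d)}

lemma weakEquation_update_zero {ρ : ℝ → Measure (Ed d)}
    (hρ : ∀ t, 0 < t → (∫ x, φ x ∂(ρ t)) - (∫ x, φ x ∂ν) =
      ∫ s in (0 : ℝ)..t, meanGenerator a b φ (ρ s)) {t : ℝ} (ht : 0 ≤ t) :
    (∫ x, φ x ∂(Function.update ρ 0 ν t)) - (∫ x, φ x ∂ν) =
      ∫ s in (0 : ℝ)..t, meanGenerator a b φ (Function.update ρ 0 ν s) := by
  rcases ht.eq_or_lt with rfl | ht
  · rw [Function.update_self, sub_self, intervalIntegral.integral_same]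
  · rw [Function.update_of_ne ht.ne', hρ t ht]
    refine intervalIntegral.integral_congr_Ioo_of_le ht.le fun s hs => ?_
    rw [Function.update_of_ne hs.1.ne']

theorem exists_weak_solution {Λ : ℝ} {K : ℝ≥0} {N : ℝ → ℝ} (ha : ∀ x, IsElliptic Λ (a x))
    (haL : LipschitzWith K a) (hV : ContDiff ℝ 2 V) (hV1 : ∀ x, 1 ≤ V x)
    (hVinf : Tendsto V (cocompact (Ed d)) atTop) (hb : ∀ σ, Measurable fun x => b x σ)
    (hLyap : IsLyapunov a V b N) (hN : IsOsgood N) (hGrow : HasLocalGrowth V b)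
    (hW0 : ∀ x, 0 ≤ W x) (hWV : IsSubordinate W V) (hLip : IsLocallyLipschitz V W b)
    (hν : memPV V ν) :
    ∃ ρ : ℝ → Measure (Ed d), ρ 0 = ν ∧ (∀ t, 0 ≤ t → memPV V (ρ t)) ∧
      (∀ T : ℝ, ∃ M : ℝ, ∀ t ∈ Icc 0 T, (∫ x, V x ∂(ρ t)) ≤ M) ∧
      ∀ φ : Ed d → ℝ, ContDiff ℝ 2 φ → HasCompactSupport φ → ∀ t : ℝ, 0 ≤ t →
        (∫ x, φ x ∂(ρ t)) - (∫ x, φ x ∂ν) = ∫ s in (0 : ℝ)..t, meanGenerator a b φ (ρ s) := by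
  have hVpos (x : Ed d) : 0 < V x := zero_lt_one.trans_le (hV1 x)
  have hV0 (x : Ed d) : 0 ≤ V x := (hVpos x).le
  have hac := haL.continuous
  obtain ⟨h, μ, r, hμ, hμν⟩ := exists_isEulerApprox ha hac hV hV1 hVinf hb hLyap hN hGrow hν
  obtain ⟨ψ, ρ, hψ, hρ⟩ := (hμ.isApproxFlow ha haL hb hGrow).exists_subseq_tendstoTV ha hac hV0
    hVinf
  have hμψ := hμ.comp_strictMono hψ
  have hμνψ : TendstoTV (fun i => (μ ∘ ψ) i 0) atTop ν :=
    fun δ hδ => hψ.tendsto_atTop.eventually (hμν δ hδ)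
  have hlimit := hμψ.exists_moment_limit_le hV.continuous.measurable hV0
    (ρ := fun t => (ρ t : Measure (Ed d))) hρ
  refine ⟨Function.update (fun t => (ρ t : Measure (Ed d))) 0 ν, Function.update_self .., ?_, ?_,
    fun φ hφ hφc t ht => weakEquation_update_zero (fun s hs => hμψ.weakEquation_of_tendstoTV ha hac
      hb hV.continuous hVpos hW0 hWV hGrow hLip hφ hφc hμνψ hρ hs) ht⟩
  · intro t ht
    rcases ht.eq_or_lt with rfl | ht
    · rwa [Function.update_self]
    · obtain ⟨M, -, -, hM⟩ := hlimit t
      rw [Function.update_of_ne ht.ne']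
      exact (hM t ht le_rfl).1
  · intro T
    obtain ⟨M, -, -, hM⟩ := hlimit T
    refine ⟨max M (∫ x, V x ∂ν), fun t ht => ?_⟩
    rcases ht.1.eq_or_lt with rfl | ht0
    · rw [Function.update_self]
      exact le_max_right _ _
    · rw [Function.update_of_ne ht0.ne']
      exact (hM t ht0 ht.2).2.trans (le_max_left _ _)

end Existence

/-! ### Coefficient matrices as operators -/

section Matrices

lemma sum_bilin_orthonormalBasis_eq {E ι κ : Type*} [NormedAddCommGroup E] [InnerProductSpace ℝ E]
    [CompleteSpace E] [Fintype ι] [Fintype κ] (q : E →L[ℝ] E →L[ℝ] ℝ) (B : E →L[ℝ] E)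
    (e : OrthonormalBasis ι ℝ E) (f : OrthonormalBasis κ ℝ E) :
    ∑ i, q (B (e i)) (e i) = ∑ i, q (B (f i)) (f i) := by
  let T : E →ₗ[ℝ] E :=
    ((InnerProductSpace.toDual ℝ E).symm.toContinuousLinearEquiv.toLinearMap ∘ₗ (q ∘L B))
  have hT (x : E) : ⟪x, T x⟫ = q (B x) x := by
    rw [real_inner_comm]
    exact InnerProductSpace.toDual_symm_apply
  simpa only [hT] using (T.trace_eq_sum_inner e).symm.trans (T.trace_eq_sum_inner f)

lemma inner_toEuclideanCLM_left (B : Matrix (Fin d) (Fin d) ℝ) (u v : Ed d) :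
    ⟪Matrix.toEuclideanCLM (𝕜 := ℝ) B u, v⟫ = ∑ i, ∑ j, B i j * v i * u j := by
  rw [real_inner_comm, Matrix.inner_toEuclideanCLM]
  simp only [dotProduct, Matrix.mulVec, Finset.mul_sum]
  exact Finset.sum_congr rfl fun i _ => Finset.sum_congr rfl fun j _ => by ring

lemma isElliptic_toEuclideanCLM {B : Matrix (Fin d) (Fin d) ℝ} {Λ : ℝ} (hΛ : 0 < Λ)
    (hB : B.IsSymm) (hlow : ∀ v : Ed d, Λ⁻¹ * ‖v‖ ^ 2 ≤ ∑ i, ∑ j, B i j * v i * v j)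
    (hup : ∀ v : Ed d, ∑ i, ∑ j, B i j * v i * v j ≤ Λ * ‖v‖ ^ 2) :
    IsElliptic Λ (Matrix.toEuclideanCLM (𝕜 := ℝ) B) where
  pos := hΛ
  symm u v := by
    rw [real_inner_comm (Matrix.toEuclideanCLM (𝕜 := ℝ) B v) u, inner_toEuclideanCLM_left,
      inner_toEuclideanCLM_left, Finset.sum_comm]
    refine Finset.sum_congr rfl fun i _ => Finset.sum_congr rfl fun j _ => ?_
    rw [hB.apply i j]
    ring
  lower v := by rw [inner_toEuclideanCLM_left]; exact hlow v
  upper v := by rw [inner_toEuclideanCLM_left]; exact hup v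

open scoped Matrix.Norms.Elementwise in
lemma exists_lipschitzWith_toEuclideanCLM {A : Ed d → Matrix (Fin d) (Fin d) ℝ} {K : ℝ}
    (hA : ∀ x y i j, |A x i j - A y i j| ≤ K * ‖x - y‖) :
    ∃ L : ℝ≥0, LipschitzWith L fun x => Matrix.toEuclideanCLM (𝕜 := ℝ) (A x) := by
  have hentries : LipschitzWith K.toNNReal A := LipschitzWith.of_dist_le_mul fun x y => by
    rw [dist_eq_norm, dist_eq_norm, Matrix.norm_le_iff (by positivity)]
    exact fun i j => (hA x y i j).trans
      (mul_le_mul_of_nonneg_right (le_coe_toNNReal K) (norm_nonneg _))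
  exact ⟨_, (LinearMap.toContinuousLinearMap
    (Matrix.toEuclideanCLM (n := Fin d) (𝕜 := ℝ)).toAlgEquiv.toLinearMap).lipschitz.comp hentries⟩

lemma lop_eq_generator (A : Ed d → Matrix (Fin d) (Fin d) ℝ) (β : Ed d → Ed d) (φ : Ed d → ℝ)
    (x : Ed d) :
    Lop A β φ x = generator (Matrix.toEuclideanCLM (𝕜 := ℝ) (A x)) (β x) φ x := by
  have hcolumn (i : Fin d) : Matrix.toEuclideanCLM (𝕜 := ℝ) (A x) (EuclideanSpace.single i 1) =
      ∑ j, A x j i • EuclideanSpace.single j 1 := by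
    ext k
    simp [Pi.single_apply]
  rw [Lop, generator, add_comm, inner_gradient_right, conj_trivial, Finset.sum_comm,
    sum_bilin_orthonormalBasis_eq _ _ _ (EuclideanSpace.basisFun (Fin d) ℝ)]
  simp only [EuclideanSpace.basisFun_apply, hcolumn, map_sum, map_smul, sum_apply, smul_apply,
    smul_eq_mul, hess2, iteratedFDeriv_two_apply, Matrix.cons_val_zero, Matrix.cons_val_one]

end Matrices

section PowerWeights

variable {V W : Ed d → ℝ} {b : Ed d → Measure (Ed d) → Ed d} {N : ℝ → ℝ} {p : ℝ}

lemma hasLocalGrowth_of_rpow (hV1 : ∀ x, 1 ≤ V x) (hp : p ≤ 1)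
    (hN : ∀ α ∈ Ici (0 : ℝ), 0 < N α)
    (hb : ∀ α : ℝ, 0 < α → ∀ μ : Measure (Ed d), memPV V μ → (∫ x, V x ∂μ) ≤ α →
      ∀ x, ‖b x μ‖ ≤ N α * V x ^ p) :
    HasLocalGrowth V b := fun α hα => ⟨N α, hN α hα.le, fun μ hμ hμα x =>
  (hb α hα μ hμ hμα x).trans
    (mul_le_mul_of_nonneg_left (rpow_le_self_of_one_le (hV1 x) hp) (hN α hα.le).le)⟩

lemma wDist_nonneg (hW : ∀ x, 0 ≤ W x) (μ σ : Measure (Ed d)) : 0 ≤ wDist W μ σ :=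
  Real.iSup_nonneg' ⟨⟨0, measurable_zero, by simpa using hW⟩, by simp⟩

lemma isLocallyLipschitz_of_rpow (hV1 : ∀ x, 1 ≤ V x) (hW : ∀ x, 0 ≤ W x) (hp : p ≤ 1)
    (hN : ∀ α ∈ Ici (0 : ℝ), 0 < N α)
    (hb : ∀ α : ℝ, 0 < α → ∀ μ σ : Measure (Ed d), memPV V μ → memPV V σ →
      (∫ x, V x ∂μ) ≤ α → (∫ x, V x ∂σ) ≤ α → ∀ x, ‖b x μ - b x σ‖ ≤ N α * V x ^ p * wDist W μ σ) :
    IsLocallyLipschitz V W b := fun α hα => ⟨N α, hN α hα.le, fun μ σ hμ hσ hμα hσα x =>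
  (hb α hα μ σ hμ hσ hμα hσα x).trans (mul_le_mul_of_nonneg_right (mul_le_mul_of_nonneg_left
    (rpow_le_self_of_one_le (hV1 x) hp) (hN α hα.le).le) (wDist_nonneg hW μ σ))⟩

end PowerWeights

theorem stmt11_cauchy_existence_general {A : Ed d → Matrix (Fin d) (Fin d) ℝ} {K₁ K₂ : ℝ}
    (hK₁ : 0 < K₁) (hAsymm : ∀ x, (A x).IsSymm)
    (hAlow : ∀ x (v : Ed d), K₁⁻¹ * ‖v‖ ^ 2 ≤ ∑ i, ∑ j, A x i j * v i * v j)
    (hAup : ∀ x (v : Ed d), ∑ i, ∑ j, A x i j * v i * v j ≤ K₁ * ‖v‖ ^ 2)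
    (hALip : ∀ x y i j, |A x i j - A y i j| ≤ K₂ * ‖x - y‖)
    {V : Ed d → ℝ} (hV : ContDiff ℝ 2 V) (hV1 : ∀ x, 1 ≤ V x)
    (hVinf : Tendsto V (cocompact (Ed d)) atTop)
    {W : Ed d → ℝ} (hW : ∀ x, 0 ≤ W x) (hWV : IsSubordinate W V)
    {b : Ed d → Measure (Ed d) → Ed d} (hb : ∀ μ, Measurable fun x => b x μ)
    {N : ℝ → ℝ} (hN : IsOsgood N)
    (hLyap : ∀ α : ℝ, 0 < α → ∀ μ : Measure (Ed d), memPV V μ → (∫ x, V x ∂μ) ≤ α →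
      ∀ x, Lop A (fun y => b y μ) V x ≤ N α)
    (hGrow : HasLocalGrowth V b) (hLip : IsLocallyLipschitz V W b)
    {ν : Measure (Ed d)} (hν : memPV V ν) :
    ∃ ρ : ℝ → Measure (Ed d), (∀ t, 0 ≤ t → memPV V (ρ t)) ∧ IsCauchySol A b ν ρ ∧
      ∀ T : ℝ, 0 < T → ∃ M : ℝ, ∀ t ∈ Icc 0 T, (∫ x, V x ∂(ρ t)) ≤ M := by
  obtain ⟨K, hK⟩ := exists_lipschitzWith_toEuclideanCLM hALip
  simp only [lop_eq_generator] at hLyap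
  obtain ⟨ρ, hρ0, hρV, hmoment, hweak⟩ := exists_weak_solution
    (fun x => isElliptic_toEuclideanCLM hK₁ (hAsymm x) (hAlow x) (hAup x)) hK hV hV1 hVinf hb
    hLyap hN hGrow hW hWV hLip hν
  refine ⟨ρ, hρV, ⟨hρ0, fun φ hφ t ht => ?_⟩, fun T _ => hmoment T⟩
  simp only [lop_eq_generator]
  exact hweak φ (contDiff_infty.1 hφ.1 2) hφ.2 t ht

/-- **Proposition 7** (solvability of the Cauchy problem under an Osgood-type
condition `∫₀^∞ dα/N₁(α) = ∞`). -/
theorem stmt11_cauchy_existence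
    (A : Ed d → Matrix (Fin d) (Fin d) ℝ) (K₁ K₂ : ℝ)
    (hK₁ : 0 < K₁) (hK₂ : 0 < K₂)
    (hAsymm : ∀ x, (A x).IsSymm)
    (hAlow : ∀ x (v : Ed d), K₁⁻¹ * ‖v‖ ^ 2 ≤ ∑ i, ∑ j, A x i j * v i * v j)
    (hAup : ∀ x (v : Ed d), ∑ i, ∑ j, A x i j * v i * v j ≤ K₁ * ‖v‖ ^ 2)
    (hALip : ∀ x y i j, |A x i j - A y i j| ≤ K₂ * ‖x - y‖)
    (V : Ed d → ℝ) (hV : ContDiff ℝ 2 V) (hV1 : ∀ x, 1 ≤ V x)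
    (hVinf : Tendsto V (cocompact (Ed d)) atTop)
    (γ : ℝ) (hγ : γ ∈ Set.Ioc (0:ℝ) (1/2))
    (W : Ed d → ℝ) (hW : W = fun x => V x ^ γ)
    (b : Ed d → Measure (Ed d) → Ed d)
    (hbBorel : ∀ μ, Measurable (fun x => b x μ))
    (N₁ N₂ N₃ : ℝ → ℝ)
    (hN₁cont : ContinuousOn N₁ (Set.Ici 0))
    (hN₂cont : ContinuousOn N₂ (Set.Ici 0))
    (hN₃cont : ContinuousOn N₃ (Set.Ici 0))
    (hN₁pos : ∀ α ∈ Set.Ici (0:ℝ), 0 < N₁ α)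
    (hN₂pos : ∀ α ∈ Set.Ici (0:ℝ), 0 < N₂ α)
    (hN₃pos : ∀ α ∈ Set.Ici (0:ℝ), 0 < N₃ α)
    (hLyap : ∀ α : ℝ, 0 < α → ∀ μ : Measure (Ed d),
      memPV V μ → (∫ x, V x ∂μ) ≤ α →
      ∀ x, Lop A (fun y => b y μ) V x ≤ N₁ α)
    (hGrow : ∀ α : ℝ, 0 < α → ∀ μ : Measure (Ed d),
      memPV V μ → (∫ x, V x ∂μ) ≤ α →
      ∀ x, ‖b x μ‖ ≤ N₂ α * V x ^ ((1:ℝ)/2 - γ))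
    (hLip : ∀ α : ℝ, 0 < α → ∀ μ σ : Measure (Ed d),
      memPV V μ → memPV V σ → (∫ x, V x ∂μ) ≤ α → (∫ x, V x ∂σ) ≤ α →
      ∀ x, ‖b x μ - b x σ‖ ≤ N₃ α * V x ^ ((1:ℝ)/2) * wDist W μ σ)
    (hOsgood : ∫⁻ α in Set.Ioi (0:ℝ), ENNReal.ofReal (1 / N₁ α) = ⊤) :
    ∀ ν : Measure (Ed d), memPV V ν →
      ∃ μt : ℝ → Measure (Ed d),
        (∀ t, 0 ≤ t → memPV V (μt t)) ∧
        IsCauchySol A b ν μt ∧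
        (∀ T : ℝ, 0 < T → ∃ M : ℝ, ∀ t ∈ Set.Icc (0:ℝ) T, (∫ x, V x ∂(μt t)) ≤ M) := by
  have hV0 (x : Ed d) : 0 ≤ V x := zero_le_one.trans (hV1 x)
  have hW0 (x : Ed d) : 0 ≤ W x := hW ▸ rpow_nonneg (hV0 x) γ
  exact fun ν hν => stmt11_cauchy_existence_general hK₁ hAsymm hAlow hAup hALip hV hV1 hVinf hW0
    (hW ▸ isSubordinate_rpow hV0 hγ.1.le (hγ.2.trans_lt one_half_lt_one)) hbBorel
    ⟨hN₁cont, hN₁pos, hOsgood⟩ hLyap (hasLocalGrowth_of_rpow hV1 (by linarith [hγ.1]) hN₂pos hGrow)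
    (isLocallyLipschitz_of_rpow hV1 hW0 one_half_lt_one.le hN₃pos hLip) hν
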